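/- Let q be a prime number. Every continuous map f : Δ_1^{3(q-1)} → ℝ² admits at least (1/((q−1)!)²) · (q/2)^{2(q−1)} winding partitions (with d = 2); i.e. the cardinality of the set of winding partitions of f is at least the real number (1/((q−1)!)²) · (q/2)^{2(q−1)}. -/

import Mathlib

open scoped BigOperators

noncomputable section

/-- Euclidean space `ℝ^d`. -/
abbrev Euc (d : ℕ) : Type := EuclideanSpace ℝ (Fin d)

/-- The standard `N`-simplex `Δ^N ⊆ ℝ^{N+1}`. -/
def stdSimp (N : ℕ) : Set (Fin (N+1) → ℝ) :=
  {x | (∀ i, 0 ≤ x i) ∧ ∑ i, x i = 1}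

/-- The face `σ_S` of `Δ^N` spanned by the vertices in `S`. -/
def simpFace {N : ℕ} (S : Finset (Fin (N+1))) : Set (Fin (N+1) → ℝ) :=
  {x ∈ stdSimp N | ∀ i ∉ S, x i = 0}

/-- The `k`-skeleton `Δ_k^N` of the standard `N`-simplex. -/
def skel (N k : ℕ) : Set (Fin (N+1) → ℝ) :=
  {x ∈ stdSimp N | {i | x i ≠ 0}.ncard ≤ k + 1}

/-- A Tverberg partition for (the relevant restriction of) `f`: a set of `q`
pairwise disjoint nonempty vertex subsets whose faces have images with a common point. -/
def IsTverbergPartition (q : ℕ) {N d : ℕ}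
    (f : (Fin (N+1) → ℝ) → Euc d) (P : Finset (Finset (Fin (N+1)))) : Prop :=
  P.card = q ∧ (∀ S ∈ P, S.Nonempty) ∧
  (∀ S ∈ P, ∀ T ∈ P, S ≠ T → Disjoint S T) ∧
  (⋂ S ∈ P, f '' simpFace S).Nonempty

/-- The boundary `∂σ_S` of the face `σ_S`. -/
def simpFaceBoundary {N : ℕ} (S : Finset (Fin (N+1))) : Set (Fin (N+1) → ℝ) :=
  {x ∈ simpFace S | ∃ i ∈ S, x i = 0}

/-- `p ∈ W_{≠0}(f|_{∂σ_S})`: either `p` is in the image of the boundary, or the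
corestriction of `f|_{∂σ_S}` to `ℝ^d \ {p}` is not nullhomotopic (there is no
continuous map agreeing with `f` on `∂σ_S` that is homotopic to a constant). -/
def InWne (d : ℕ) {N : ℕ} (f : (Fin (N+1) → ℝ) → Euc d)
    (S : Finset (Fin (N+1))) (p : Euc d) : Prop :=
  p ∈ f '' simpFaceBoundary S ∨
  ¬ ∃ (g : C(↥(simpFaceBoundary S), ↥({p}ᶜ : Set (Euc d))))
      (y : ↥({p}ᶜ : Set (Euc d))),
      (∀ x : ↥(simpFaceBoundary S), (g x : Euc d) = f ↑x) ∧
      g.Homotopic (ContinuousMap.const _ y)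

/-- A winding partition (in dimension `d`) for `f` defined on the `(d-1)`-skeleton:
`q` pairwise disjoint nonempty vertex subsets, each of size at most `d+1`, together
with a winding point `p`. -/
def IsWindingPartition (d q : ℕ) {N : ℕ}
    (f : (Fin (N+1) → ℝ) → Euc d) (P : Finset (Finset (Fin (N+1)))) : Prop :=
  P.card = q ∧ (∀ S ∈ P, S.Nonempty) ∧ (∀ S ∈ P, S.card ≤ d + 1) ∧
  (∀ S ∈ P, ∀ T ∈ P, S ≠ T → Disjoint S T) ∧
  ∃ p : Euc d, ∀ S ∈ P,
    (S.card ≤ d → p ∈ f '' simpFace S) ∧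
    (S.card = d + 1 → InWne d f S p)

/-! ### Finite differences on the integer grid -/

section Grid

variable {A : Type*} [AddCommGroup A]

/-- Backward difference in the first coordinate. -/
def gridDX (F : ℤ × ℤ → A) (p : ℤ × ℤ) : A := F p - F (p.1 - 1, p.2)

/-- Backward difference in the second coordinate. -/
def gridDY (F : ℤ × ℤ → A) (p : ℤ × ℤ) : A := F p - F (p.1, p.2 - 1)

/-- `F` vanishes outside the box `[-R, R) × [-R, R)`. -/
def BoxSupp (R : ℤ) (F : ℤ × ℤ → A) : Prop :=
  ∀ p, (p.1 < -R ∨ R ≤ p.1 ∨ p.2 < -R ∨ R ≤ p.2) → F p = 0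

/-- Summation along rows, a right inverse of `gridDX` on functions supported in the box. -/
def gridPre (R : ℤ) (F : ℤ × ℤ → A) (p : ℤ × ℤ) : A :=
  ∑ i ∈ Finset.Ico (-R) (p.1 + 1), F (i, p.2)

/-- The sum of a function over the closed box. -/
def gridSum (R : ℤ) (F : ℤ × ℤ → A) : A :=
  ∑ y ∈ Finset.Ico (-R) (R + 1), ∑ x ∈ Finset.Ico (-R) (R + 1), F (x, y)

lemma gridDX_add (F G : ℤ × ℤ → A) : gridDX (F + G) = gridDX F + gridDX G := by
  ext p; simp [gridDX]; abel

lemma gridDX_sub (F G : ℤ × ℤ → A) : gridDX (F - G) = gridDX F - gridDX G := by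
  ext p; simp [gridDX]; abel

lemma gridDY_add (F G : ℤ × ℤ → A) : gridDY (F + G) = gridDY F + gridDY G := by
  ext p; simp [gridDY]; abel

lemma gridDY_sub (F G : ℤ × ℤ → A) : gridDY (F - G) = gridDY F - gridDY G := by
  ext p; simp [gridDY]; abel

lemma sum_Ico_sub_pred (g : ℤ → A) {a b : ℤ} (hab : a ≤ b) :
    ∑ i ∈ Finset.Ico a b, (g i - g (i - 1)) = g (b - 1) - g (a - 1) := by
  induction b, hab using Int.leInduction with
  | base => simp
  | succ n hn ih =>
    rw [← Order.succ_eq_add_one, ← Finset.insert_Ico_right_eq_Ico_succ hn,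
      Finset.sum_insert (by simp), ih]
    simp

lemma sum_Ico_sub_pred_of_zero (g : ℤ → A) {a b : ℤ} (h : ∀ i < a, g i = 0) :
    ∑ i ∈ Finset.Ico a b, (g i - g (i - 1)) = g (b - 1) := by
  rcases le_or_gt a b with hab | hab
  · rw [sum_Ico_sub_pred g hab, h (a - 1) (by omega), sub_zero]
  · rw [Finset.Ico_eq_empty (by omega), Finset.sum_empty, h _ (by omega)]

lemma gridPre_gridDX {R : ℤ} {F : ℤ × ℤ → A} (hF : BoxSupp R F) :
    gridPre R (gridDX F) = F := by
  ext ⟨x, y⟩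
  simp only [gridPre, gridDX]
  rw [sum_Ico_sub_pred_of_zero (fun i => F (i, y)) (fun i hi => hF _ (by simp; omega))]
  simp

lemma gridDX_gridPre {R : ℤ} {F : ℤ × ℤ → A} (hF : BoxSupp R F) :
    gridDX (gridPre R F) = F := by
  ext ⟨x, y⟩
  simp only [gridPre, gridDX]
  rcases le_or_gt (-R) x with h | h
  · rw [← Order.succ_eq_add_one x, ← Finset.insert_Ico_right_eq_Ico_succ h,
      Finset.sum_insert (by simp)]
    simp
  · rw [Finset.Ico_eq_empty (by omega), Finset.Ico_eq_empty (by omega), hF _ (by simp; omega)]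
    simp

lemma gridDY_gridPre_comm (R : ℤ) (F : ℤ × ℤ → A) :
    gridDY (gridPre R F) = gridPre R (gridDY F) := by
  ext p; simp [gridPre, gridDY]

lemma gridDY_gridPre {R : ℤ} {F G : ℤ × ℤ → A} (hG : BoxSupp R G)
    (h : gridDY F = gridDX G) : gridDY (gridPre R F) = G := by
  rw [gridDY_gridPre_comm, h, gridPre_gridDX hG]

lemma boxSupp_gridPre {R : ℤ} {F G : ℤ × ℤ → A} (hF : BoxSupp R F) (hG : BoxSupp R G)
    (h : gridDY F = gridDX G) : BoxSupp R (gridPre R F) := by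
  have hrow : ∀ x y : ℤ, (y < -R ∨ R ≤ y) → gridPre R F (x, y) = 0 := fun x y hy => by
    simp only [gridPre]
    exact Finset.sum_eq_zero fun i _ => hF _ (by simp; omega)
  rintro ⟨x, y⟩ hp
  simp only at hp
  rcases hp with hp | hp | hp
  · simp only [gridPre]; rw [Finset.Ico_eq_empty (by omega), Finset.sum_empty]
  · have step : ∀ y, gridPre R F (x, y) = gridPre R F (x, y - 1) := fun y => by
      have := congrFun (gridDY_gridPre hG h) (x, y)
      rw [hG _ (by simp; omega)] at this
      exact sub_eq_zero.mp this
    have hall : ∀ k : ℕ, ∀ y, gridPre R F (x, y) = gridPre R F (x, y - k) := by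
      intro k
      induction k with
      | zero => simp
      | succ k ih =>
        intro y; rw [ih y, step (y - k)]; congr 2; push_cast; ring
    rw [hall (y + R + 1).toNat y]
    exact hrow _ _ (by omega)
  · exact hrow _ _ hp

lemma eq_zero_of_gridDX_eq_zero {R : ℤ} {F : ℤ × ℤ → A} (hF : BoxSupp R F)
    (h : gridDX F = 0) : F = 0 := by
  rw [← gridPre_gridDX hF, h]; ext p; simp [gridPre]

lemma gridSum_gridDX {R : ℤ} {F : ℤ × ℤ → A} (hF : BoxSupp R F) :
    gridSum R (gridDX F) = 0 := by
  refine Finset.sum_eq_zero fun y _ => ?_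
  simp only [gridDX]
  rw [sum_Ico_sub_pred_of_zero (fun i => F (i, y)) (fun i hi => hF _ (by simp; omega))]
  exact hF _ (by simp)

lemma gridSum_gridDY {R : ℤ} {F : ℤ × ℤ → A} (hF : BoxSupp R F) :
    gridSum R (gridDY F) = 0 := by
  rw [gridSum, Finset.sum_comm]
  refine Finset.sum_eq_zero fun x _ => ?_
  simp only [gridDY]
  rw [sum_Ico_sub_pred_of_zero (fun i => F (x, i)) (fun i hi => hF _ (by simp; omega))]
  exact hF _ (by simp)

lemma gridSum_add (R : ℤ) (F G : ℤ × ℤ → A) :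
    gridSum R (F + G) = gridSum R F + gridSum R G := by
  simp [gridSum, Finset.sum_add_distrib]

lemma gridSum_sub (R : ℤ) (F G : ℤ × ℤ → A) :
    gridSum R (F - G) = gridSum R F - gridSum R G := by
  simp [gridSum]

lemma map_gridSum {B : Type*} [AddCommGroup B] (φ : A →+ B) (R : ℤ) (F : ℤ × ℤ → A) :
    φ (gridSum R F) = gridSum R (fun p => φ (F p)) := by
  simp [gridSum]

lemma BoxSupp.add {R : ℤ} {F G : ℤ × ℤ → A} (hF : BoxSupp R F) (hG : BoxSupp R G) :
    BoxSupp R (F + G) := fun p hp => by simp [hF p hp, hG p hp]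

lemma BoxSupp.sub {R : ℤ} {F G : ℤ × ℤ → A} (hF : BoxSupp R F) (hG : BoxSupp R G) :
    BoxSupp R (F - G) := fun p hp => by simp [hF p hp, hG p hp]

end Grid

/-! ### Parity in the exterior algebra -/

section Parity

open ExteriorAlgebra CliffordAlgebra

variable {k M : Type*} [CommRing k] [AddCommGroup M] [Module k M]

/-- The grading involution of the exterior algebra. -/
abbrev extInv (k M : Type*) [CommRing k] [AddCommGroup M] [Module k M] :
    ExteriorAlgebra k M →ₐ[k] ExteriorAlgebra k M :=
  CliffordAlgebra.involute (Q := (0 : QuadraticForm k M))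

/-- Odd elements anticommute, up to the grading involution, with everything. -/
def IsOddElt (a : ExteriorAlgebra k M) : Prop :=
  (∀ b, a * b = extInv k M b * a) ∧ extInv k M a = -a

/-- Even elements are central. -/
def IsEvenElt (a : ExteriorAlgebra k M) : Prop :=
  (∀ b, a * b = b * a) ∧ extInv k M a = a

lemma extInv_ι (m : M) : extInv k M (ExteriorAlgebra.ι k m) = -ExteriorAlgebra.ι k m :=
  CliffordAlgebra.involute_ι m

lemma isOddElt_ι (m : M) : IsOddElt (ExteriorAlgebra.ι k m) := by
  refine ⟨fun b => ?_, extInv_ι m⟩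
  induction b using ExteriorAlgebra.induction with
  | algebraMap r => rw [AlgHom.commutes, Algebra.commutes]
  | ι x => rw [extInv_ι, neg_mul, eq_neg_iff_add_eq_zero, ExteriorAlgebra.ι_add_mul_swap]
  | mul a b ha hb => rw [map_mul, ← mul_assoc, ha, mul_assoc, hb, mul_assoc]
  | add a b ha hb => rw [map_add, mul_add, add_mul, ha, hb]

namespace IsOddElt
variable {a b : ExteriorAlgebra k M}

lemma add (ha : IsOddElt a) (hb : IsOddElt b) : IsOddElt (a + b) :=
  ⟨fun c => by rw [add_mul, mul_add, ha.1, hb.1], by rw [map_add, ha.2, hb.2, neg_add]⟩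

lemma neg (ha : IsOddElt a) : IsOddElt (-a) :=
  ⟨fun c => by rw [neg_mul, mul_neg, ha.1], by rw [map_neg, ha.2]⟩

lemma zero : IsOddElt (0 : ExteriorAlgebra k M) := ⟨by simp, by simp⟩

lemma mul (ha : IsOddElt a) (hb : IsOddElt b) : IsEvenElt (a * b) :=
  ⟨fun c => by
    have hinv : extInv k M (extInv k M c) = c := CliffordAlgebra.involute_involute c
    rw [mul_assoc, hb.1, ← mul_assoc, ha.1, hinv, mul_assoc], by
    rw [map_mul, ha.2, hb.2, neg_mul_neg]⟩

lemma mul_even (ha : IsOddElt a) (hb : IsEvenElt b) : IsOddElt (a * b) :=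
  ⟨fun c => by rw [mul_assoc, hb.1, ← mul_assoc, ha.1, mul_assoc], by
    rw [map_mul, ha.2, hb.2, neg_mul]⟩

lemma sum {ι : Type*} {s : Finset ι} {g : ι → ExteriorAlgebra k M}
    (h : ∀ i ∈ s, IsOddElt (g i)) : IsOddElt (∑ i ∈ s, g i) :=
  Finset.sum_induction _ _ (fun _ _ => add) zero h

lemma zsmul (ha : IsOddElt a) (z : ℤ) : IsOddElt (z • a) :=
  ⟨fun c => by rw [smul_mul_assoc, mul_smul_comm, ha.1], by rw [map_zsmul, ha.2, smul_neg]⟩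

lemma anticomm (ha : IsOddElt a) (hb : IsOddElt b) : a * b = -(b * a) := by
  rw [ha.1, hb.2, neg_mul]

end IsOddElt

namespace IsEvenElt
variable {a b : ExteriorAlgebra k M}

lemma add (ha : IsEvenElt a) (hb : IsEvenElt b) : IsEvenElt (a + b) :=
  ⟨fun c => by rw [add_mul, mul_add, ha.1, hb.1], by rw [map_add, ha.2, hb.2]⟩

lemma neg (ha : IsEvenElt a) : IsEvenElt (-a) :=
  ⟨fun c => by rw [neg_mul, mul_neg, ha.1], by rw [map_neg, ha.2]⟩

lemma sub (ha : IsEvenElt a) (hb : IsEvenElt b) : IsEvenElt (a - b) := by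
  rw [sub_eq_add_neg]; exact ha.add hb.neg

lemma zero : IsEvenElt (0 : ExteriorAlgebra k M) := ⟨by simp, by simp⟩

lemma mul_odd (ha : IsEvenElt a) (hb : IsOddElt b) : IsOddElt (a * b) := by
  rw [ha.1]; exact hb.mul_even ha

lemma sum {ι : Type*} {s : Finset ι} {g : ι → ExteriorAlgebra k M}
    (h : ∀ i ∈ s, IsEvenElt (g i)) : IsEvenElt (∑ i ∈ s, g i) :=
  Finset.sum_induction _ _ (fun _ _ => add) zero h

lemma zsmul (ha : IsEvenElt a) (z : ℤ) : IsEvenElt (z • a) :=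
  ⟨fun c => by rw [smul_mul_assoc, mul_smul_comm, ha.1], by rw [map_zsmul, ha.2]⟩

end IsEvenElt

end Parity

/-! ### Grid fields with values in the exterior algebra -/

section Fields

variable {k M V : Type*} [CommRing k] [AddCommGroup M] [Module k M]

local notation "Λ" => ExteriorAlgebra k M
local notation "ε" => ExteriorAlgebra.ι k

/-- The discrete exterior derivative, `x` and `y` playing the roles of `dx` and `dy`. -/
def extD (x y : M) (F : ℤ × ℤ → Λ) (p : ℤ × ℤ) : Λ :=
  ε x * gridDX F p + ε y * gridDY F p

/-- Membership in the two-sided ideal generated by the scalar `c` and the vector `m`. -/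
def InIdeal (c : k) (m : M) (a : Λ) : Prop := ∃ b b' : Λ, a = c • b + ε m * b'

lemma mul_ι_eq (m : M) (a : Λ) : a * ε m = ε m * extInv k M a := by
  have hinv : extInv k M (extInv k M a) = a := CliffordAlgebra.involute_involute a
  rw [(isOddElt_ι m).1, hinv]

namespace InIdeal
variable {c : k} {m : M} {a b : ExteriorAlgebra k M}

lemma add (ha : InIdeal c m a) (hb : InIdeal c m b) : InIdeal c m (a + b) := by
  obtain ⟨u, v, rfl⟩ := ha
  obtain ⟨u', v', rfl⟩ := hb
  exact ⟨u + u', v + v', by rw [smul_add, mul_add]; abel⟩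

lemma mul_left (ha : InIdeal c m a) (b : Λ) : InIdeal c m (b * a) := by
  obtain ⟨u, v, rfl⟩ := ha
  exact ⟨b * u, extInv k M b * v, by rw [mul_add, mul_smul_comm, ← mul_assoc, mul_ι_eq, mul_assoc]⟩

lemma mul_right (ha : InIdeal c m a) (b : Λ) : InIdeal c m (a * b) := by
  obtain ⟨u, v, rfl⟩ := ha
  exact ⟨u * b, v * b, by rw [add_mul, smul_mul_assoc, mul_assoc]⟩

lemma neg (ha : InIdeal c m a) : InIdeal c m (-a) := by
  simpa using ha.mul_left (-1)

lemma sub (ha : InIdeal c m a) (hb : InIdeal c m b) : InIdeal c m (a - b) := by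
  rw [sub_eq_add_neg]; exact ha.add hb.neg

lemma zero : InIdeal c m (0 : Λ) := ⟨0, 0, by simp⟩

lemma sum {ι : Type*} {s : Finset ι} {g : ι → Λ} (h : ∀ i ∈ s, InIdeal c m (g i)) :
    InIdeal c m (∑ i ∈ s, g i) :=
  Finset.sum_induction _ _ (fun _ _ => add) zero h

lemma of_smul (a : Λ) : InIdeal c m (c • a) := ⟨a, 0, by simp⟩

lemma of_ι_mul (a : Λ) : InIdeal c m (ε m * a) := ⟨0, a, by simp⟩

lemma of_mul_ι (a : Λ) : InIdeal c m (a * ε m) := by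
  rw [mul_ι_eq]; exact of_ι_mul _

lemma ι_mul_mul_eq_zero (hc : c * c = 0) (ha : InIdeal c m a) (hb : InIdeal c m b) :
    ε m * (a * b) = 0 := by
  obtain ⟨u, v, rfl⟩ := ha
  obtain ⟨u', v', rfl⟩ := hb
  have hm : ∀ z : Λ, ε m * (ε m * z) = 0 := fun z => by
    rw [← mul_assoc, ExteriorAlgebra.ι_sq_zero, zero_mul]
  have h3 : ε m * (u * (ε m * v')) = 0 := by
    rw [← mul_assoc u, mul_ι_eq, mul_assoc, hm]
  simp [mul_add, add_mul, smul_smul, hc, mul_assoc, hm, h3]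

end InIdeal

/-- Fields whose differences lie in the ideals making the discrete Leibniz rule exact. -/
def Adapted (t : V → k) (κ : ℤ → V) (x y : M) (F : ℤ × ℤ → Λ) : Prop :=
  ∀ p : ℤ × ℤ, InIdeal (t (κ p.1)) x (gridDX F p) ∧ InIdeal (t (κ p.2)) y (gridDY F p)

variable {t : V → k} {κ : ℤ → V} {x y : M}

lemma gridDX_mul (F G : ℤ × ℤ → Λ) (p : ℤ × ℤ) :
    gridDX (F * G) p = gridDX F p * G p + F p * gridDX G p - gridDX F p * gridDX G p := by
  simp only [gridDX, Pi.mul_apply]; noncomm_ring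

lemma gridDY_mul (F G : ℤ × ℤ → Λ) (p : ℤ × ℤ) :
    gridDY (F * G) p = gridDY F p * G p + F p * gridDY G p - gridDY F p * gridDY G p := by
  simp only [gridDY, Pi.mul_apply]; noncomm_ring

namespace Adapted
variable {F G : ℤ × ℤ → ExteriorAlgebra k M}

lemma add (hF : Adapted t κ x y F) (hG : Adapted t κ x y G) : Adapted t κ x y (F + G) :=
  fun p => ⟨by rw [gridDX_add]; exact (hF p).1.add (hG p).1,
    by rw [gridDY_add]; exact (hF p).2.add (hG p).2⟩

lemma sub (hF : Adapted t κ x y F) (hG : Adapted t κ x y G) : Adapted t κ x y (F - G) :=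
  fun p => ⟨by rw [gridDX_sub]; exact (hF p).1.sub (hG p).1,
    by rw [gridDY_sub]; exact (hF p).2.sub (hG p).2⟩

lemma mul (hF : Adapted t κ x y F) (hG : Adapted t κ x y G) : Adapted t κ x y (F * G) :=
  fun p => ⟨by
      rw [gridDX_mul]
      exact (((hF p).1.mul_right _).add ((hG p).1.mul_left _)).sub ((hF p).1.mul_right _),
    by
      rw [gridDY_mul]
      exact (((hF p).2.mul_right _).add ((hG p).2.mul_left _)).sub ((hF p).2.mul_right _)⟩

lemma const (a : Λ) : Adapted t κ x y (fun _ => a) :=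
  fun p => ⟨by simp only [gridDX, sub_self]; exact InIdeal.zero,
    by simp only [gridDY, sub_self]; exact InIdeal.zero⟩

/-- The graded Leibniz rule. -/
lemma extD_mul (ht : ∀ v, t v * t v = 0) (hF : Adapted t κ x y F) (hG : Adapted t κ x y G)
    (p : ℤ × ℤ) :
    extD x y (F * G) p = extD x y F p * G p + extInv k M (F p) * extD x y G p := by
  have h1 := InIdeal.ι_mul_mul_eq_zero (ht _) (hF p).1 (hG p).1
  have h2 := InIdeal.ι_mul_mul_eq_zero (ht _) (hF p).2 (hG p).2
  have hx := (isOddElt_ι (k := k) x).1 (F p)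
  have hy := (isOddElt_ι (k := k) y).1 (F p)
  rw [extD, gridDX_mul, gridDY_mul, mul_sub, mul_sub, h1, h2, extD, extD]
  simp only [mul_add, add_mul, sub_zero, ← mul_assoc, hx, hy]
  abel

end Adapted

lemma extD_add (F G : ℤ × ℤ → Λ) (p : ℤ × ℤ) :
    extD x y (F + G) p = extD x y F p + extD x y G p := by
  simp only [extD, gridDX_add, gridDY_add, Pi.add_apply, mul_add]; abel

lemma extD_sub (F G : ℤ × ℤ → Λ) (p : ℤ × ℤ) :
    extD x y (F - G) p = extD x y F p - extD x y G p := by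
  simp only [extD, gridDX_sub, gridDY_sub, Pi.sub_apply, mul_sub]; abel

lemma gridSum_extD {R : ℤ} {F : ℤ × ℤ → Λ} (hF : BoxSupp R F) :
    gridSum R (extD x y F) = 0 := by
  have h : extD x y F = (fun p => ε x * gridDX F p) + fun p => ε y * gridDY F p := rfl
  have h1 := map_gridSum (AddMonoidHom.mulLeft (ε x : Λ)) R (gridDX F)
  have h2 := map_gridSum (AddMonoidHom.mulLeft (ε y : Λ)) R (gridDY F)
  rw [gridSum_gridDX hF, map_zero] at h1
  rw [gridSum_gridDY hF, map_zero] at h2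
  rw [h, gridSum_add]
  simp only [AddMonoidHom.coe_mulLeft] at h1 h2
  rw [← h1, ← h2, add_zero]

/-! ### Products of fields along a list of indices -/

variable {I : Type*}

/-- Ordered product of fields. -/
def prodField (D : I → ℤ × ℤ → Λ) (l : List I) : ℤ × ℤ → Λ := (l.map D).prod

/-- Signed sum of the products in which one factor `D i` is replaced by `h i`. -/
def homotopyField (D h : I → ℤ × ℤ → Λ) : List I → ℤ × ℤ → Λ
  | [] => 0
  | i :: l => h i * prodField D l - D i * homotopyField D h l

/-- Sum of the products in which one factor `D i` is replaced by `e i`. -/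
def variationField (D e : I → ℤ × ℤ → Λ) : List I → ℤ × ℤ → Λ
  | [] => 0
  | i :: l => e i * prodField D l + D i * variationField D e l

lemma prodField_nil (D : I → ℤ × ℤ → Λ) : prodField D [] = 1 := rfl

lemma prodField_cons (D : I → ℤ × ℤ → Λ) (i : I) (l : List I) :
    prodField D (i :: l) = D i * prodField D l := by simp [prodField]

lemma prodField_append (D : I → ℤ × ℤ → Λ) (l l' : List I) :
    prodField D (l ++ l') = prodField D l * prodField D l' := by simp [prodField]

lemma adapted_prodField {D : I → ℤ × ℤ → Λ} (hD : ∀ i, Adapted t κ x y (D i)) (l : List I) :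
    Adapted t κ x y (prodField D l) := by
  induction l with
  | nil => exact Adapted.const 1
  | cons i l ih => rw [prodField_cons]; exact (hD i).mul ih

lemma adapted_homotopyField {D h : I → ℤ × ℤ → Λ} (hD : ∀ i, Adapted t κ x y (D i))
    (hh : ∀ i, Adapted t κ x y (h i)) (l : List I) :
    Adapted t κ x y (homotopyField D h l) := by
  induction l with
  | nil => exact Adapted.const 0
  | cons i l ih => exact ((hh i).mul (adapted_prodField hD l)).sub ((hD i).mul ih)

lemma boxSupp_homotopyField {R : ℤ} {D h : I → ℤ × ℤ → Λ} (hD : ∀ i, BoxSupp R (D i))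
    (hh : ∀ i, BoxSupp R (h i)) (l : List I) : BoxSupp R (homotopyField D h l) := by
  intro p hp
  cases l with
  | nil => rfl
  | cons i l => simp [homotopyField, hh i p hp, hD i p hp]

lemma extD_prodField (ht : ∀ v, t v * t v = 0) {D : I → ℤ × ℤ → Λ} {ξ : I → M}
    (hD : ∀ i, Adapted t κ x y (D i)) (hodd : ∀ i p, IsOddElt (D i p))
    (hd : ∀ i p, extD x y (D i) p = ε (ξ i) * D i p) (l : List I) (p : ℤ × ℤ) :
    extD x y (prodField D l) p = ε (l.map ξ).sum * prodField D l p := by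
  induction l with
  | nil => simp [extD, prodField_nil, gridDX, gridDY]
  | cons i l ih =>
    have c1 : D i p * ε (l.map ξ).sum = -(ε (l.map ξ).sum * D i p) :=
      (hodd i p).anticomm (isOddElt_ι _)
    rw [prodField_cons, (hD i).extD_mul ht (adapted_prodField hD l), hd, ih, (hodd i p).2]
    simp only [List.map_cons, List.sum_cons, map_add, add_mul, Pi.mul_apply, ← mul_assoc,
      neg_mul, c1, neg_neg]

lemma extD_homotopyField (ht : ∀ v, t v * t v = 0) {D h e : I → ℤ × ℤ → Λ} {ξ : I → M}
    (hD : ∀ i, Adapted t κ x y (D i)) (hodd : ∀ i p, IsOddElt (D i p))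
    (hd : ∀ i p, extD x y (D i) p = ε (ξ i) * D i p)
    (hh : ∀ i, Adapted t κ x y (h i)) (heven : ∀ i p, IsEvenElt (h i p))
    (he : ∀ i p, extD x y (h i) p = ε (ξ i) * h i p + e i p) (l : List I) (p : ℤ × ℤ) :
    extD x y (homotopyField D h l) p =
      ε (l.map ξ).sum * homotopyField D h l p + variationField D e l p := by
  induction l with
  | nil => simp [extD, homotopyField, variationField, gridDX, gridDY]
  | cons i l ih =>
    have c1 : D i p * ε (l.map ξ).sum = -(ε (l.map ξ).sum * D i p) :=
      (hodd i p).anticomm (isOddElt_ι _)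
    have c2 : h i p * ε (l.map ξ).sum = ε (l.map ξ).sum * h i p := (heven i p).1 _
    rw [homotopyField, extD_sub, (hh i).extD_mul ht (adapted_prodField hD l),
      (hD i).extD_mul ht (adapted_homotopyField hD hh l), he, hd, ih,
      extD_prodField ht hD hodd hd, (hodd i p).2, (heven i p).2]
    simp only [List.map_cons, List.sum_cons, map_add, variationField, Pi.sub_apply, Pi.mul_apply,
      Pi.add_apply, add_mul, mul_sub, mul_add, neg_mul, ← mul_assoc, c1, c2]
    abel

lemma variationField_eq {D D' : I → ℤ × ℤ → Λ} {c : k} (hc : c * c = 0)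
    (he : ∀ i p, ∃ a : Λ, D' i p - D i p = c • a) (l : List I) :
    prodField D' l - prodField D l = variationField D (fun i => D' i - D i) l := by
  have key : ∀ l p, ∃ a : Λ, variationField D (fun i => D' i - D i) l p = c • a := by
    intro l p
    induction l with
    | nil => exact ⟨0, by simp [variationField]⟩
    | cons i l ih =>
      obtain ⟨a, ha⟩ := ih
      obtain ⟨b, hb⟩ := he i p
      refine ⟨b * prodField D l p + D i p * a, ?_⟩
      simp only [variationField, Pi.add_apply, Pi.mul_apply, Pi.sub_apply, ha, hb]
      rw [smul_add, smul_mul_assoc, mul_smul_comm]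
  induction l with
  | nil => simp [variationField, prodField_nil]
  | cons i l ih =>
    ext p
    obtain ⟨a, ha⟩ := key l p
    obtain ⟨b, hb⟩ := he i p
    have h0 : (D' i p - D i p) * variationField D (fun i => D' i - D i) l p = 0 := by
      rw [ha, hb, smul_mul_assoc, mul_smul_comm, smul_smul, hc, zero_smul]
    have h1 : prodField D' l p = prodField D l p + variationField D (fun i => D' i - D i) l p := by
      rw [← ih]; simp
    simp only [prodField_cons, variationField, Pi.sub_apply, Pi.mul_apply, Pi.add_apply, h1,
      mul_add, sub_mul] at h0 ⊢
    rw [sub_eq_zero] at h0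
    rw [h0]
    abel

/-- The summed product of fields changes by a multiple of the total `ξ`. -/
lemma gridSum_prodField_sub (ht : ∀ v, t v * t v = 0) {R : ℤ} {D D' h : I → ℤ × ℤ → Λ}
    {ξ : I → M} {c : k} (hc : c * c = 0)
    (hD : ∀ i, Adapted t κ x y (D i)) (hodd : ∀ i p, IsOddElt (D i p))
    (hd : ∀ i p, extD x y (D i) p = ε (ξ i) * D i p)
    (hh : ∀ i, Adapted t κ x y (h i)) (heven : ∀ i p, IsEvenElt (h i p))
    (hsD : ∀ i, BoxSupp R (D i)) (hsh : ∀ i, BoxSupp R (h i))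
    (hdh : ∀ i p, extD x y (h i) p = ε (ξ i) * h i p + (D' i p - D i p))
    (he : ∀ i p, ∃ a : Λ, D' i p - D i p = c • a) (l : List I) :
    gridSum R (prodField D' l) - gridSum R (prodField D l) =
      -(ε (l.map ξ).sum * gridSum R (homotopyField D h l)) := by
  have h1 := gridSum_extD (x := x) (y := y) (boxSupp_homotopyField hsD hsh l)
  have h2 : extD x y (homotopyField D h l) =
      (fun p => ε (l.map ξ).sum * homotopyField D h l p) +
        variationField D (fun i => D' i - D i) l := by
    ext p; exact extD_homotopyField ht hD hodd hd hh heven hdh l p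
  have h3 := map_gridSum (AddMonoidHom.mulLeft (ε (l.map ξ).sum : Λ)) R (homotopyField D h l)
  simp only [AddMonoidHom.coe_mulLeft] at h3
  rw [h2, gridSum_add, ← h3] at h1
  rw [← gridSum_sub, variationField_eq hc he, eq_neg_iff_add_eq_zero, add_comm, h1]

end Fields

/-! ### Drawings of the complete graph on the grid -/

/-- The indicator function of a grid point. -/
def gridDelta (a p : ℤ × ℤ) : ℤ := if p = a then 1 else 0

/-- A drawing of the complete graph on `V`: the vertices are grid points, and the edge from `u`
to `v` is the Poincaré dual one-form `α dx + β dy` of a chain from `pt u` to `pt v`. The labelling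
`κ` of grid lines records which edges may use a given line. -/
structure GridDrawing (V : Type*) (κ : ℤ → V) (R : ℤ) where
  pt : V → ℤ × ℤ
  α : V → V → ℤ × ℤ → ℤ
  β : V → V → ℤ × ℤ → ℤ
  closed : ∀ u v p, gridDX (β u v) p - gridDY (α u v) p = gridDelta (pt v) p - gridDelta (pt u) p
  label_pt : ∀ v, κ (pt v).1 = v ∧ κ (pt v).2 = v
  label_α : ∀ u v p, α u v p ≠ 0 → κ p.1 = u ∨ κ p.1 = v
  label_dα : ∀ u v p, gridDY (α u v) p ≠ 0 → κ p.2 = u ∨ κ p.2 = v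
  label_β : ∀ u v p, β u v p ≠ 0 → κ p.2 = u ∨ κ p.2 = v
  label_dβ : ∀ u v p, gridDX (β u v) p ≠ 0 → κ p.1 = u ∨ κ p.1 = v
  supp_pt : ∀ v, BoxSupp R (gridDelta (pt v))
  supp_α : ∀ u v, BoxSupp R (α u v)
  supp_β : ∀ u v, BoxSupp R (β u v)

section Forms

variable {k M V : Type*} [CommRing k] [AddCommGroup M] [Module k M] [Fintype V] [LinearOrder V]

local notation "Λ" => ExteriorAlgebra k M
local notation "ε" => ExteriorAlgebra.ι k

/-- The vector-valued form with coefficients `d v` on the vertices. -/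
def vertexForm (k : Type*) {M V : Type*} [CommRing k] [AddCommGroup M] [Module k M] [Fintype V]
    (d : V → ℤ × ℤ → ℤ) (s : V → M) (p : ℤ × ℤ) : ExteriorAlgebra k M :=
  ∑ v, d v p • ExteriorAlgebra.ι k (s v)

/-- The bivector-valued form with coefficients `c u v` on the edges `u < v`. -/
def edgeForm (k : Type*) {M V : Type*} [CommRing k] [AddCommGroup M] [Module k M] [Fintype V]
    [LinearOrder V] (c : V → V → ℤ × ℤ → ℤ) (s : V → M) (p : ℤ × ℤ) : ExteriorAlgebra k M :=
  ∑ u, ∑ v, if u < v then c u v p • (ExteriorAlgebra.ι k (s u) * ExteriorAlgebra.ι k (s v)) else 0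

lemma isOddElt_vertexForm (d : V → ℤ × ℤ → ℤ) (s : V → M) (p : ℤ × ℤ) :
    IsOddElt (vertexForm k d s p) :=
  IsOddElt.sum fun _ _ => (isOddElt_ι _).zsmul _

lemma isEvenElt_edgeForm (c : V → V → ℤ × ℤ → ℤ) (s : V → M) (p : ℤ × ℤ) :
    IsEvenElt (edgeForm k c s p) := by
  refine IsEvenElt.sum fun u _ => IsEvenElt.sum fun v _ => ?_
  split_ifs
  · exact ((isOddElt_ι _).mul (isOddElt_ι _)).zsmul _
  · exact IsEvenElt.zero

lemma edgeForm_sub (c c' : V → V → ℤ × ℤ → ℤ) (s : V → M) :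
    edgeForm k c s - edgeForm k c' s = edgeForm k (fun u v p => c u v p - c' u v p) s := by
  ext p
  simp only [edgeForm, Pi.sub_apply, ← Finset.sum_sub_distrib]
  refine Finset.sum_congr rfl fun u _ => Finset.sum_congr rfl fun v _ => ?_
  split_ifs
  · rw [sub_smul]
  · simp

lemma gridDX_edgeForm (c : V → V → ℤ × ℤ → ℤ) (s : V → M) :
    gridDX (edgeForm k c s) = edgeForm k (fun u v => gridDX (c u v)) s := by
  ext p
  simp only [edgeForm, gridDX, ← Finset.sum_sub_distrib]
  refine Finset.sum_congr rfl fun u _ => Finset.sum_congr rfl fun v _ => ?_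
  split_ifs
  · rw [sub_smul]
  · simp

lemma gridDY_edgeForm (c : V → V → ℤ × ℤ → ℤ) (s : V → M) :
    gridDY (edgeForm k c s) = edgeForm k (fun u v => gridDY (c u v)) s := by
  ext p
  simp only [edgeForm, gridDY, ← Finset.sum_sub_distrib]
  refine Finset.sum_congr rfl fun u _ => Finset.sum_congr rfl fun v _ => ?_
  split_ifs
  · rw [sub_smul]
  · simp

lemma edgeForm_coboundary (d : V → ℤ × ℤ → ℤ) (s : V → M) (p : ℤ × ℤ) :
    edgeForm k (fun u v p => d v p - d u p) s p = ε (∑ v, s v) * vertexForm k d s p := by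
  have h1 : edgeForm k (fun u v p => d v p - d u p) s p =
      (∑ u, ∑ v, if u < v then d v p • (ε (s u) * ε (s v)) else 0) -
      ∑ u, ∑ v, if u < v then d u p • (ε (s u) * ε (s v)) else 0 := by
    simp only [edgeForm, ← Finset.sum_sub_distrib]
    refine Finset.sum_congr rfl fun u _ => Finset.sum_congr rfl fun v _ => ?_
    split_ifs
    · rw [sub_smul]
    · simp
  rw [h1, Finset.sum_comm (f := fun u v => if u < v then d u p • (ε (s u) * ε (s v)) else 0),
    ← Finset.sum_sub_distrib, map_sum, Finset.sum_mul]
  refine Finset.sum_congr rfl fun u _ => ?_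
  rw [vertexForm, Finset.mul_sum, ← Finset.sum_sub_distrib]
  refine Finset.sum_congr rfl fun v _ => ?_
  rw [mul_smul_comm]
  rcases lt_trichotomy u v with h | h | h
  · simp [h, h.not_gt]
  · subst h; simp
  · rw [if_neg h.not_gt, if_pos h, zero_sub,
      (isOddElt_ι (k := k) (s v)).anticomm (isOddElt_ι (s u)), smul_neg, neg_neg]

lemma inIdeal_edgeForm {t : V → k} {e s : V → M} (hs : ∀ v, s v = t v • e v) {w : V} (m : M)
    {c : V → V → ℤ × ℤ → ℤ} {p : ℤ × ℤ} (h : ∀ u v, c u v p ≠ 0 → w = u ∨ w = v) :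
    InIdeal (t w) m (edgeForm k c s p) := by
  refine InIdeal.sum fun u _ => InIdeal.sum fun v _ => ?_
  split_ifs
  · by_cases h0 : c u v p = 0
    · rw [h0, zero_smul]; exact InIdeal.zero
    · rcases h u v h0 with rfl | rfl
      · rw [hs w, map_smul, smul_mul_assoc, smul_comm]; exact InIdeal.of_smul _
      · rw [hs w, map_smul, mul_smul_comm, smul_comm]; exact InIdeal.of_smul _
  · exact InIdeal.zero

lemma boxSupp_vertexForm {R : ℤ} {d : V → ℤ × ℤ → ℤ} (h : ∀ v, BoxSupp R (d v)) (s : V → M) :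
    BoxSupp R (vertexForm k d s) := fun p hp =>
  Finset.sum_eq_zero fun v _ => by rw [h v p hp, zero_smul]

lemma boxSupp_edgeForm {R : ℤ} {c : V → V → ℤ × ℤ → ℤ} (h : ∀ u v, BoxSupp R (c u v))
    (s : V → M) : BoxSupp R (edgeForm k c s) := fun p hp =>
  Finset.sum_eq_zero fun u _ => Finset.sum_eq_zero fun v _ => by
    rw [h u v p hp, zero_smul, ite_self]

lemma map_vertexForm {N : Type*} [AddCommGroup N] [Module k N] (g : M →ₗ[k] N)
    (d : V → ℤ × ℤ → ℤ) (s : V → M) (p : ℤ × ℤ) :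
    ExteriorAlgebra.map g (vertexForm k d s p) = vertexForm k d (fun v => g (s v)) p := by
  simp [vertexForm]

lemma map_edgeForm {N : Type*} [AddCommGroup N] [Module k N] (g : M →ₗ[k] N)
    (c : V → V → ℤ × ℤ → ℤ) (s : V → M) (p : ℤ × ℤ) :
    ExteriorAlgebra.map g (edgeForm k c s p) = edgeForm k c (fun v => g (s v)) p := by
  simp only [edgeForm, map_sum]
  refine Finset.sum_congr rfl fun u _ => Finset.sum_congr rfl fun v _ => ?_
  split_ifs <;> simp

lemma gridDX_mulLeft (a : Λ) (F : ℤ × ℤ → Λ) :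
    gridDX (fun p => a * F p) = fun p => a * gridDX F p := by
  ext p; simp [gridDX, mul_sub]

lemma gridDY_mulLeft (a : Λ) (F : ℤ × ℤ → Λ) :
    gridDY (fun p => a * F p) = fun p => a * gridDY F p := by
  ext p; simp [gridDY, mul_sub]

lemma BoxSupp.mulLeft {R : ℤ} {F : ℤ × ℤ → Λ} (h : BoxSupp R F) (a : Λ) :
    BoxSupp R (fun p => a * F p) := fun p hp => by simp [h p hp]

lemma BoxSupp.mulRight {R : ℤ} {F : ℤ × ℤ → Λ} (h : BoxSupp R F) (a : Λ) :
    BoxSupp R (fun p => F p * a) := fun p hp => by simp [h p hp]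

lemma gridDX_mulRight (a : Λ) (F : ℤ × ℤ → Λ) :
    gridDX (fun p => F p * a) = fun p => gridDX F p * a := by
  ext p; simp [gridDX, sub_mul]

lemma gridDY_mulRight (a : Λ) (F : ℤ × ℤ → Λ) :
    gridDY (fun p => F p * a) = fun p => gridDY F p * a := by
  ext p; simp [gridDY, sub_mul]

namespace GridDrawing

variable {κ : ℤ → V} {R : ℤ} (D D' : GridDrawing V κ R)

/-- The trivector-valued function recording winding numbers of triangles. -/
def windForm (k : Type*) {M : Type*} [CommRing k] [AddCommGroup M] [Module k M] (s : V → M) :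
    ℤ × ℤ → ExteriorAlgebra k M :=
  gridPre R fun p => -(ExteriorAlgebra.ι k (∑ v, s v) * edgeForm k D.α s p)

/-- The total form of a drawing: vertices, edges and triangles. -/
def totalForm (k : Type*) {M : Type*} [CommRing k] [AddCommGroup M] [Module k M] (x y : M)
    (s : V → M) : ℤ × ℤ → ExteriorAlgebra k M :=
  (fun p => vertexForm k (fun v => gridDelta (D.pt v)) s p *
    (ExteriorAlgebra.ι k x * ExteriorAlgebra.ι k y)) +
  (fun p => edgeForm k D.α s p * ExteriorAlgebra.ι k x) +
  (fun p => edgeForm k D.β s p * ExteriorAlgebra.ι k y) + D.windForm k s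

lemma gridDX_sub_gridDY (s : V → M) (p : ℤ × ℤ) :
    gridDX (edgeForm k D.β s) p - gridDY (edgeForm k D.α s) p =
      ε (∑ v, s v) * vertexForm k (fun v => gridDelta (D.pt v)) s p := by
  rw [← edgeForm_coboundary, gridDX_edgeForm, gridDY_edgeForm, ← Pi.sub_apply, edgeForm_sub]
  simp only [D.closed]

lemma ι_mul_ι_mul (m : M) (a : Λ) : ε m * (ε m * a) = 0 := by
  rw [← mul_assoc, ExteriorAlgebra.ι_sq_zero, zero_mul]

lemma gridDY_neg_eq (s : V → M) :
    gridDY (fun p => -(ε (∑ v, s v) * edgeForm k D.α s p)) =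
      gridDX (fun p => -(ε (∑ v, s v) * edgeForm k D.β s p)) := by
  simp only [← neg_mul]
  rw [gridDY_mulLeft, gridDX_mulLeft]
  ext p
  have h := congrArg (fun a => ε (∑ v, s v) * a) (D.gridDX_sub_gridDY (k := k) s p)
  simp only [ι_mul_ι_mul, mul_sub, sub_eq_zero] at h
  rw [neg_mul, neg_mul, h]

lemma boxSupp_neg_mul_edgeForm {c : V → V → ℤ × ℤ → ℤ} (hc : ∀ u v, BoxSupp R (c u v))
    (s : V → M) : BoxSupp R (fun p => -(ε (∑ v, s v) * edgeForm k c s p)) := by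
  simp only [← neg_mul]; exact (boxSupp_edgeForm hc s).mulLeft _

lemma gridDX_windForm (s : V → M) :
    gridDX (D.windForm k s) = fun p => -(ε (∑ v, s v) * edgeForm k D.α s p) :=
  gridDX_gridPre (boxSupp_neg_mul_edgeForm D.supp_α s)

lemma gridDY_windForm (s : V → M) :
    gridDY (D.windForm k s) = fun p => -(ε (∑ v, s v) * edgeForm k D.β s p) :=
  gridDY_gridPre (boxSupp_neg_mul_edgeForm D.supp_β s) (D.gridDY_neg_eq s)

lemma boxSupp_windForm (s : V → M) : BoxSupp R (D.windForm k s) :=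
  boxSupp_gridPre (boxSupp_neg_mul_edgeForm D.supp_α s) (boxSupp_neg_mul_edgeForm D.supp_β s)
    (D.gridDY_neg_eq s)

lemma ι_mul_windForm (s : V → M) (p : ℤ × ℤ) : ε (∑ v, s v) * D.windForm k s p = 0 := by
  refine congrFun (eq_zero_of_gridDX_eq_zero ((D.boxSupp_windForm (k := k) s).mulLeft
    (ε (∑ v, s v))) ?_) p
  rw [gridDX_mulLeft, gridDX_windForm]
  ext p
  rw [mul_neg, ι_mul_ι_mul, neg_zero, Pi.zero_apply]

lemma isOddElt_windForm (s : V → M) (p : ℤ × ℤ) : IsOddElt (D.windForm k s p) := by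
  unfold windForm gridPre
  exact IsOddElt.sum fun _ _ => ((isOddElt_ι _).mul_even (isEvenElt_edgeForm _ _ _)).neg

lemma isOddElt_totalForm (x y : M) (s : V → M) (p : ℤ × ℤ) : IsOddElt (D.totalForm k x y s p) :=
  ((((isOddElt_vertexForm _ _ _).mul_even ((isOddElt_ι _).mul (isOddElt_ι _))).add
    ((isEvenElt_edgeForm _ _ _).mul_odd (isOddElt_ι _))).add
    ((isEvenElt_edgeForm _ _ _).mul_odd (isOddElt_ι _))).add (D.isOddElt_windForm s p)

lemma boxSupp_totalForm (x y : M) (s : V → M) : BoxSupp R (D.totalForm k x y s) :=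
  ((((boxSupp_vertexForm D.supp_pt s).mulRight _).add
    ((boxSupp_edgeForm D.supp_α s).mulRight _)).add
    ((boxSupp_edgeForm D.supp_β s).mulRight _)).add (D.boxSupp_windForm s)

lemma map_windForm {N : Type*} [AddCommGroup N] [Module k N] (g : M →ₗ[k] N) (s : V → M)
    (p : ℤ × ℤ) :
    ExteriorAlgebra.map g (D.windForm k s p) = D.windForm k (fun v => g (s v)) p := by
  simp [windForm, gridPre, map_edgeForm]

lemma map_totalForm {N : Type*} [AddCommGroup N] [Module k N] (g : M →ₗ[k] N) (x y : M)
    (s : V → M) (p : ℤ × ℤ) :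
    ExteriorAlgebra.map g (D.totalForm k x y s p) =
      D.totalForm k (g x) (g y) (fun v => g (s v)) p := by
  simp [totalForm, map_edgeForm, map_vertexForm, map_windForm]

lemma adapted_totalForm {t : V → k} {e s : V → M} (hs : ∀ v, s v = t v • e v) (x y : M) :
    Adapted t κ x y (D.totalForm k x y s) := by
  refine Adapted.add (Adapted.add (Adapted.add ?_ ?_) ?_) ?_ <;> intro p <;>
    refine ⟨?_, ?_⟩
  · rw [gridDX_mulRight]; exact (InIdeal.of_ι_mul _).mul_left _
  · rw [gridDY_mulRight]; exact (InIdeal.of_mul_ι _).mul_left _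
  · rw [gridDX_mulRight]; exact InIdeal.of_mul_ι _
  · rw [gridDY_mulRight, gridDY_edgeForm]
    exact (inIdeal_edgeForm hs y fun u v => D.label_dα u v p).mul_right _
  · rw [gridDX_mulRight, gridDX_edgeForm]
    exact (inIdeal_edgeForm hs x fun u v => D.label_dβ u v p).mul_right _
  · rw [gridDY_mulRight]; exact InIdeal.of_mul_ι _
  · rw [gridDX_windForm]
    exact ((inIdeal_edgeForm hs x fun u v => D.label_α u v p).mul_left _).neg
  · rw [gridDY_windForm]
    exact ((inIdeal_edgeForm hs y fun u v => D.label_β u v p).mul_left _).neg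

lemma extD_totalForm (x y : M) (s : V → M) (p : ℤ × ℤ) :
    extD x y (D.totalForm k x y s) p = ε (∑ v, s v) * D.totalForm k x y s p := by
  set X : Λ := ε x with hX
  set Y : Λ := ε y with hY
  set Z : Λ := ε (∑ v, s v) with hZ
  have hXX : X * X = 0 := ExteriorAlgebra.ι_sq_zero _
  have hYY : Y * Y = 0 := ExteriorAlgebra.ι_sq_zero _
  have hYX : Y * X = -(X * Y) := (isOddElt_ι _).anticomm (isOddElt_ι _)
  have hXZ : X * Z = -(Z * X) := (isOddElt_ι _).anticomm (isOddElt_ι _)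
  have hYZ : Y * Z = -(Z * Y) := (isOddElt_ι _).anticomm (isOddElt_ι _)
  have hXv : ∀ (d : V → ℤ × ℤ → ℤ) p, X * vertexForm k d s p = -(vertexForm k d s p * X) :=
    fun d p => (isOddElt_ι _).anticomm (isOddElt_vertexForm _ _ _)
  have hYv : ∀ (d : V → ℤ × ℤ → ℤ) p, Y * vertexForm k d s p = -(vertexForm k d s p * Y) :=
    fun d p => (isOddElt_ι _).anticomm (isOddElt_vertexForm _ _ _)
  have hXe : ∀ (c : V → V → ℤ × ℤ → ℤ) p, X * edgeForm k c s p = edgeForm k c s p * X :=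
    fun c p => ((isEvenElt_edgeForm _ _ _).1 _).symm
  have hYe : ∀ (c : V → V → ℤ × ℤ → ℤ) p, Y * edgeForm k c s p = edgeForm k c s p * Y :=
    fun c p => ((isEvenElt_edgeForm _ _ _).1 _).symm
  have hZe : ∀ (c : V → V → ℤ × ℤ → ℤ) p, Z * edgeForm k c s p = edgeForm k c s p * Z :=
    fun c p => ((isEvenElt_edgeForm _ _ _).1 _).symm
  have hW : Z * D.windForm k s p = 0 := D.ι_mul_windForm s p
  have hclosed := D.gridDX_sub_gridDY (k := k) s p
  have e1 : ∀ F : ℤ × ℤ → Λ, extD x y F p = X * gridDX F p + Y * gridDY F p := fun F => rfl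
  have p1 : extD x y (fun p => vertexForm k (fun v => gridDelta (D.pt v)) s p * (X * Y)) p = 0 := by
    rw [e1, gridDX_mulRight, gridDY_mulRight]
    simp only [gridDX, gridDY, sub_mul, mul_sub, ← mul_assoc, hXv, hYv, neg_mul]
    have a1 : ∀ a : Λ, a * X * X * Y = 0 := fun a => by rw [mul_assoc a, hXX]; simp
    have a2 : ∀ a : Λ, a * Y * X * Y = 0 := fun a => by
      rw [mul_assoc a, hYX, mul_neg, neg_mul, mul_assoc, mul_assoc, hYY]; simp
    simp only [a1, a2]; simp
  have p2 : extD x y (fun p => edgeForm k D.α s p * X) p =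
      -(gridDY (edgeForm k D.α s) p * (X * Y)) := by
    rw [e1, gridDX_mulRight, gridDY_mulRight, gridDX_edgeForm, gridDY_edgeForm]
    simp only [← mul_assoc, hXe, hYe]
    rw [mul_assoc, hXX, mul_zero, zero_add, mul_assoc, hYX, mul_neg, mul_assoc]
  have p3 : extD x y (fun p => edgeForm k D.β s p * Y) p =
      gridDX (edgeForm k D.β s) p * (X * Y) := by
    rw [e1, gridDX_mulRight, gridDY_mulRight, gridDX_edgeForm, gridDY_edgeForm]
    simp only [← mul_assoc, hXe, hYe]
    rw [mul_assoc _ Y Y, hYY, mul_zero, add_zero]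
  have p4 : extD x y (D.windForm k s) p =
      Z * (edgeForm k D.α s p * X) + Z * (edgeForm k D.β s p * Y) := by
    rw [e1, gridDX_windForm, gridDY_windForm, ← hZ]
    simp only [mul_neg, ← mul_assoc, hXZ, hYZ, neg_mul, neg_neg]
    simp only [mul_assoc, hXe, hYe]
  rw [totalForm, extD_add, extD_add, extD_add, p1, p2, p3, p4]
  simp only [Pi.add_apply, mul_add, hW]
  rw [← mul_assoc Z (vertexForm k _ s p), ← hclosed, sub_mul]
  abel

end GridDrawing

end Forms

/-! ### L-shaped paths and vertex moves -/

section LPath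

/-- The `dx`-part of the dual form of the path going horizontally and then vertically. -/
def lpathα (a b p : ℤ × ℤ) : ℤ :=
  if p.1 = b.1 then (if a.2 ≤ p.2 then 1 else 0) - (if b.2 ≤ p.2 then 1 else 0) else 0

/-- The `dy`-part of the dual form of the path going horizontally and then vertically. -/
def lpathβ (a b p : ℤ × ℤ) : ℤ :=
  if p.2 = a.2 then (if b.1 ≤ p.1 then 1 else 0) - (if a.1 ≤ p.1 then 1 else 0) else 0

lemma lpath_closed (a b p : ℤ × ℤ) :
    gridDX (lpathβ a b) p - gridDY (lpathα a b) p = gridDelta b p - gridDelta a p := by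
  simp only [gridDX, gridDY, lpathα, lpathβ, gridDelta, Prod.ext_iff]
  split_ifs <;> omega

lemma lpathα_label {a b p : ℤ × ℤ} (h : lpathα a b p ≠ 0) : p.1 = b.1 := by
  by_contra h'; exact h (if_neg h')

lemma lpathβ_label {a b p : ℤ × ℤ} (h : lpathβ a b p ≠ 0) : p.2 = a.2 := by
  by_contra h'; exact h (if_neg h')

lemma gridDY_lpathα_label {a b p : ℤ × ℤ} (h : gridDY (lpathα a b) p ≠ 0) :
    p.2 = a.2 ∨ p.2 = b.2 := by
  contrapose! h
  simp only [gridDY, lpathα]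
  split_ifs <;> omega

lemma gridDX_lpathβ_label {a b p : ℤ × ℤ} (h : gridDX (lpathβ a b) p ≠ 0) :
    p.1 = a.1 ∨ p.1 = b.1 := by
  contrapose! h
  simp only [gridDX, lpathβ]
  split_ifs <;> omega

/-- The grid point lies in the half-open box. -/
def InBox (R : ℤ) (a : ℤ × ℤ) : Prop := -R ≤ a.1 ∧ a.1 < R ∧ -R ≤ a.2 ∧ a.2 < R

lemma boxSupp_gridDelta {R : ℤ} {a : ℤ × ℤ} : BoxSupp R (gridDelta a) ↔ InBox R a := by
  constructor
  · intro h
    have := mt (h a)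
    simp [gridDelta] at this
    exact ⟨this.1, this.2.1, this.2.2⟩
  · rintro ⟨h1, h2, h3, h4⟩ p hp
    refine if_neg ?_
    rintro rfl
    omega

lemma boxSupp_lpathα {R : ℤ} {a b : ℤ × ℤ} (ha : InBox R a) (hb : InBox R b) :
    BoxSupp R (lpathα a b) := by
  obtain ⟨h1, h2, h3, h4⟩ := ha
  obtain ⟨h5, h6, h7, h8⟩ := hb
  intro p hp
  simp only [lpathα]
  split_ifs <;> omega

lemma boxSupp_lpathβ {R : ℤ} {a b : ℤ × ℤ} (ha : InBox R a) (hb : InBox R b) :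
    BoxSupp R (lpathβ a b) := by
  obtain ⟨h1, h2, h3, h4⟩ := ha
  obtain ⟨h5, h6, h7, h8⟩ := hb
  intro p hp
  simp only [lpathβ]
  split_ifs <;> omega

end LPath

section VertexMove

variable {k M V : Type*} [CommRing k] [AddCommGroup M] [Module k M] [Fintype V] [LinearOrder V]

local notation "Λ" => ExteriorAlgebra k M
local notation "ε" => ExteriorAlgebra.ι k

namespace GridDrawing

variable {κ : ℤ → V} {R : ℤ} {D D' : GridDrawing V κ R} {w : V}

/-- Two drawings that differ only in the position of `w` and the edges at `w`. -/
structure AgreeOff (D D' : GridDrawing V κ R) (w : V) : Prop where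
  pt : ∀ v, v ≠ w → D'.pt v = D.pt v
  α : ∀ u v, u ≠ w → v ≠ w → D'.α u v = D.α u v
  β : ∀ u v, u ≠ w → v ≠ w → D'.β u v = D.β u v

/-- The primitive of the `dx`-part of the homotopy of a vertex move. -/
def moveDX (D D' : GridDrawing V κ R) (w : V) (k : Type*) {M : Type*} [CommRing k]
    [AddCommGroup M] [Module k M] (s : V → M) (p : ℤ × ℤ) : ExteriorAlgebra k M :=
  edgeForm k D'.α s p - edgeForm k D.α s p -
    lpathα (D.pt w) (D'.pt w) p • (ExteriorAlgebra.ι k (∑ v, s v) * ExteriorAlgebra.ι k (s w))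

/-- The primitive of the `dy`-part of the homotopy of a vertex move. -/
def moveDY (D D' : GridDrawing V κ R) (w : V) (k : Type*) {M : Type*} [CommRing k]
    [AddCommGroup M] [Module k M] (s : V → M) (p : ℤ × ℤ) : ExteriorAlgebra k M :=
  edgeForm k D'.β s p - edgeForm k D.β s p -
    lpathβ (D.pt w) (D'.pt w) p • (ExteriorAlgebra.ι k (∑ v, s v) * ExteriorAlgebra.ι k (s w))

/-- The homotopy between the total forms of two drawings differing by a vertex move. -/
def moveForm (D D' : GridDrawing V κ R) (w : V) (k : Type*) {M : Type*} [CommRing k]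
    [AddCommGroup M] [Module k M] (x y : M) (s : V → M) : ℤ × ℤ → ExteriorAlgebra k M :=
  (fun p => lpathα (D.pt w) (D'.pt w) p • (ExteriorAlgebra.ι k x * ExteriorAlgebra.ι k (s w))) +
  (fun p => lpathβ (D.pt w) (D'.pt w) p • (ExteriorAlgebra.ι k y * ExteriorAlgebra.ι k (s w))) +
  gridPre R (moveDX D D' w k s)

lemma map_moveForm {N : Type*} [AddCommGroup N] [Module k N] (g : M →ₗ[k] N) (x y : M)
    (s : V → M) (p : ℤ × ℤ) :
    ExteriorAlgebra.map g (moveForm D D' w k x y s p) =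
      moveForm D D' w k (g x) (g y) (fun v => g (s v)) p := by
  simp [moveForm, gridPre, moveDX, map_edgeForm]

lemma isEvenElt_moveDX (s : V → M) (p : ℤ × ℤ) : IsEvenElt (moveDX D D' w k s p) :=
  ((isEvenElt_edgeForm _ _ _).sub (isEvenElt_edgeForm _ _ _)).sub
    (((isOddElt_ι _).mul (isOddElt_ι _)).zsmul _)

lemma isEvenElt_moveDY (s : V → M) (p : ℤ × ℤ) : IsEvenElt (moveDY D D' w k s p) :=
  ((isEvenElt_edgeForm _ _ _).sub (isEvenElt_edgeForm _ _ _)).sub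
    (((isOddElt_ι _).mul (isOddElt_ι _)).zsmul _)

lemma isEvenElt_moveForm (x y : M) (s : V → M) (p : ℤ × ℤ) :
    IsEvenElt (moveForm D D' w k x y s p) := by
  refine IsEvenElt.add (IsEvenElt.add (((isOddElt_ι _).mul (isOddElt_ι _)).zsmul _)
    (((isOddElt_ι _).mul (isOddElt_ι _)).zsmul _)) ?_
  unfold gridPre
  exact IsEvenElt.sum fun _ _ => isEvenElt_moveDX _ _

lemma inBox_pt (D : GridDrawing V κ R) (v : V) : InBox R (D.pt v) :=
  boxSupp_gridDelta.mp (D.supp_pt v)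

lemma boxSupp_zsmul {c : ℤ × ℤ → ℤ} (h : BoxSupp R c) (a : Λ) :
    BoxSupp R (fun p => c p • a) := fun p hp => by simp [h p hp]

lemma boxSupp_moveDX (s : V → M) : BoxSupp R (moveDX D D' w k s) :=
  ((boxSupp_edgeForm D'.supp_α s).sub (boxSupp_edgeForm D.supp_α s)).sub
    (boxSupp_zsmul (boxSupp_lpathα (D.inBox_pt w) (D'.inBox_pt w)) _)

lemma boxSupp_moveDY (s : V → M) : BoxSupp R (moveDY D D' w k s) :=
  ((boxSupp_edgeForm D'.supp_β s).sub (boxSupp_edgeForm D.supp_β s)).sub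
    (boxSupp_zsmul (boxSupp_lpathβ (D.inBox_pt w) (D'.inBox_pt w)) _)

lemma gridDX_zsmul (c : ℤ × ℤ → ℤ) (a : Λ) :
    gridDX (fun p => c p • a) = fun p => gridDX c p • a := by
  ext p; simp [gridDX, sub_smul]

lemma gridDY_zsmul (c : ℤ × ℤ → ℤ) (a : Λ) :
    gridDY (fun p => c p • a) = fun p => gridDY c p • a := by
  ext p; simp [gridDY, sub_smul]

lemma vertexForm_sub (h : AgreeOff D D' w) (s : V → M) (p : ℤ × ℤ) :
    vertexForm k (fun v => gridDelta (D'.pt v)) s p -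
      vertexForm k (fun v => gridDelta (D.pt v)) s p =
      (gridDelta (D'.pt w) p - gridDelta (D.pt w) p) • ε (s w) := by
  rw [vertexForm, vertexForm, ← Finset.sum_sub_distrib, Finset.sum_eq_single w]
  · rw [sub_smul]
  · intro v _ hv; rw [h.pt v hv, sub_self]
  · simp

lemma gridDY_moveDX (h : AgreeOff D D' w) (s : V → M) :
    gridDY (moveDX D D' w k s) = gridDX (moveDY D D' w k s) := by
  have e1 : moveDX D D' w k s = edgeForm k D'.α s - edgeForm k D.α s -
    fun p => lpathα (D.pt w) (D'.pt w) p • (ε (∑ v, s v) * ε (s w)) := rfl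
  have e2 : moveDY D D' w k s = edgeForm k D'.β s - edgeForm k D.β s -
    fun p => lpathβ (D.pt w) (D'.pt w) p • (ε (∑ v, s v) * ε (s w)) := rfl
  rw [e1, e2]
  simp only [gridDX_sub, gridDY_sub, gridDX_zsmul, gridDY_zsmul]
  ext p
  have h1 := D.gridDX_sub_gridDY (k := k) s p
  have h2 := D'.gridDX_sub_gridDY (k := k) s p
  have h3 := congrArg (fun a => ε (∑ v, s v) * a) (vertexForm_sub (k := k) h s p)
  simp only [mul_sub, mul_smul_comm] at h3
  rw [← h1, ← h2, ← lpath_closed, sub_smul] at h3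
  simp only [Pi.sub_apply]
  rw [← sub_eq_zero] at h3 ⊢
  rw [← neg_eq_zero, ← h3]
  abel

lemma gridDX_pre_moveDX (s : V → M) :
    gridDX (gridPre R (moveDX D D' w k s)) = moveDX D D' w k s :=
  gridDX_gridPre (boxSupp_moveDX s)

lemma gridDY_pre_moveDX (h : AgreeOff D D' w) (s : V → M) :
    gridDY (gridPre R (moveDX D D' w k s)) = moveDY D D' w k s :=
  gridDY_gridPre (boxSupp_moveDY s) (gridDY_moveDX h s)

lemma boxSupp_pre_moveDX (h : AgreeOff D D' w) (s : V → M) :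
    BoxSupp R (gridPre R (moveDX D D' w k s)) :=
  boxSupp_gridPre (boxSupp_moveDX s) (boxSupp_moveDY s) (gridDY_moveDX h s)

lemma boxSupp_moveForm (h : AgreeOff D D' w) (x y : M) (s : V → M) :
    BoxSupp R (moveForm D D' w k x y s) :=
  ((boxSupp_zsmul (boxSupp_lpathα (D.inBox_pt w) (D'.inBox_pt w)) _).add
    (boxSupp_zsmul (boxSupp_lpathβ (D.inBox_pt w) (D'.inBox_pt w)) _)).add
    (boxSupp_pre_moveDX h s)

lemma ι_mul_pre_moveDX (h : AgreeOff D D' w) (s : V → M) (p : ℤ × ℤ) :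
    ε (∑ v, s v) * gridPre R (moveDX D D' w k s) p = D.windForm k s p - D'.windForm k s p := by
  have hs : BoxSupp R ((fun p => ε (∑ v, s v) * gridPre R (moveDX D D' w k s) p) -
      (D.windForm k s - D'.windForm k s)) :=
    ((boxSupp_pre_moveDX h s).mulLeft _).sub ((D.boxSupp_windForm s).sub (D'.boxSupp_windForm s))
  have h0 := eq_zero_of_gridDX_eq_zero hs (by
    rw [gridDX_sub, gridDX_sub, gridDX_mulLeft, gridDX_pre_moveDX, gridDX_windForm,
      gridDX_windForm]
    ext p
    simp only [moveDX, Pi.sub_apply, mul_sub, mul_smul_comm, ι_mul_ι_mul, smul_zero, Pi.zero_apply]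
    abel)
  have := congrFun h0 p
  simpa [sub_eq_zero] using this

lemma adapted_moveForm {t : V → k} {e s : V → M} (hs : ∀ v, s v = t v • e v)
    (h : AgreeOff D D' w) (x y : M) : Adapted t κ x y (moveForm D D' w k x y s) := by
  have hz : ∀ (z : ℤ) (v : V) (m : M) (a : Λ), (z ≠ 0 → v = w) →
      InIdeal (t v) m (z • (a * ε (s w))) := by
    intro z v m a hv
    by_cases hz : z = 0
    · rw [hz, zero_smul]; exact InIdeal.zero
    · rw [hv hz, hs w, map_smul, mul_smul_comm, smul_comm]; exact InIdeal.of_smul _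
  have hz' : ∀ (z : ℤ) (c : k) (m : M) (a : Λ), InIdeal c m (z • (ε m * a)) := by
    intro z c m a
    rw [← mul_smul_comm]; exact InIdeal.of_ι_mul _
  have hl := D.label_pt w
  have hl' := D'.label_pt w
  refine Adapted.add (Adapted.add ?_ ?_) ?_ <;> intro p <;> refine ⟨?_, ?_⟩
  · rw [gridDX_zsmul]; exact hz' _ _ _ _
  · rw [gridDY_zsmul]
    refine hz _ _ _ _ fun h => ?_
    rcases gridDY_lpathα_label h with h | h <;> rw [h]
    exacts [hl.2, hl'.2]
  · rw [gridDX_zsmul]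
    refine hz _ _ _ _ fun h => ?_
    rcases gridDX_lpathβ_label h with h | h <;> rw [h]
    exacts [hl.1, hl'.1]
  · rw [gridDY_zsmul]; exact hz' _ _ _ _
  · rw [gridDX_pre_moveDX]
    refine ((inIdeal_edgeForm hs x fun u v => D'.label_α u v p).sub
      (inIdeal_edgeForm hs x fun u v => D.label_α u v p)).sub (hz _ _ _ _ fun h => ?_)
    rw [lpathα_label h]; exact hl'.1
  · rw [gridDY_pre_moveDX h]
    refine ((inIdeal_edgeForm hs y fun u v => D'.label_β u v p).sub
      (inIdeal_edgeForm hs y fun u v => D.label_β u v p)).sub (hz _ _ _ _ fun h => ?_)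
    rw [lpathβ_label h]; exact hl.2

lemma extD_moveForm (h : AgreeOff D D' w) (x y : M) (s : V → M) (p : ℤ × ℤ) :
    extD x y (moveForm D D' w k x y s) p = ε (∑ v, s v) * moveForm D D' w k x y s p +
      (D'.totalForm k x y s p - D.totalForm k x y s p) := by
  have hW := ι_mul_pre_moveDX (k := k) h s p
  have hv := vertexForm_sub (k := k) h s p
  rw [sub_eq_iff_eq_add] at hv
  have e1 : ∀ F : ℤ × ℤ → Λ, extD x y F p = ε x * gridDX F p + ε y * gridDY F p := fun F => rfl
  have p1 : extD x y (fun p => lpathα (D.pt w) (D'.pt w) p • (ε x * ε (s w))) p =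
      -(gridDY (lpathα (D.pt w) (D'.pt w)) p • (ε (s w) * (ε x * ε y))) := by
    rw [e1, gridDX_zsmul, gridDY_zsmul, mul_smul_comm, mul_smul_comm, ι_mul_ι_mul, smul_zero,
      zero_add, ← smul_neg, ← mul_assoc,
      ((isOddElt_ι (k := k) y).mul (isOddElt_ι x)).1,
      (isOddElt_ι (k := k) y).anticomm (isOddElt_ι x), mul_neg]
  have p2 : extD x y (fun p => lpathβ (D.pt w) (D'.pt w) p • (ε y * ε (s w))) p =
      gridDX (lpathβ (D.pt w) (D'.pt w)) p • (ε (s w) * (ε x * ε y)) := by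
    rw [e1, gridDX_zsmul, gridDY_zsmul, mul_smul_comm, mul_smul_comm, ι_mul_ι_mul, smul_zero,
      add_zero, ← mul_assoc, ((isOddElt_ι (k := k) x).mul (isOddElt_ι y)).1]
  have p3 : extD x y (gridPre R (moveDX D D' w k s)) p =
      moveDX D D' w k s p * ε x + moveDY D D' w k s p * ε y := by
    rw [e1, gridDX_pre_moveDX, gridDY_pre_moveDX h, (isEvenElt_moveDX s p).1,
      (isEvenElt_moveDY s p).1]
  have q1 : ∀ m : M, ε (∑ v, s v) * (ε m * ε (s w)) = -(ε (∑ v, s v) * ε (s w) * ε m) := fun m => by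
    rw [(isOddElt_ι (k := k) m).anticomm (isOddElt_ι _), mul_neg, mul_assoc]
  have hc := lpath_closed (D.pt w) (D'.pt w) p
  rw [moveForm, extD_add, extD_add, p1, p2, p3]
  simp only [Pi.add_apply, mul_add, mul_smul_comm, hW, totalForm, q1, hv, ← hc]
  simp only [moveDX, moveDY, sub_mul, sub_smul, add_mul, smul_mul_assoc, smul_neg]
  abel

lemma exists_smul_edgeForm {t : V → k} {e s : V → M} (hs : ∀ v, s v = t v • e v)
    {c c' : V → V → ℤ × ℤ → ℤ} (h : ∀ u v, u ≠ w → v ≠ w → c' u v = c u v) (p : ℤ × ℤ) :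
    ∃ a : Λ, edgeForm k c' s p - edgeForm k c s p = t w • a := by
  obtain ⟨b, b', hb⟩ := inIdeal_edgeForm (c := fun u v p => c' u v p - c u v p) (p := p) (w := w)
    hs (0 : M) (fun u v huv => by
      by_contra! hne
      exact huv (by simp only [h u v hne.1.symm hne.2.symm, sub_self]))
  rw [map_zero, zero_mul, add_zero, ← edgeForm_sub] at hb
  exact ⟨b, hb⟩

lemma exists_smul_totalForm {t : V → k} {e s : V → M} (hs : ∀ v, s v = t v • e v)
    (h : AgreeOff D D' w) (x y : M) (p : ℤ × ℤ) :
    ∃ a : Λ, D'.totalForm k x y s p - D.totalForm k x y s p = t w • a := by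
  obtain ⟨b, hb⟩ := exists_smul_edgeForm (k := k) hs h.β p
  choose a ha using exists_smul_edgeForm (k := k) hs h.α
  have hv := vertexForm_sub (k := k) h s p
  have hw : D'.windForm k s p - D.windForm k s p =
      t w • gridPre R (fun p => -(ε (∑ v, s v) * a p)) p := by
    simp only [windForm, gridPre, ← Finset.sum_sub_distrib, Finset.smul_sum]
    refine Finset.sum_congr rfl fun i _ => ?_
    rw [neg_sub_neg, ← neg_sub, ← mul_sub, ha, mul_smul_comm, smul_neg]
  refine ⟨(gridDelta (D'.pt w) p - gridDelta (D.pt w) p) • ε (e w) * (ε x * ε y) + a p * ε x +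
    b * ε y + gridPre R (fun p => -(ε (∑ v, s v) * a p)) p, ?_⟩
  rw [hs w, map_smul, smul_comm, sub_eq_iff_eq_add] at hv
  have ha' := ha p
  rw [sub_eq_iff_eq_add] at ha' hb hw
  simp only [totalForm, Pi.add_apply, hv, ha', hb, hw, smul_add, add_mul, smul_mul_assoc]
  abel

end GridDrawing

end VertexMove

/-! ### Cyclic symmetry of homotopy fields -/

section Cyclic

variable {k M I : Type*} [CommRing k] [AddCommGroup M] [Module k M]

local notation "Λ" => ExteriorAlgebra k M

lemma extInv_prodField {D : I → ℤ × ℤ → Λ} (hodd : ∀ i p, IsOddElt (D i p)) (l : List I)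
    (p : ℤ × ℤ) : extInv k M (prodField D l p) = (-1) ^ l.length * prodField D l p := by
  induction l with
  | nil => simp [prodField_nil]
  | cons i l ih =>
    rw [prodField_cons, Pi.mul_apply, map_mul, ih, (hodd i p).2, List.length_cons, pow_succ,
      ← mul_assoc, ← mul_assoc, ← ((Commute.neg_one_left (-D i p)).pow_left l.length).eq]
    noncomm_ring

lemma extInv_homotopyField {D h : I → ℤ × ℤ → Λ} (hodd : ∀ i p, IsOddElt (D i p))
    (heven : ∀ i p, IsEvenElt (h i p)) (l : List I) (p : ℤ × ℤ) :
    extInv k M (homotopyField D h l p) = -((-1) ^ l.length * homotopyField D h l p) := by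
  induction l with
  | nil => simp [homotopyField]
  | cons i l ih =>
    have hc := ((Commute.neg_one_left (D i p)).pow_left l.length).eq
    have hc' := ((Commute.neg_one_left (h i p)).pow_left l.length).eq
    simp only [homotopyField, Pi.sub_apply, Pi.mul_apply, map_sub, map_mul, ih,
      extInv_prodField hodd, (hodd i p).2, (heven i p).2, List.length_cons, pow_succ, mul_sub,
      ← mul_assoc, ← hc', ← hc, neg_mul, mul_neg, neg_neg]
    noncomm_ring

lemma homotopyField_concat {D h : I → ℤ × ℤ → Λ} (l : List I) (i : I) (p : ℤ × ℤ) :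
    homotopyField D h (l ++ [i]) p =
      homotopyField D h l p * D i p + (-1) ^ l.length * (prodField D l p * h i p) := by
  induction l with
  | nil => simp [homotopyField, prodField_nil]
  | cons j l ih =>
    have hc := ((Commute.neg_one_left (D j p)).pow_left l.length).eq
    simp only [List.cons_append, homotopyField, prodField_append, prodField_cons, Pi.sub_apply,
      Pi.mul_apply, ih, prodField_nil, mul_one, List.length_cons, pow_succ, mul_add, ← mul_assoc,
      ← hc]
    noncomm_ring

lemma homotopyField_cons_eq_concat {D h : I → ℤ × ℤ → Λ} (hodd : ∀ i p, IsOddElt (D i p))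
    (heven : ∀ i p, IsEvenElt (h i p)) (l : List I) (i : I) (p : ℤ × ℤ) :
    homotopyField D h (i :: l) p = (-1) ^ l.length * homotopyField D h (l ++ [i]) p := by
  have hsq : ((-1 : Λ)) ^ l.length * (-1) ^ l.length = 1 := by
    rw [← pow_add, ← two_mul, pow_mul]; simp
  rw [homotopyField_concat, homotopyField, Pi.sub_apply, Pi.mul_apply, Pi.mul_apply,
    (hodd i p).1, extInv_homotopyField hodd heven, (heven i p).1, mul_add, ← mul_assoc _ _ (_ * _),
    hsq, one_mul]
  noncomm_ring

lemma map_prodField {N : Type*} [AddCommGroup N] [Module k N]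
    (σ : Λ →ₐ[k] ExteriorAlgebra k N) (D : I → ℤ × ℤ → Λ) (l : List I) (p : ℤ × ℤ) :
    σ (prodField D l p) = prodField (fun i p => σ (D i p)) l p := by
  induction l with
  | nil => simp [prodField_nil]
  | cons i l ih => simp [prodField_cons, ih]

lemma map_homotopyField {N : Type*} [AddCommGroup N] [Module k N]
    (σ : Λ →ₐ[k] ExteriorAlgebra k N) (D h : I → ℤ × ℤ → Λ) (l : List I) (p : ℤ × ℤ) :
    σ (homotopyField D h l p) =
      homotopyField (fun i p => σ (D i p)) (fun i p => σ (h i p)) l p := by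
  induction l with
  | nil => simp [homotopyField]
  | cons i l ih => simp [homotopyField, ih, map_prodField]

lemma prodField_map {I' : Type*} (f : I' → I) (D : I → ℤ × ℤ → Λ) (l : List I') :
    prodField D (l.map f) = prodField (fun i => D (f i)) l := by
  simp [prodField, Function.comp_def]

lemma homotopyField_map {I' : Type*} (f : I' → I) (D h : I → ℤ × ℤ → Λ) (l : List I') :
    homotopyField D h (l.map f) = homotopyField (fun i => D (f i)) (fun i => h (f i)) l := by
  induction l with
  | nil => rfl
  | cons i l ih => simp [homotopyField, ih, prodField_map]

lemma sum_homotopyField_single [Fintype I] [DecidableEq I] (D h : I → ℤ × ℤ → Λ) (l : List I) :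
    ∑ j, homotopyField D (fun i => if i = j then h i else 0) l = homotopyField D h l := by
  induction l with
  | nil => simp [homotopyField]
  | cons i l ih =>
    simp only [homotopyField, Finset.sum_sub_distrib, ← Finset.mul_sum, ih, ← Finset.sum_mul]
    simp

/-- The residues `0, 1, …, q - 1` in order. -/
def residues (q : ℕ) : List (ZMod q) := (List.range q).map Nat.cast

lemma residues_rotate (q : ℕ) [NeZero q] : ∃ l : List (ZMod q), l.length = q - 1 ∧
    residues q = 0 :: l ∧ (residues q).map (· + 1) = l ++ [0] := by
  obtain ⟨m, rfl⟩ : ∃ m, q = m + 1 := ⟨q - 1, by have := NeZero.pos q; omega⟩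
  refine ⟨(List.range m).map fun i => ((i + 1 : ℕ) : ZMod (m + 1)), by simp, ?_, ?_⟩
  · simp [residues, List.range_succ_eq_map, Function.comp_def]
  · rw [residues, List.range_succ]
    have : ((m : ZMod (m + 1)) + 1) = 0 := by exact_mod_cast ZMod.natCast_self (m + 1)
    simp [this]

/-- A cyclically symmetric homotopy field has vanishing invariants in characteristic `q`. -/
lemma cyclic_gridSum_eq_zero {q : ℕ} [NeZero q] {A : Type*} [AddCommGroup A]
    (hq : ∀ a : A, q • a = 0) (hsign : ∀ a : A, (-1 : ℤ) ^ (q - 1) • a = a)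
    {D h : ZMod q → ℤ × ℤ → Λ} (hodd : ∀ i p, IsOddElt (D i p))
    (heven : ∀ i p, IsEvenElt (h i p)) (σ : Λ →ₐ[k] Λ)
    (hσD : ∀ i p, σ (D i p) = D (i + 1) p) (hσh : ∀ i p, σ (h i p) = h (i + 1) p)
    (φ : Λ →+ A) (hφ : ∀ a, φ (σ a) = φ a) (R : ℤ) :
    φ (gridSum R (homotopyField D h (residues q))) = 0 := by
  set S : ZMod q → Λ := fun j =>
    gridSum R (homotopyField D (fun i => if i = j then h i else 0) (residues q)) with hS
  obtain ⟨l, hl, hl0, hl1⟩ := residues_rotate q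
  have hstep : ∀ j, φ (S (j + 1)) = φ (S j) := by
    intro j
    rw [← hφ (S j)]
    have h1 : σ (S j) = gridSum R (homotopyField D (fun i => if i = j + 1 then h i else 0)
        ((residues q).map (· + 1))) := by
      have := map_gridSum (σ : Λ →+ Λ) R
        (homotopyField D (fun i => if i = j then h i else 0) (residues q))
      simp only [AddMonoidHom.coe_coe] at this
      rw [hS, this, homotopyField_map]
      congr 1
      ext p
      rw [map_homotopyField]
      congr 1
      · ext i p; exact hσD i p
      · ext i p
        by_cases hij : i = j
        · simp [hij, hσh]
        · simp [hij]
    have h2 : S (j + 1) = (-1 : ℤ) ^ (q - 1) •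
        gridSum R (homotopyField D (fun i => if i = j + 1 then h i else 0)
          ((residues q).map (· + 1))) := by
      rw [hl1]
      have := map_gridSum (zsmulAddGroupHom ((-1 : ℤ) ^ (q - 1)) : Λ →+ Λ) R
        (homotopyField D (fun i => if i = j + 1 then h i else 0) (l ++ [0]))
      simp only [zsmulAddGroupHom_apply] at this
      simp only [hS, hl0]
      rw [this]
      congr 1
      ext p
      rw [homotopyField_cons_eq_concat hodd, hl, zsmul_eq_mul]
      · simp
      · intro i p
        by_cases hij : i = j + 1
        · simpa [hij] using heven (j + 1) p
        · simpa [hij] using IsEvenElt.zero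
    rw [h1, h2, map_zsmul, hsign]
  have hconst : ∀ n : ℕ, φ (S (n : ZMod q)) = φ (S 0) := by
    intro n
    induction n with
    | zero => simp
    | succ n ih => rw [Nat.cast_succ, hstep, ih]
  have hsum : gridSum R (homotopyField D h (residues q)) = ∑ j, S j := by
    rw [← sum_homotopyField_single]
    simp only [hS, gridSum, Finset.sum_apply]
    rw [Finset.sum_comm (s := Finset.univ)]
    refine Finset.sum_congr rfl fun y _ => ?_
    rw [Finset.sum_comm (s := Finset.univ)]
  rw [hsum, map_sum]
  have : ∀ j, φ (S j) = φ (S 0) := fun j => by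
    rw [← hconst j.val, ZMod.natCast_zmod_val]
  simp [this, ZMod.card, hq]

end Cyclic

/-! ### The coloured degree of a drawing -/

section Degree

/-- Indices of the generators: `dx`, `dy`, the generator of the special vertex, and one generator
for each colour and each part. -/
abbrev GenIdx (q : ℕ) : Type := Fin 3 ⊕ (Fin 3 × ZMod q)

variable {q : ℕ} {k V : Type*} [CommRing k]

/-- The basis vector with index `j`. -/
abbrev gen (k : Type*) [CommRing k] {q : ℕ} (j : GenIdx q) : GenIdx q → k := Pi.single j 1

local notation "Λ" => ExteriorAlgebra k (GenIdx q → k)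
local notation "ε" => ExteriorAlgebra.ι k

/-- The generator attached to a vertex `v` placed in part `i`. -/
def colorVec (k : Type*) [CommRing k] {q : ℕ} {V : Type*} (col : V → Option (Fin 3)) (v : V)
    (i : ZMod q) : GenIdx q → k :=
  match col v with
  | none => if i = 0 then gen k (Sum.inl 2) else 0
  | some c => gen k (Sum.inr (c, i))

/-- The sum of all generators of a given colour. -/
def colorSum (k : Type*) [CommRing k] (q : ℕ) [NeZero q] (c : Fin 3) : GenIdx q → k :=
  ∑ i : ZMod q, gen k (Sum.inr (c, i))

/-- The determinant as an alternating map indexed by `Fin`. -/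
def detAlt (k : Type*) [CommRing k] (q : ℕ) [NeZero q] :
    (GenIdx q → k) [⋀^Fin (Fintype.card (GenIdx q))]→ₗ[k] k :=
  (Matrix.detRowAlternating (n := GenIdx q) (R := k)).domDomCongr (Fintype.equivFin (GenIdx q))

/-- The top-degree coefficient. -/
def topForm (k : Type*) [CommRing k] (q : ℕ) [NeZero q] :
    ExteriorAlgebra k (GenIdx q → k) →ₗ[k] k :=
  ExteriorAlgebra.liftAlternating
    (Pi.single (M := fun i => (GenIdx q → k) [⋀^Fin i]→ₗ[k] k) _ (detAlt k q))

/-- The linear map permuting the basis vectors. -/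
def permMap (k : Type*) [CommRing k] (π : Equiv.Perm (GenIdx q)) :
    (GenIdx q → k) →ₗ[k] (GenIdx q → k) :=
  LinearMap.funLeft k k π.symm

lemma permMap_gen (π : Equiv.Perm (GenIdx q)) (j : GenIdx q) :
    permMap k π (gen k j) = gen k (π j) := by
  ext i
  simp only [permMap, LinearMap.funLeft_apply, gen, Pi.single_apply, Equiv.symm_apply_eq]

lemma topForm_map_permMap [NeZero q] (π : Equiv.Perm (GenIdx q)) (a : Λ) :
    topForm k q (ExteriorAlgebra.map (permMap k π) a) =
      ((Equiv.Perm.sign π : ℤˣ) : ℤ) • topForm k q a := by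
  have h : (topForm k q) ∘ₗ (ExteriorAlgebra.map (permMap k π)).toLinearMap =
      ((Equiv.Perm.sign π : ℤˣ) : ℤ) • topForm k q := by
    refine ExteriorAlgebra.lhom_ext fun n => ?_
    ext v
    simp only [LinearMap.compAlternatingMap_apply, LinearMap.coe_comp, Function.comp_apply,
      AlgHom.toLinearMap_apply, ExteriorAlgebra.map_apply_ιMulti, topForm,
      ExteriorAlgebra.liftAlternating_apply_ιMulti, LinearMap.smul_apply]
    by_cases hn : n = Fintype.card (GenIdx q)
    · subst hn
      rw [Pi.single_eq_same]
      simp only [detAlt, AlternatingMap.domDomCongr_apply, Matrix.detRowAlternating]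
      have := Matrix.det_permute' (R := k) π.symm
        (Matrix.of fun i => v (Fintype.equivFin (GenIdx q) i))
      rw [Equiv.Perm.sign_symm] at this
      rw [zsmul_eq_mul]
      exact this
    · rw [Pi.single_eq_of_ne hn]; simp
  exact LinearMap.congr_fun h a

/-- Shifting the part index by one. -/
def shiftPerm (q : ℕ) : Equiv.Perm (GenIdx q) :=
  Equiv.sumCongr (Equiv.refl _) (Equiv.prodCongr (Equiv.refl _) (Equiv.addRight 1))

lemma shiftPerm_pow (n : ℕ) (j : GenIdx q) : (shiftPerm q ^ n) j =
    Sum.map id (Prod.map id (· + (n : ZMod q))) j := by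
  induction n with
  | zero => rcases j with j | ⟨c, i⟩ <;> simp
  | succ n ih =>
    rw [pow_succ', Equiv.Perm.mul_apply, ih]
    rcases j with j | ⟨c, i⟩ <;> simp [shiftPerm, add_assoc]

lemma sign_shiftPerm_smul (hq : q.Prime) [NeZero q] (a : ZMod q) :
    ((Equiv.Perm.sign (shiftPerm q) : ℤˣ) : ℤ) • a = a := by
  have h1 : shiftPerm q ^ q = 1 := by
    ext j : 1; rw [shiftPerm_pow]; rcases j with j | ⟨c, i⟩ <;> simp
  have h2 := congrArg Equiv.Perm.sign h1
  rw [map_pow, map_one] at h2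
  rcases Int.units_eq_one_or (Equiv.Perm.sign (shiftPerm q)) with h | h
  · simp [h]
  · rcases hq.eq_two_or_odd' with rfl | hodd
    · rw [h, Units.val_neg, Units.val_one, neg_smul, one_smul, ZMod.neg_eq_self_mod_two]
    · rw [h, hodd.neg_one_pow] at h2
      exact absurd h2 (by decide)

lemma neg_one_pow_smul (hq : q.Prime) (a : ZMod q) : (-1 : ℤ) ^ (q - 1) • a = a := by
  rcases hq.eq_two_or_odd' with rfl | hodd
  · revert a; decide
  · rw [(Nat.Odd.sub_odd hodd odd_one).neg_one_pow, one_smul]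

/-- The linear map killing the generator of the special vertex. -/
def killSpecial (k : Type*) [CommRing k] (q : ℕ) : (GenIdx q → k) →ₗ[k] (GenIdx q → k) where
  toFun a j := if j = Sum.inl 2 then 0 else a j
  map_add' a b := by ext j; simp only [Pi.add_apply]; split_ifs <;> simp
  map_smul' c a := by ext j; simp

lemma killSpecial_gen {j : GenIdx q} (hj : j ≠ Sum.inl 2) :
    killSpecial k q (gen k j) = gen k j := by
  ext i
  simp only [killSpecial, LinearMap.coe_mk, AddHom.coe_mk, gen, Pi.single_apply]
  split_ifs with h1 h2 <;> simp_all

lemma killSpecial_special : killSpecial k q (gen k (Sum.inl 2)) = 0 := by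
  ext i
  simp only [killSpecial, LinearMap.coe_mk, AddHom.coe_mk, gen, Pi.single_apply]
  split_ifs <;> simp_all

lemma ι_special_mul (a : Λ) :
    ε (gen k (Sum.inl 2)) * ExteriorAlgebra.map (killSpecial k q) a =
      ε (gen k (Sum.inl 2)) * a := by
  induction a using ExteriorAlgebra.induction with
  | algebraMap r => simp
  | ι v =>
    have hv : v = killSpecial k q v + v (Sum.inl 2) • gen k (Sum.inl 2) := by
      ext j
      simp only [killSpecial, LinearMap.coe_mk, AddHom.coe_mk, gen, Pi.add_apply, Pi.smul_apply,
        Pi.single_apply]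
      split_ifs with h <;> simp [h]
    conv_rhs => rw [hv]
    simp [mul_add]
  | mul a b ha hb =>
    rw [map_mul, ← mul_assoc, ha, (isOddElt_ι _).1, mul_assoc, hb, ← mul_assoc,
      ← (isOddElt_ι _).1, mul_assoc]
  | add a b ha hb => rw [map_add, mul_add, mul_add, ha, hb]

/-- The product of the three colour sums. -/
def colorProd (k : Type*) [CommRing k] (q : ℕ) [NeZero q] : ExteriorAlgebra k (GenIdx q → k) :=
  ExteriorAlgebra.ι k (colorSum k q 0) * ExteriorAlgebra.ι k (colorSum k q 1) *
    ExteriorAlgebra.ι k (colorSum k q 2)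

lemma colorProd_mul_colorSum [NeZero q] (c : Fin 3) (a : Λ) :
    colorProd k q * (ε (colorSum k q c) * a) = 0 := by
  have h : ∀ b : Λ, ε (colorSum k q c) * (b * (ε (colorSum k q c) * a)) = 0 := fun b => by
    rw [← mul_assoc, (isOddElt_ι _).1, mul_assoc, GridDrawing.ι_mul_ι_mul, mul_zero]
  unfold colorProd
  fin_cases c <;> simp only [Fin.zero_eta, Fin.mk_one, Fin.reduceFinMk] at h ⊢
  · rw [mul_assoc (ε _ * ε _), mul_assoc (ε _), ← mul_assoc (ε (colorSum k q 1))]; exact h _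
  · rw [mul_assoc (ε _ * ε _), mul_assoc (ε _), h, mul_zero]
  · rw [mul_assoc (ε _ * ε _), GridDrawing.ι_mul_ι_mul, mul_zero]

lemma permMap_shift_colorSum [NeZero q] (c : Fin 3) :
    permMap k (shiftPerm q) (colorSum k q c) = colorSum k q c := by
  simp only [colorSum, map_sum, permMap_gen]
  exact Fintype.sum_equiv (Equiv.addRight 1) _ _ (fun i => by simp [shiftPerm])

lemma map_shift_colorProd [NeZero q] :
    ExteriorAlgebra.map (permMap k (shiftPerm q)) (colorProd k q) = colorProd k q := by
  simp [colorProd, permMap_shift_colorSum]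

variable [Fintype V] [LinearOrder V] {κ : ℤ → V} {R : ℤ}

/-- The total form of a drawing seen from part `i`. -/
def GridDrawing.colorForm (D : GridDrawing V κ R) (col : V → Option (Fin 3)) (t : V → k)
    (i : ZMod q) : ℤ × ℤ → ExteriorAlgebra k (GenIdx q → k) :=
  D.totalForm k (gen k (Sum.inl 0)) (gen k (Sum.inl 1)) fun v => t v • colorVec k col v i

/-- The coloured degree of a drawing. -/
def GridDrawing.degree (D : GridDrawing V κ R) (q : ℕ) [NeZero q] (col : V → Option (Fin 3))
    (t : V → k) (c : k →+ ZMod q) : ZMod q :=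
  c (topForm k q (colorProd k q *
    gridSum R (prodField (D.colorForm (q := q) col t) (residues q))))

lemma nodup_residues (q : ℕ) : (residues q).Nodup := by
  refine List.Nodup.map_on (fun a ha b hb h => ?_) List.nodup_range
  rw [List.mem_range] at ha hb
  rw [ZMod.natCast_eq_natCast_iff', Nat.mod_eq_of_lt ha, Nat.mod_eq_of_lt hb] at h
  exact h

lemma mem_residues [NeZero q] (i : ZMod q) : i ∈ residues q :=
  List.mem_map.mpr ⟨i.val, List.mem_range.mpr (ZMod.val_lt i), ZMod.natCast_zmod_val i⟩

lemma sum_map_residues {A : Type*} [AddCommMonoid A] [NeZero q] (g : ZMod q → A) :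
    ((residues q).map g).sum = ∑ i, g i := by
  classical
  rw [← List.sum_toFinset g (nodup_residues q)]
  exact Finset.sum_congr (by ext i; simp [mem_residues]) fun _ _ => rfl

lemma sum_colorVec [NeZero q] (col : V → Option (Fin 3)) (v : V) :
    ∑ i : ZMod q, colorVec k col v i =
      match col v with
      | none => gen k (Sum.inl 2)
      | some c => colorSum k q c := by
  unfold colorVec
  cases col v with
  | none => simp
  | some c => rfl

lemma permMap_shift_killSpecial_colorVec (col : V → Option (Fin 3)) (v : V) (i : ZMod q) :
    permMap k (shiftPerm q) (killSpecial k q (colorVec k col v i)) =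
      killSpecial k q (colorVec k col v (i + 1)) := by
  unfold colorVec
  cases col v with
  | none =>
    have h : ∀ P : Prop, [Decidable P] →
        killSpecial k q (if P then gen k (Sum.inl 2) else 0) = 0 := by
      intro P _; split_ifs <;> simp [killSpecial_special]
    simp only [h, map_zero]
  | some c =>
    simp only [killSpecial_gen (j := Sum.inr (c, i)) Sum.inr_ne_inl,
      killSpecial_gen (j := Sum.inr (c, i + 1)) Sum.inr_ne_inl, permMap_gen]
    simp [shiftPerm]

/-- The coloured degree does not change when a single vertex is moved. -/
theorem GridDrawing.AgreeOff.degree_eq {D D' : GridDrawing V κ R} {w : V}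
    (hDD : AgreeOff D D' w) (hq : q.Prime) [NeZero q] {col : V → Option (Fin 3)} {t : V → k}
    (ht : ∀ v, t v * t v = 0) (c : k →+ ZMod q) :
    D'.degree q col t c = D.degree q col t c := by
  set x : GenIdx q → k := gen k (Sum.inl 0)
  set y : GenIdx q → k := gen k (Sum.inl 1)
  set s : ZMod q → V → GenIdx q → k := fun i v => t v • colorVec k col v i with hs
  set h : ZMod q → ℤ × ℤ → Λ := fun i => moveForm D D' w k x y (s i)
  set S : Λ := gridSum R (homotopyField (D.colorForm col t) h (residues q)) with hS
  have key := gridSum_prodField_sub (x := x) (y := y) ht (ht w)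
    (D := D.colorForm (q := q) col t) (D' := D'.colorForm (q := q) col t) (h := h) (R := R)
    (ξ := fun i => ∑ v, s i v)
    (fun i => D.adapted_totalForm (fun v => rfl) x y) (fun i p => D.isOddElt_totalForm x y _ p)
    (fun i p => D.extD_totalForm x y _ p) (fun i => adapted_moveForm (fun v => rfl) hDD x y)
    (fun i p => isEvenElt_moveForm x y _ p) (fun i => D.boxSupp_totalForm x y _)
    (fun i => boxSupp_moveForm hDD x y _) (fun i p => extD_moveForm hDD x y _ p)
    (fun i p => exists_smul_totalForm (fun v => rfl) hDD x y p) (residues q)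
  have hξ : ((residues q).map fun i => ∑ v, s i v).sum =
      ∑ v, t v • ∑ i : ZMod q, colorVec k col v i := by
    rw [sum_map_residues, Finset.sum_comm]
    simp only [hs, Finset.smul_sum]
  set φ : k → Λ →+ ZMod q := fun r => c.comp ((topForm k q).toAddMonoidHom.comp
    (AddMonoidHom.mulLeft (r • (colorProd k q * ε (gen k (Sum.inl 2)))))) with hφdef
  have hφ : ∀ r a, φ r a =
      c (r • topForm k q (colorProd k q * (ε (gen k (Sum.inl 2)) * a))) := fun r a => by
    simp [hφdef, mul_assoc]
  -- the contribution of the special vertex vanishes by cyclic symmetry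
  have hcyc : ∀ r, φ r S = 0 := by
    intro r
    set K := ExteriorAlgebra.map (killSpecial k q)
    have hK0 : killSpecial k q x = x := killSpecial_gen (by simp)
    have hK1 : killSpecial k q y = y := killSpecial_gen (by simp)
    have hP0 : permMap k (shiftPerm q) x = x := permMap_gen _ _
    have hP1 : permMap k (shiftPerm q) y = y := permMap_gen _ _
    have hP2 : permMap k (shiftPerm q) (gen k (Sum.inl 2)) = gen k (Sum.inl 2) := permMap_gen _ _
    have hKS : φ r S = φ r (K S) := by rw [hφ, hφ, ι_special_mul]
    have hKS' : K S = gridSum R (homotopyField (fun i p => K (D.colorForm col t i p))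
        (fun i p => K (h i p)) (residues q)) := by
      refine (map_gridSum (AddMonoidHomClass.toAddMonoidHom K) R _).trans ?_
      congr 1; ext p; exact map_homotopyField K _ _ _ _
    rw [hKS, hKS']
    refine cyclic_gridSum_eq_zero (fun a => by simp) (neg_one_pow_smul hq) ?_ ?_
      (ExteriorAlgebra.map (permMap k (shiftPerm q))) ?_ ?_ (φ r) ?_ R
    · intro i p
      simp only [K, GridDrawing.colorForm, map_totalForm]
      exact D.isOddElt_totalForm _ _ _ _
    · intro i p
      simp only [K, h, map_moveForm]
      exact isEvenElt_moveForm _ _ _ _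
    · intro i p
      simp only [K, GridDrawing.colorForm, map_totalForm, map_smul,
        permMap_shift_killSpecial_colorVec]
      rw [hK0, hK1, hP0, hP1]
    · intro i p
      simp only [K, h, map_moveForm, hs, map_smul, permMap_shift_killSpecial_colorVec]
      rw [hK0, hK1, hP0, hP1]
    · intro a
      have e : colorProd k q * (ε (gen k (Sum.inl 2)) *
          ExteriorAlgebra.map (permMap k (shiftPerm q)) a) =
          ExteriorAlgebra.map (permMap k (shiftPerm q))
            (colorProd k q * (ε (gen k (Sum.inl 2)) * a)) := by
        rw [map_mul, map_mul, map_shift_colorProd, ExteriorAlgebra.map_apply_ι, hP2]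
      rw [hφ, hφ, e, topForm_map_permMap, smul_comm, map_zsmul, sign_shiftPerm_smul hq]
  rw [← sub_eq_zero, GridDrawing.degree, GridDrawing.degree, ← map_sub, ← map_sub, ← mul_sub, key,
    hξ, mul_neg, map_neg, map_neg, neg_eq_zero, map_sum, Finset.sum_mul, Finset.mul_sum, map_sum,
    map_sum]
  refine Finset.sum_eq_zero fun v _ => ?_
  rw [sum_colorVec, map_smul, smul_mul_assoc, mul_smul_comm, map_smul]
  cases hv : col v with
  | none => simpa only [hφ] using hcyc (t v)
  | some b => rw [colorProd_mul_colorSum]; simp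

end Degree

/-! ### Expansion of the degree -/

section Expansion

variable {k M V : Type*} [CommRing k] [AddCommGroup M] [Module k M] [Fintype V] [LinearOrder V]
variable {κ : ℤ → V} {R : ℤ}

local notation "Λ" => ExteriorAlgebra k M
local notation "ε" => ExteriorAlgebra.ι k

/-- A term of the total form: a vertex, an edge together with a direction, or a triangle. -/
abbrev GridTerm (V : Type*) : Type _ := V ⊕ (Bool × V × V) ⊕ (V × V × V)

namespace GridTerm

/-- The vectors whose product is the monomial of a term. -/
def vecs (x y : M) (s : V → M) : GridTerm V → List M
  | Sum.inl v => [s v, x, y]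
  | Sum.inr (Sum.inl (b, u, v)) => [s u, s v, if b then y else x]
  | Sum.inr (Sum.inr (u, v, w)) => [s u, s v, s w]

/-- The vertices of a term. -/
def verts : GridTerm V → Finset V
  | Sum.inl v => {v}
  | Sum.inr (Sum.inl (_, u, v)) => {u, v}
  | Sum.inr (Sum.inr (u, v, w)) => {u, v, w}

end GridTerm

namespace GridDrawing

variable (D : GridDrawing V κ R)

/-- The winding number of the triangle `u v w`. -/
def triWind (u v w : V) : ℤ × ℤ → ℤ :=
  gridPre R fun p => -(D.α v w p - D.α u w p + D.α u v p)

/-- The coefficient of a term in the total form. -/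
def coef (p : ℤ × ℤ) : GridTerm V → ℤ
  | Sum.inl v => gridDelta (D.pt v) p
  | Sum.inr (Sum.inl (b, u, v)) => if u < v then (if b then D.β u v p else D.α u v p) else 0
  | Sum.inr (Sum.inr (u, v, w)) => if u < v ∧ v < w then D.triWind u v w p else 0

lemma ι_sum_mul_edgeForm (g : V → V → ℤ × ℤ → ℤ) (s : V → M) (p : ℤ × ℤ) :
    ε (∑ v, s v) * edgeForm k g s p = ∑ u, ∑ v, ∑ w,
      (if u < v ∧ v < w then g v w p - g u w p + g u v p else 0) •
        (ε (s u) * (ε (s v) * ε (s w))) := by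
  have hsq : ∀ a : M, ∀ b : Λ, ε a * (ε a * b) = 0 := ι_mul_ι_mul
  have hsw : ∀ a b : M, ε a * ε b = -(ε b * ε a) := fun a b =>
    (isOddElt_ι _).anticomm (isOddElt_ι _)
  have e1 : ε (∑ v, s v) * edgeForm k g s p = ∑ z, ∑ u, ∑ v,
      ((((if z < u ∧ u < v then g u v p else 0) • (ε (s z) * (ε (s u) * ε (s v)))) -
      ((if u < z ∧ z < v then g u v p else 0) • (ε (s u) * (ε (s z) * ε (s v))))) +
      ((if u < v ∧ v < z then g u v p else 0) • (ε (s u) * (ε (s v) * ε (s z))))) := by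
    rw [map_sum, Finset.sum_mul]
    refine Finset.sum_congr rfl fun z _ => ?_
    rw [edgeForm, Finset.mul_sum]
    refine Finset.sum_congr rfl fun u _ => ?_
    rw [Finset.mul_sum]
    refine Finset.sum_congr rfl fun v _ => ?_
    have e2 : ε (s u) * (ε (s z) * ε (s v)) = -(ε (s z) * (ε (s u) * ε (s v))) := by
      rw [← mul_assoc, hsw (s u) (s z), neg_mul, mul_assoc]
    have e3 : ε (s u) * (ε (s v) * ε (s z)) = ε (s z) * (ε (s u) * ε (s v)) := by
      rw [hsw (s v) (s z), mul_neg, e2, neg_neg]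
    rw [e2, e3]
    by_cases huv : u < v
    · rw [if_pos huv, mul_smul_comm]
      rcases lt_trichotomy z u with h | rfl | h
      · simp [h, huv, h.not_gt, (h.trans huv).not_gt]
      · rw [hsq]; simp
      · rcases lt_trichotomy z v with h' | rfl | h'
        · simp [h, h', h.not_gt, h'.not_gt]
        · rw [← e3, ExteriorAlgebra.ι_sq_zero]; simp
        · simp [h, h', h.not_gt, h'.not_gt, huv]
    · have hz : ¬ (u < z ∧ z < v) := fun h => huv (h.1.trans h.2)
      simp [huv, hz]
  rw [e1]
  simp only [Finset.sum_add_distrib, Finset.sum_sub_distrib]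
  have e4 : ∀ F : V → V → V → Λ, ∑ z, ∑ u, ∑ v, F u z v = ∑ u, ∑ z, ∑ v, F u z v :=
    fun F => Finset.sum_comm
  have e5 : ∀ F : V → V → V → Λ, ∑ z, ∑ u, ∑ v, F u v z = ∑ u, ∑ v, ∑ z, F u v z := fun F => by
    rw [Finset.sum_comm]
    exact Finset.sum_congr rfl fun _ _ => Finset.sum_comm
  rw [e4 fun u z v => (if u < z ∧ z < v then g u v p else 0) • (ε (s u) * (ε (s z) * ε (s v))),
    e5 fun u v z => (if u < v ∧ v < z then g u v p else 0) • (ε (s u) * (ε (s v) * ε (s z)))]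
  simp only [← Finset.sum_add_distrib, ← Finset.sum_sub_distrib]
  refine Finset.sum_congr rfl fun u _ => Finset.sum_congr rfl fun v _ =>
    Finset.sum_congr rfl fun w _ => ?_
  split_ifs
  · rw [add_smul, sub_smul]
  · simp

lemma windForm_eq_sum (s : V → M) (p : ℤ × ℤ) :
    D.windForm k s p = ∑ u, ∑ v, ∑ w,
      (if u < v ∧ v < w then D.triWind u v w p else 0) • (ε (s u) * (ε (s v) * ε (s w))) := by
  simp only [windForm, triWind, gridPre, ι_sum_mul_edgeForm]
  rw [Finset.sum_neg_distrib, Finset.sum_comm, ← Finset.sum_neg_distrib]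
  refine Finset.sum_congr rfl fun u _ => ?_
  rw [Finset.sum_comm, ← Finset.sum_neg_distrib]
  refine Finset.sum_congr rfl fun v _ => ?_
  rw [Finset.sum_comm, ← Finset.sum_neg_distrib]
  refine Finset.sum_congr rfl fun w _ => ?_
  rw [← Finset.sum_smul, ← neg_smul]
  split_ifs
  · rw [← Finset.sum_neg_distrib]
  · simp

lemma totalForm_eq_sum (x y : M) (s : V → M) (p : ℤ × ℤ) :
    D.totalForm k x y s p = ∑ T : GridTerm V, D.coef p T • ((T.vecs x y s).map ε).prod := by
  have hE : ∀ (c : V → V → ℤ × ℤ → ℤ) (a : Λ), edgeForm k c s p * a =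
      ∑ u, ∑ v, (if u < v then c u v p else 0) • (ε (s u) * (ε (s v) * a)) := fun c a => by
    rw [edgeForm, Finset.sum_mul]
    refine Finset.sum_congr rfl fun u _ => ?_
    rw [Finset.sum_mul]
    refine Finset.sum_congr rfl fun v _ => ?_
    split_ifs <;> simp [mul_assoc]
  simp only [totalForm, Pi.add_apply, windForm_eq_sum, Fintype.sum_sum_type, Fintype.sum_prod_type,
    Fintype.sum_bool, coef, GridTerm.vecs, vertexForm, Finset.sum_mul, hE]
  simp only [if_true, Bool.false_eq_true, if_false, List.map_cons, List.map_nil, List.prod_cons,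
    List.prod_nil, mul_one, smul_mul_assoc]
  abel

end GridDrawing

lemma map_list_prod_sum_eq {I T A B : Type*} [Ring A] [AddCommMonoid B] [Fintype T]
    [Nonempty T] [DecidableEq I] {l : List I} (hl : l.Nodup) (g g' : I → T → A) (φ φ' : A →+ B)
    (h : ∀ S : I → T, φ (l.map fun i => g i (S i)).prod = φ' (l.map fun i => g' i (S i)).prod) :
    φ (l.map fun i => ∑ a, g i a).prod = φ' (l.map fun i => ∑ a, g' i a).prod := by
  induction l generalizing φ φ' with
  | nil => exact h fun _ => Classical.arbitrary T
  | cons i l ih =>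
    rw [List.nodup_cons] at hl
    simp only [List.map_cons, List.prod_cons, Finset.sum_mul, map_sum]
    refine Finset.sum_congr rfl fun a _ => ?_
    refine ih hl.2 (φ.comp (AddMonoidHom.mulLeft (g i a)))
      (φ'.comp (AddMonoidHom.mulLeft (g' i a))) fun S => ?_
    have := h (Function.update S i a)
    simp only [List.map_cons, List.prod_cons, Function.update_self] at this
    have e : ∀ f : I → T → A, (l.map fun j => f j (Function.update S i a j)) =
        l.map fun j => f j (S j) := fun f =>
      List.map_congr_left fun j hj => by
        rw [Function.update_of_ne (ne_of_mem_of_not_mem hj hl.1)]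
    rw [e, e] at this
    exact this

lemma pairwise_of_prod_ne_zero {L : List M} (h : (L.map ε).prod ≠ 0) :
    L.Pairwise fun a b => ε a * ε b ≠ 0 := by
  induction L with
  | nil => simp
  | cons a L ih =>
    rw [List.map_cons, List.prod_cons] at h
    refine List.pairwise_cons.mpr ⟨fun b hb hab => h ?_, ih (right_ne_zero_of_mul h)⟩
    obtain ⟨L₁, L₂, rfl⟩ := List.append_of_mem hb
    rw [List.map_append, List.map_cons, List.prod_append, List.prod_cons, ← mul_assoc,
      (isOddElt_ι a).1, mul_assoc, ← mul_assoc (ε a), hab, zero_mul, mul_zero]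

end Expansion

section Colorful

variable {q : ℕ} {k V : Type*} [CommRing k] [Fintype V] [LinearOrder V] {κ : ℤ → V} {R : ℤ}

local notation "Λ" => ExteriorAlgebra k (GenIdx q → k)
local notation "ε" => ExteriorAlgebra.ι k

/-- A partition into rainbow parts indexed by `ZMod q`, with the uncoloured vertices in part `0`. -/
structure IsColorful (col : V → Option (Fin 3)) (P : ZMod q → Finset V) : Prop where
  disjoint : ∀ i j, i ≠ j → Disjoint (P i) (P j)
  cover : ∀ v, ∃ i, v ∈ P i
  rainbow : ∀ i, ∀ u ∈ P i, ∀ v ∈ P i, u ≠ v → col u ≠ col v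
  special : ∀ i, ∀ v ∈ P i, col v = none → i = 0

/-- The factors of the monomial of a term placed in part `i`. -/
def GridTerm.tokens (i : ZMod q) : GridTerm V → List (Bool ⊕ (V × ZMod q))
  | Sum.inl v => [Sum.inr (v, i), Sum.inl false, Sum.inl true]
  | Sum.inr (Sum.inl (b, u, v)) => [Sum.inr (u, i), Sum.inr (v, i), Sum.inl b]
  | Sum.inr (Sum.inr (u, v, w)) => [Sum.inr (u, i), Sum.inr (v, i), Sum.inr (w, i)]

/-- The vector of a factor. -/
def tokenVec (col : V → Option (Fin 3)) (t : V → k) : Bool ⊕ (V × ZMod q) → GenIdx q → k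
  | Sum.inl b => if b then gen k (Sum.inl 1) else gen k (Sum.inl 0)
  | Sum.inr (v, i) => t v • colorVec k col v i

lemma GridTerm.vecs_eq_map_tokens (col : V → Option (Fin 3)) (t : V → k) (i : ZMod q)
    (T : GridTerm V) :
    T.vecs (gen k (Sum.inl 0)) (gen k (Sum.inl 1)) (fun v => t v • colorVec k col v i) =
      (T.tokens i).map (tokenVec col t) := by
  rcases T with v | ⟨b, u, v⟩ | ⟨u, v, w⟩ <;> simp [GridTerm.vecs, GridTerm.tokens, tokenVec]

lemma GridTerm.length_tokens (i : ZMod q) (T : GridTerm V) : (T.tokens i).length = 3 := by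
  rcases T with v | ⟨b, u, v⟩ | ⟨u, v, w⟩ <;> rfl

lemma GridTerm.mem_tokens {i j : ZMod q} {T : GridTerm V} {v : V} :
    Sum.inr (v, j) ∈ T.tokens i ↔ v ∈ T.verts ∧ j = i := by
  rcases T with w | ⟨b, u, w⟩ | ⟨u, w, w'⟩ <;> simp [GridTerm.verts, GridTerm.tokens] <;> tauto

/-- The monomial of a term in part `i`. -/
def GridTerm.mono (col : V → Option (Fin 3)) (t : V → k) (i : ZMod q) (T : GridTerm V) :
    ExteriorAlgebra k (GenIdx q → k) :=
  ((T.vecs (gen k (Sum.inl 0)) (gen k (Sum.inl 1)) fun v => t v • colorVec k col v i).map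
    (ExteriorAlgebra.ι k)).prod

lemma isColorful_of_prod_ne_zero [NeZero q] {col : V → Option (Fin 3)} {t : V → k}
    (ht : ∀ v, t v * t v = 0) (hcard : Fintype.card V + 2 = 3 * q) {S : ZMod q → GridTerm V}
    (h : ((residues q).map fun i => (S i).mono col t i).prod ≠ 0) :
    IsColorful col fun i => (S i).verts := by
  set L : List (Bool ⊕ (V × ZMod q)) := (residues q).flatMap fun i => (S i).tokens i with hL
  have hprod : ((residues q).map fun i => (S i).mono col t i).prod =
      ((L.map (tokenVec col t)).map ε).prod := by
    rw [hL]
    induction residues q with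
    | nil => simp
    | cons i l ih =>
      rw [List.map_cons, List.prod_cons, ih, List.flatMap_cons, List.map_append, List.map_append,
        List.prod_append, ← GridTerm.vecs_eq_map_tokens, GridTerm.mono]
  rw [hprod] at h
  have hpair := pairwise_of_prod_ne_zero h
  rw [List.pairwise_map] at hpair
  have hnodup : L.Nodup := hpair.imp fun {a b} hab heq => hab (by
    rw [heq, ExteriorAlgebra.ι_sq_zero])
  have hforall : ∀ a ∈ L, ∀ b ∈ L, a ≠ b → ε (tokenVec col t a) * ε (tokenVec col t b) ≠ 0 :=
    fun a ha b hb hab => by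
      have : Std.Symm fun a b => ε (tokenVec (q := q) col t a) * ε (tokenVec col t b) ≠ 0 :=
        ⟨fun a b hab hba => hab (by
          rw [(isOddElt_ι _).anticomm (isOddElt_ι _), hba, neg_zero])⟩
      exact hpair.forall ha hb hab
  have hmem : ∀ v i, Sum.inr (v, i) ∈ L ↔ v ∈ (S i).verts := fun v i => by
    simp [hL, List.mem_flatMap, GridTerm.mem_tokens, mem_residues]
  have hne : ∀ a ∈ L, tokenVec col t a ≠ 0 := fun a ha h0 => h (List.prod_eq_zero (by
    rw [List.map_map, List.mem_map]
    exact ⟨a, ha, by simp [h0]⟩))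
  have huniq : ∀ v i j, Sum.inr (v, i) ∈ L → Sum.inr (v, j) ∈ L → i = j := by
    intro v i j hi hj
    by_contra hij
    refine hforall _ hi _ hj (by simpa using hij) ?_
    simp only [tokenVec, map_smul, smul_mul_smul_comm, ht, zero_smul]
  have hlen : L.length = 3 * q := by
    rw [hL, List.length_flatMap]
    simp [GridTerm.length_tokens, residues, mul_comm, Function.comp_def]
  refine ⟨fun i j hij => ?_, fun v => ?_, fun i u hu v hv huv hc => ?_, fun i v hv hc => ?_⟩
  · rw [Finset.disjoint_left]
    exact fun v hi hj => hij (huniq v i j ((hmem _ _).mpr hi) ((hmem _ _).mpr hj))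
  · have himage : L.toFinset.image (Sum.map id Prod.fst) = (Finset.univ : Finset (Bool ⊕ V)) := by
      rw [← Finset.card_eq_iff_eq_univ, Finset.card_image_of_injOn, List.toFinset_card_of_nodup
        hnodup, hlen, Fintype.card_sum, Fintype.card_bool, add_comm, hcard]
      rintro (a | ⟨u, i⟩) ha (b | ⟨v, j⟩) hb hab
      · simpa using hab
      · simp at hab
      · simp at hab
      · obtain rfl : u = v := by simpa using hab
        rw [Finset.mem_coe, List.mem_toFinset] at ha hb
        rw [huniq u i j ha hb]
    have := Finset.mem_univ (Sum.inr v : Bool ⊕ V)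
    rw [← himage, Finset.mem_image] at this
    obtain ⟨b | ⟨u, i⟩, hb, hbv⟩ := this
    · simp at hbv
    · obtain rfl : u = v := by simpa using hbv
      exact ⟨i, (hmem _ _).mp (List.mem_toFinset.mp hb)⟩
  · refine hforall _ ((hmem _ _).mpr hu) _ ((hmem _ _).mpr hv) (by simpa using huv) ?_
    have : (colorVec k col u i) = colorVec k col v i := by simp only [colorVec, hc]
    simp only [tokenVec, map_smul, smul_mul_smul_comm, this, ExteriorAlgebra.ι_sq_zero, smul_zero]
  · by_contra hi
    exact hne _ ((hmem _ _).mpr hv) (by simp [tokenVec, colorVec, hc, hi])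

lemma GridDrawing.prodField_colorForm (D : GridDrawing V κ R) (col : V → Option (Fin 3))
    (t : V → k) (l : List (ZMod q)) (p : ℤ × ℤ) :
    prodField (D.colorForm (q := q) col t) l p =
      (l.map fun i => ∑ T : GridTerm V, D.coef p T • T.mono col t i).prod := by
  rw [prodField, Pi.list_prod_apply, List.map_map]
  congr 1
  exact List.map_congr_left fun i _ => D.totalForm_eq_sum _ _ _ _

lemma prod_map_zsmul {I : Type*} (l : List I) (c : I → ℤ) (g : I → Λ) :
    (l.map fun i => c i • g i).prod = (l.map c).prod • (l.map g).prod := by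
  induction l with
  | nil => simp
  | cons i l ih => simp only [List.map_cons, List.prod_cons, ih, smul_mul_smul_comm]

/-- A drawing of nonzero degree has a colourful family of terms with a common grid point. -/
theorem GridDrawing.exists_isColorful [NeZero q] [Nonempty V] (D : GridDrawing V κ R)
    {col : V → Option (Fin 3)} {t : V → k} (ht : ∀ v, t v * t v = 0)
    (hcard : Fintype.card V + 2 = 3 * q) {c : k →+ ZMod q} (h : D.degree q col t c ≠ 0) :
    ∃ (p : ℤ × ℤ) (S : ZMod q → GridTerm V),
      IsColorful col (fun i => (S i).verts) ∧ ∀ i, D.coef p (S i) ≠ 0 := by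
  by_contra! hcon
  refine h ?_
  have hp : ∀ p, prodField (D.colorForm (q := q) col t) (residues q) p = 0 := by
    intro p
    rw [prodField_colorForm]
    refine map_list_prod_sum_eq (nodup_residues q) _ (fun _ _ => 0) (AddMonoidHom.id _) 0
      fun S => ?_
    simp only [AddMonoidHom.id_apply, AddMonoidHom.zero_apply]
    rw [prod_map_zsmul]
    by_contra hne
    obtain ⟨i, hi⟩ := hcon p S (isColorful_of_prod_ne_zero ht hcard (right_ne_zero_of_smul hne))
    exact hne (by
      rw [List.prod_eq_zero (List.mem_map.mpr ⟨i, mem_residues i, hi⟩), zero_smul])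
  have : gridSum R (prodField (D.colorForm (q := q) col t) (residues q)) = 0 := by
    simp [gridSum, hp]
  rw [degree, this]
  simp

end Colorful

/-! ### Independence of the drawing -/

section Mix

variable {V : Type*} [Fintype V] [LinearOrder V] {κ : ℤ → V} {R : ℤ}

/-- The drawing with prescribed vertices whose edges are L-shaped. -/
def lDrawing (pt : V → ℤ × ℤ) (hpt : ∀ v, κ (pt v).1 = v ∧ κ (pt v).2 = v)
    (hbox : ∀ v, InBox R (pt v)) : GridDrawing V κ R where
  pt := pt
  α u v := lpathα (pt u) (pt v)
  β u v := lpathβ (pt u) (pt v)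
  closed u v p := lpath_closed _ _ _
  label_pt := hpt
  label_α u v p h := Or.inr (by rw [lpathα_label h, (hpt v).1])
  label_dα u v p h := by
    rcases gridDY_lpathα_label h with h | h
    · exact Or.inl (by rw [h, (hpt u).2])
    · exact Or.inr (by rw [h, (hpt v).2])
  label_β u v p h := Or.inl (by rw [lpathβ_label h, (hpt u).2])
  label_dβ u v p h := by
    rcases gridDX_lpathβ_label h with h | h
    · exact Or.inl (by rw [h, (hpt u).1])
    · exact Or.inr (by rw [h, (hpt v).1])
  supp_pt v := boxSupp_gridDelta.mpr (hbox v)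
  supp_α u v := boxSupp_lpathα (hbox u) (hbox v)
  supp_β u v := boxSupp_lpathβ (hbox u) (hbox v)

namespace GridDrawing

open Classical in
/-- The drawing agreeing with `D₀` on `s`, with `D₁` off `s`, and L-shaped in between. -/
def mix (D₀ D₁ : GridDrawing V κ R) (s : Set V) : GridDrawing V κ R :=
  let L : GridDrawing V κ R := lDrawing (fun v => if v ∈ s then D₀.pt v else D₁.pt v)
    (fun v => by split_ifs; exacts [D₀.label_pt v, D₁.label_pt v])
    (fun v => by split_ifs; exacts [D₀.inBox_pt v, D₁.inBox_pt v])
  let sel : V → V → GridDrawing V κ R := fun u v =>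
    if u ∈ s ∧ v ∈ s then D₀ else if u ∉ s ∧ v ∉ s then D₁ else L
  have hsel : ∀ u v, (sel u v).pt u = L.pt u ∧ (sel u v).pt v = L.pt v := fun u v => by
    by_cases hu : u ∈ s <;> by_cases hv : v ∈ s <;> simp [sel, hu, hv, L, lDrawing]
  { pt := L.pt
    α := fun u v => (sel u v).α u v
    β := fun u v => (sel u v).β u v
    closed := fun u v p => by rw [(sel u v).closed, (hsel u v).1, (hsel u v).2]
    label_pt := L.label_pt
    label_α := fun u v => (sel u v).label_α u v
    label_dα := fun u v => (sel u v).label_dα u v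
    label_β := fun u v => (sel u v).label_β u v
    label_dβ := fun u v => (sel u v).label_dβ u v
    supp_pt := L.supp_pt
    supp_α := fun u v => (sel u v).supp_α u v
    supp_β := fun u v => (sel u v).supp_β u v }

lemma mix_agreeOff (D₀ D₁ : GridDrawing V κ R) (s : Set V) (w : V) :
    AgreeOff (mix D₀ D₁ s) (mix D₀ D₁ (insert w s)) w := by
  refine ⟨fun v hv => ?_, fun u v hu hv => ?_, fun u v hu hv => ?_⟩
  · by_cases h1 : v ∈ s <;> simp [mix, lDrawing, hv, h1]
  · by_cases h1 : v ∈ s <;> by_cases h2 : u ∈ s <;> simp [mix, lDrawing, hv, hu, h1, h2]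
  · by_cases h1 : v ∈ s <;> by_cases h2 : u ∈ s <;> simp [mix, lDrawing, hv, hu, h1, h2]

lemma mix_empty_agreeOff (D₀ D₁ : GridDrawing V κ R) (w : V) :
    AgreeOff D₁ (mix D₀ D₁ ∅) w :=
  ⟨fun v hv => by simp [mix, lDrawing], fun u v hu hv => by simp [mix],
    fun u v hu hv => by simp [mix]⟩

lemma mix_univ_agreeOff (D₀ D₁ : GridDrawing V κ R) (w : V) :
    AgreeOff D₀ (mix D₀ D₁ Set.univ) w :=
  ⟨fun v hv => by simp [mix, lDrawing], fun u v hu hv => by simp [mix],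
    fun u v hu hv => by simp [mix]⟩

/-- The degree does not depend on the drawing. -/
theorem degree_eq_degree [Nonempty V] {k : Type*} [CommRing k] {q : ℕ}
    (hq : q.Prime) [NeZero q] (D₀ D₁ : GridDrawing V κ R) (col : V → Option (Fin 3)) {t : V → k}
    (ht : ∀ v, t v * t v = 0) (c : k →+ ZMod q) :
    D₀.degree q col t c = D₁.degree q col t c := by
  have key : ∀ s : Finset V, (mix D₀ D₁ s).degree q col t c = D₁.degree q col t c := by
    intro s
    induction s using Finset.induction_on with
    | empty =>
      rw [Finset.coe_empty]
      exact (mix_empty_agreeOff D₀ D₁ (Classical.arbitrary V)).degree_eq hq ht c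
    | insert w s _ ih =>
      rw [Finset.coe_insert, ← ih]
      exact (mix_agreeOff D₀ D₁ s w).degree_eq hq ht c
  have h := key Finset.univ
  rw [Finset.coe_univ, (mix_univ_agreeOff D₀ D₁ (Classical.arbitrary V)).degree_eq hq ht c] at h
  exact h

end GridDrawing

end Mix

/-! ### The degree of a standard drawing -/

section SquareZero

lemma add_pow_succ_of_mul_self_eq_zero {k : Type*} [CommRing k] {a : k} (ha : a * a = 0) (b : k)
    (n : ℕ) : (a + b) ^ (n + 1) = b ^ (n + 1) + (n + 1 : ℕ) * (a * b ^ n) := by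
  induction n with
  | zero => simp; ring
  | succ n ih =>
    rw [pow_succ, ih]
    push_cast
    linear_combination ((n : k) + 1) * b ^ n * ha

lemma sum_pow_card_of_mul_self_eq_zero {k V : Type*} [CommRing k] [DecidableEq V] {t : V → k}
    (ht : ∀ v, t v * t v = 0) (s : Finset V) :
    (∑ v ∈ s, t v) ^ s.card = (s.card.factorial : k) * ∏ v ∈ s, t v := by
  induction s using Finset.induction_on with
  | empty => simp
  | insert a s ha ih =>
    have h0 : (∑ v ∈ s, t v) * ∏ v ∈ s, t v = 0 := by
      rw [Finset.sum_mul]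
      refine Finset.sum_eq_zero fun v hv => ?_
      rw [← Finset.mul_prod_erase s t hv, ← mul_assoc, ht, zero_mul]
    rw [Finset.sum_insert ha, Finset.prod_insert ha, Finset.card_insert_of_notMem ha,
      add_pow_succ_of_mul_self_eq_zero (ht a), pow_succ, ih, Nat.factorial_succ]
    push_cast
    linear_combination (s.card.factorial : k) * h0

/-- There is a universal ring generated by square-zero elements. -/
lemma exists_squareZero_ring (q : ℕ) (V : Type) [Fintype V] :
    ∃ (k : Type) (_ : CommRing k) (t : V → k) (c : k →+ ZMod q),
      (∀ v, t v * t v = 0) ∧ c (∏ v, t v) = 1 := by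
  classical
  set A := MvPolynomial V (ZMod q)
  set I : Ideal A := Ideal.span (Set.range fun v : V => (MvPolynomial.X v * MvPolynomial.X v : A))
  set e : V →₀ ℕ := ∑ v, Finsupp.single v 1 with he
  have hev : ∀ v, e v = 1 := fun v => by
    rw [he, Finsupp.finsetSum_apply]
    simp [Finsupp.single_apply]
  have hI : ∀ a ∈ I, MvPolynomial.coeff e a = 0 := by
    intro a ha
    suffices h : ∀ b : A, MvPolynomial.coeff e (b * a) = 0 by simpa using h 1
    induction ha using Submodule.span_induction with
    | mem a ha =>
      obtain ⟨v, rfl⟩ := ha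
      intro b
      have h0 : (e - Finsupp.single v 1 : V →₀ ℕ) v = 0 := by simp [hev]
      rw [← mul_assoc, MvPolynomial.coeff_mul_X', MvPolynomial.coeff_mul_X']
      split_ifs with h1 h2
      · exact absurd h0 (Finsupp.mem_support_iff.mp h2)
      · rfl
      · rfl
    | zero => simp
    | add a b _ _ ha hb => intro c; rw [mul_add, MvPolynomial.coeff_add, ha, hb, add_zero]
    | smul r a _ ha => intro c; rw [smul_eq_mul, ← mul_assoc]; exact ha _
  have hout : ∀ a : A, MvPolynomial.coeff e (Ideal.Quotient.mk I a).out =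
      MvPolynomial.coeff e a := fun a => by
    rw [← sub_eq_zero, ← MvPolynomial.coeff_sub]
    exact hI _ (Ideal.Quotient.eq.mp (Quotient.out_eq' _))
  refine ⟨A ⧸ I, inferInstance, fun v => Ideal.Quotient.mk I (MvPolynomial.X v),
    { toFun := fun x => MvPolynomial.coeff e x.out
      map_zero' := ?_
      map_add' := ?_ }, fun v => ?_, ?_⟩
  · rw [← map_zero (Ideal.Quotient.mk I), hout, MvPolynomial.coeff_zero]
  · intro x y
    obtain ⟨a, rfl⟩ := Ideal.Quotient.mk_surjective x
    obtain ⟨b, rfl⟩ := Ideal.Quotient.mk_surjective y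
    rw [← map_add, hout, hout, hout, MvPolynomial.coeff_add]
  · rw [← map_mul]
    exact Ideal.Quotient.eq_zero_iff_mem.mpr (Ideal.subset_span ⟨v, rfl⟩)
  · rw [← map_prod]
    change MvPolynomial.coeff e (Ideal.Quotient.mk I _).out = 1
    rw [hout]
    have : ∏ v : V, (MvPolynomial.X v : A) = MvPolynomial.monomial e 1 := by
      rw [he, MvPolynomial.monomial_sum_one]
      rfl
    rw [this, MvPolynomial.coeff_monomial, if_pos rfl]

end SquareZero

section TopForm

variable {q : ℕ} {k : Type*} [CommRing k]

local notation "ε" => ExteriorAlgebra.ι k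

lemma topForm_prod_gen [NeZero q] {L : List (GenIdx q)} (hL : L.Nodup)
    (hlen : L.length = Fintype.card (GenIdx q)) :
    ∃ s : ℤˣ, topForm k q (L.map fun j => ε (gen k j)).prod = ((s : ℤ) : k) := by
  obtain ⟨v, rfl⟩ : ∃ v : Fin (Fintype.card (GenIdx q)) → GenIdx q, L = List.ofFn v :=
    ⟨fun i => L.get (Fin.cast hlen.symm i), by
      rw [List.ofFn_congr hlen.symm]; simp⟩
  have hv : Function.Injective (v ∘ Fintype.equivFin (GenIdx q)) :=
    (List.nodup_ofFn.mp hL).comp (Fintype.equivFin _).injective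
  refine ⟨Equiv.Perm.sign (Equiv.ofBijective _ (Finite.injective_iff_bijective.mp hv)), ?_⟩
  rw [List.map_ofFn]
  have := ExteriorAlgebra.ιMulti_apply (R := k) fun i => gen k (v i)
  rw [Function.comp_def, ← this, topForm, ExteriorAlgebra.liftAlternating_apply_ιMulti,
    Pi.single_eq_same, detAlt, AlternatingMap.domDomCongr_apply]
  have h2 := (Matrix.detRowAlternating (n := GenIdx q) (R := k)).map_perm (fun j => gen k j)
    (Equiv.ofBijective _ (Finite.injective_iff_bijective.mp hv))
  refine h2.trans ?_
  have h1 : Matrix.detRowAlternating (n := GenIdx q) (R := k) (fun j => gen k j) = 1 := by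
    have : (fun j => gen k j) = (1 : Matrix (GenIdx q) (GenIdx q) k) := by
      ext i j; simp [gen, Matrix.one_apply, Pi.single_apply, eq_comm]
    rw [this]; exact Matrix.det_one
  rw [h1, Units.smul_def, zsmul_eq_mul, mul_one]

/-- The product of the three generators of part `i`. -/
def partProd (k : Type*) [CommRing k] (i : ZMod q) : ExteriorAlgebra k (GenIdx q → k) :=
  ExteriorAlgebra.ι k (gen k (Sum.inr (0, i))) *
    (ExteriorAlgebra.ι k (gen k (Sum.inr (1, i))) * ExteriorAlgebra.ι k (gen k (Sum.inr (2, i))))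

lemma topForm_colorProd_mul [NeZero q] {l : List (ZMod q)} (hl : residues q = 0 :: l) :
    ∃ s : ℤˣ, topForm k q (colorProd k q * (ε (gen k (Sum.inl 2)) *
      (ε (gen k (Sum.inl 0)) * ε (gen k (Sum.inl 1))) * (l.map (partProd k)).prod)) =
        ((s : ℤ) : k) := by
  have hnd := nodup_residues q
  rw [hl, List.nodup_cons] at hnd
  set W := ExteriorAlgebra k (GenIdx q → k)
  set E : W := (l.map (partProd k)).prod with hE
  -- a generator of a later part is absorbed by the product
  have hkill : ∀ (c : Fin 3) (i : ZMod q), i ∈ l → ∀ Y : W, ε (gen k (Sum.inr (c, i))) * (Y * E) = 0 := by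
    intro c i hi Y
    have hpart : ∀ (c : Fin 3) (i : ZMod q), ε (gen k (Sum.inr (c, i))) * partProd k i = 0 := by
      intro c i
      have h : ∀ a b : W, ε (gen k (Sum.inr (c, i))) * (a * (ε (gen k (Sum.inr (c, i))) * b)) = 0 :=
        fun a b => by
          rw [← mul_assoc, (isOddElt_ι _).1, mul_assoc, GridDrawing.ι_mul_ι_mul, mul_zero]
      unfold partProd
      fin_cases c <;> simp only [Fin.zero_eta, Fin.mk_one, Fin.reduceFinMk] at h ⊢
      · exact GridDrawing.ι_mul_ι_mul _ _
      · exact h _ _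
      · have := h (ε (gen k (Sum.inr (0, i))) * ε (gen k (Sum.inr (1, i)))) 1
        rwa [mul_one, mul_assoc] at this
    obtain ⟨l₁, l₂, rfl⟩ := List.append_of_mem hi
    rw [hE, List.map_append, List.prod_append, List.map_cons, List.prod_cons, ← mul_assoc Y,
      ← mul_assoc, (isOddElt_ι _).1, mul_assoc, ← mul_assoc (ε _) (partProd k i),
      hpart, zero_mul, mul_zero]
  have hsum : ∀ (c : Fin 3) (Y : W), ε (colorSum k q c) * (Y * E) =
      ε (gen k (Sum.inr (c, 0))) * (Y * E) := by
    intro c Y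
    rw [colorSum, map_sum, Finset.sum_mul, Finset.sum_eq_single 0]
    · intro i _ hi
      refine hkill c i ?_ Y
      have := mem_residues i
      rw [hl, List.mem_cons] at this
      exact this.resolve_left hi
    · simp
  set L : List (GenIdx q) := [Sum.inr (0, 0), Sum.inr (1, 0), Sum.inr (2, 0), Sum.inl 2, Sum.inl 0,
    Sum.inl 1] ++ l.flatMap fun i => [Sum.inr (0, i), Sum.inr (1, i), Sum.inr (2, i)] with hLdef
  have hprod : (L.map fun j => ε (gen k j)).prod = colorProd k q * (ε (gen k (Sum.inl 2)) *
      (ε (gen k (Sum.inl 0)) * ε (gen k (Sum.inl 1))) * (l.map (partProd k)).prod) := by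
    have e1 : ((l.flatMap fun i => ([Sum.inr (0, i), Sum.inr (1, i), Sum.inr (2, i)] :
        List (GenIdx q))).map fun j => ε (gen k j)).prod = E := by
      rw [hE, List.map_flatMap]
      clear_value E
      clear hl hnd hkill hsum hLdef L hE E
      induction l with
      | nil => simp
      | cons i l ih =>
        rw [List.flatMap_cons, List.prod_append, ih]
        simp [partProd, mul_assoc]
    rw [hLdef, List.map_append, List.prod_append, e1, colorProd, mul_assoc, mul_assoc, ← hE, hsum,
      ← mul_assoc (ε _) _ E, hsum, ← mul_assoc (ε _) _ E, hsum]
    simp [mul_assoc]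
  have hnodup : L.Nodup := by
    rw [hLdef, List.nodup_append, List.nodup_flatMap]
    refine ⟨by simp, ⟨fun i _ => by simp, ?_⟩, ?_⟩
    · refine hnd.2.imp fun {i j} hij => ?_
      simp [Function.onFun, hij.symm]
    · intro a ha b hb hab
      subst hab
      rw [List.mem_flatMap] at hb
      obtain ⟨i, hi, hb⟩ := hb
      have hi0 : i ≠ 0 := fun h => hnd.1 (h ▸ hi)
      simp only [List.mem_cons, List.not_mem_nil, or_false] at ha hb
      rcases hb with rfl | rfl | rfl <;> simp [hi0] at ha
  have hlen : L.length = Fintype.card (GenIdx q) := by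
    have h1 := congrArg List.length hl
    simp only [residues, List.length_map, List.length_range, List.length_cons] at h1
    simp only [hLdef, List.length_append, List.length_flatMap, List.length_cons, List.length_nil,
      List.map_const', List.sum_replicate, Fintype.card_sum, Fintype.card_prod, Fintype.card_fin,
      ZMod.card]
    simp
    omega
  rw [← hprod]
  exact topForm_prod_gen hnodup hlen

end TopForm

/-! ### The standard drawing -/

section BaseDrawing

variable {m : ℕ} {R : ℤ}

/-- The colouring of the standard drawing: `m` vertices of each of three colours and a special
vertex. -/
def baseCol (m : ℕ) (v : Fin (3 * m + 1)) : Option (Fin 3) :=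
  if v.val < m then some 0 else if v.val < 2 * m then some 1 else if v.val = 2 * m then none
  else some 2

/-- The height of a vertex of the standard drawing. -/
def baseHeight (m : ℕ) (v : Fin (3 * m + 1)) : ℤ :=
  if v.val < m then v else if v.val < 2 * m then v + 2 * (3 * m + 1)
  else if v.val = 2 * m then v + (3 * m + 1) else v + 3 * (3 * m + 1)

/-- The position of a vertex of the standard drawing. -/
def basePt (m : ℕ) (v : Fin (3 * m + 1)) : ℤ × ℤ := ((v : ℤ), baseHeight m v)

/-- The label of an integer. -/
def baseLabel (n : ℕ) (z : ℤ) : Fin (n + 1) :=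
  ⟨(z % ((n : ℤ) + 1)).toNat, by
    have h1 := Int.emod_nonneg z (show ((n : ℤ) + 1) ≠ 0 by omega)
    have h2 := Int.emod_lt_of_pos z (show 0 < ((n : ℤ) + 1) by omega)
    omega⟩

lemma baseLabel_add_mul {n : ℕ} (v : Fin (n + 1)) (z : ℤ) :
    baseLabel n ((v : ℤ) + ((n : ℤ) + 1) * z) = v := by
  ext
  have := v.2
  simp only [baseLabel, Int.add_mul_emod_self_left]
  rw [Int.emod_eq_of_lt (by omega) (by omega)]
  simp

lemma baseLabel_basePt (v : Fin (3 * m + 1)) :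
    baseLabel (3 * m) (basePt m v).1 = v ∧ baseLabel (3 * m) (basePt m v).2 = v := by
  refine ⟨by simpa [basePt] using baseLabel_add_mul v 0, ?_⟩
  obtain ⟨z, hz⟩ : ∃ z : ℤ, baseHeight m v = (v : ℤ) + (((3 * m : ℕ) : ℤ) + 1) * z := by
    unfold baseHeight
    push_cast
    split_ifs
    exacts [⟨0, by ring⟩, ⟨2, by ring⟩, ⟨1, by ring⟩, ⟨3, by ring⟩]
  simp only [basePt, hz, baseLabel_add_mul]

/-- The facts about the height of a vertex used for arithmetic. -/
lemma baseHeight_spec (v : Fin (3 * m + 1)) :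
    (v.val < m → baseHeight m v = v) ∧
    (m ≤ v.val → v.val < 2 * m → baseHeight m v = v + 2 * (3 * m + 1)) ∧
    (v.val = 2 * m → baseHeight m v = v + (3 * m + 1)) ∧
    (2 * m < v.val → baseHeight m v = v + 3 * (3 * m + 1)) := by
  unfold baseHeight
  refine ⟨fun h => ?_, fun h h' => ?_, fun h => ?_, fun h => ?_⟩ <;> split_ifs <;> omega

lemma inBox_basePt (hR : 12 * (m : ℤ) + 4 ≤ R) (v : Fin (3 * m + 1)) : InBox R (basePt m v) := by
  have := v.2
  unfold InBox basePt baseHeight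
  split_ifs <;> dsimp only <;> omega

/-- The standard drawing. -/
def baseDrawing (m : ℕ) {R : ℤ} (hR : 12 * (m : ℤ) + 4 ≤ R) :
    GridDrawing (Fin (3 * m + 1)) (baseLabel (3 * m)) R :=
  lDrawing (basePt m) baseLabel_basePt (inBox_basePt hR)

lemma sum_Ico_ite_eq {a b x : ℤ} (hx : a ≤ x) (y : ℤ) :
    ∑ i ∈ Finset.Ico a b, (if i = x then y else 0) = if x < b then y else 0 := by
  rw [Finset.sum_ite_eq' (Finset.Ico a b) x fun _ => y]
  simp [hx]

lemma triWind_lDrawing {V : Type*} [Fintype V] [LinearOrder V] {κ : ℤ → V} {pt : V → ℤ × ℤ}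
    (hpt : ∀ v, κ (pt v).1 = v ∧ κ (pt v).2 = v) (hbox : ∀ v, InBox R (pt v)) (u v w : V)
    (p : ℤ × ℤ) : (lDrawing pt hpt hbox).triWind u v w p =
      ((if (pt v).1 ≤ p.1 then 1 else 0) - (if (pt w).1 ≤ p.1 then 1 else 0)) *
        ((if (pt v).2 ≤ p.2 then 1 else 0) - (if (pt u).2 ≤ p.2 then 1 else 0)) := by
  set z : ℤ := (if (pt v).2 ≤ p.2 then 1 else 0) - (if (pt u).2 ≤ p.2 then 1 else 0) with hz
  have : (lDrawing pt hpt hbox).triWind u v w p = ∑ i ∈ Finset.Ico (-R) (p.1 + 1),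
      ((if i = (pt v).1 then z else 0) - (if i = (pt w).1 then z else 0)) := by
    rw [GridDrawing.triWind, gridPre]
    refine Finset.sum_congr rfl fun i _ => ?_
    simp only [lDrawing, lpathα, hz]
    split_ifs <;> ring
  rw [this, Finset.sum_sub_distrib, sum_Ico_ite_eq (hbox v).1, sum_Ico_ite_eq (hbox w).1]
  simp only [Int.lt_add_one_iff]
  split_ifs <;> ring

lemma coef_baseDrawing_edge {hR : 12 * (m : ℤ) + 4 ≤ R} {p : ℤ × ℤ} {b : Bool}
    {u v : Fin (3 * m + 1)} (h : (baseDrawing m hR).coef p (Sum.inr (Sum.inl (b, u, v))) ≠ 0) :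
    u.val < v.val ∧
      ((p.1 = v ∧ (baseHeight m u ≤ p.2 ∧ p.2 < baseHeight m v ∨
        baseHeight m v ≤ p.2 ∧ p.2 < baseHeight m u)) ∨
      (p.2 = baseHeight m u ∧ (u : ℤ) ≤ p.1 ∧ p.1 < v)) := by
  simp only [GridDrawing.coef, baseDrawing, lDrawing, lpathα, lpathβ, basePt] at h
  split_ifs at h <;> simp_all <;> omega

lemma coef_baseDrawing_triangle {hR : 12 * (m : ℤ) + 4 ≤ R} {p : ℤ × ℤ}
    {u v w : Fin (3 * m + 1)}
    (h : (baseDrawing m hR).coef p (Sum.inr (Sum.inr (u, v, w))) ≠ 0) :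
    u.val < v.val ∧ v.val < w.val ∧ (v : ℤ) ≤ p.1 ∧ p.1 < w ∧
      (baseHeight m u ≤ p.2 ∧ p.2 < baseHeight m v ∨
        baseHeight m v ≤ p.2 ∧ p.2 < baseHeight m u) := by
  simp only [GridDrawing.coef, baseDrawing, triWind_lDrawing, basePt] at h
  split_ifs at h <;> simp_all <;> omega

/-- Where the terms of the standard drawing avoiding certain colours can be supported. -/
lemma coef_baseDrawing_region {hR : 12 * (m : ℤ) + 4 ≤ R} {p : ℤ × ℤ}
    {T : GridTerm (Fin (3 * m + 1))} (h : (baseDrawing m hR).coef p T ≠ 0) :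
    ((∀ v ∈ T.verts, v.val < 2 * m) → p.1 < 2 * m) ∧
    ((∃ v ∈ T.verts, v.val = 2 * m) → (∃ v ∈ T.verts, 2 * m < v.val) → 2 * (m : ℤ) ≤ p.1) ∧
    ((∀ v ∈ T.verts, v.val < m ∨ v.val = 2 * m) → p.2 < 2 * (3 * m + 1)) ∧
    ((∀ v ∈ T.verts, m ≤ v.val ∧ v.val ≠ 2 * m) → 2 * (3 * (m : ℤ) + 1) ≤ p.2) ∧
    ((∀ v ∈ T.verts, m ≤ v.val ∧ v.val ≤ 2 * m) → 3 * (m : ℤ) + 1 ≤ p.2 ∧ p.1 ≤ 2 * m) ∧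
    ((∀ v ∈ T.verts, v.val < m ∨ 2 * m < v.val) → 2 * (m : ℤ) < p.1 ∨ p.2 < m) ∧
    ((∃ v ∈ T.verts, v.val < m) → (∃ v ∈ T.verts, m ≤ v.val ∧ v.val < 2 * m) →
      (∀ v ∈ T.verts, v.val ≤ 2 * m) → p.1 < 2 * m) := by
  rcases T with v | ⟨b, u, v⟩ | ⟨u, v, w⟩
  · have hp : p = basePt m v := by
      by_contra hne
      exact h (by simp [GridDrawing.coef, baseDrawing, lDrawing, gridDelta, hne])
    subst hp
    have := baseHeight_spec v
    have := v.2
    simp only [GridTerm.verts, Finset.mem_singleton, forall_eq, exists_eq_left, basePt]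
    refine ⟨?_, ?_, ?_, ?_, ?_, ?_, ?_⟩ <;> omega
  · have h := coef_baseDrawing_edge h
    have := baseHeight_spec u
    have := baseHeight_spec v
    have := u.2
    have := v.2
    simp only [GridTerm.verts, Finset.mem_insert, Finset.mem_singleton, forall_eq_or_imp, forall_eq,
      exists_eq_or_imp, exists_eq_left]
    refine ⟨?_, ?_, ?_, ?_, ?_, ?_, ?_⟩ <;> omega
  · have h := coef_baseDrawing_triangle h
    have := baseHeight_spec u
    have := baseHeight_spec v
    have := baseHeight_spec w
    have := u.2
    have := v.2
    have := w.2
    simp only [GridTerm.verts, Finset.mem_insert, Finset.mem_singleton, forall_eq_or_imp, forall_eq,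
      exists_eq_or_imp, exists_eq_left]
    refine ⟨?_, ?_, ?_, ?_, ?_, ?_, ?_⟩ <;> omega

end BaseDrawing

section BaseDegree

variable {m : ℕ} {R : ℤ}

lemma baseCol_spec (v : Fin (3 * m + 1)) :
    (baseCol m v = some 0 ↔ v.val < m) ∧ (baseCol m v = some 1 ↔ m ≤ v.val ∧ v.val < 2 * m) ∧
    (baseCol m v = none ↔ v.val = 2 * m) ∧ (baseCol m v = some 2 ↔ 2 * m < v.val) := by
  unfold baseCol
  refine ⟨?_, ?_, ?_, ?_⟩ <;> split_ifs <;> simp <;> omega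

/-- The special vertex. -/
def baseSpecial (m : ℕ) : Fin (3 * m + 1) := ⟨2 * m, by omega⟩

/-- The vertices of a given colour. -/
def baseClass (m : ℕ) (c : Fin 3) : Finset (Fin (3 * m + 1)) :=
  Finset.univ.filter fun v => baseCol m v = some c

lemma card_filter_val {n a b : ℕ} (hb : b ≤ n) :
    (Finset.univ.filter fun v : Fin n => a ≤ v.val ∧ v.val < b).card = b - a := by
  rw [← Nat.card_Ico]
  refine Finset.card_bij (fun v _ => v.val) (fun v hv => ?_) (fun _ _ _ _ h => Fin.ext h)
    fun i hi => ?_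
  · simpa using hv
  · rw [Finset.mem_Ico] at hi
    exact ⟨⟨i, by omega⟩, by simpa using hi, rfl⟩

lemma card_baseClass (m : ℕ) (c : Fin 3) : (baseClass m c).card = m := by
  have key : ∀ a b : ℕ, b ≤ 3 * m + 1 → b - a = m →
      (∀ v : Fin (3 * m + 1), baseCol m v = some c ↔ a ≤ v.val ∧ v.val < b) →
      (baseClass m c).card = m := fun a b hb hab h => by
    rw [baseClass, Finset.filter_congr fun v _ => h v, card_filter_val hb, hab]
  fin_cases c
  · exact key 0 m (by omega) (by omega) fun v => by simp [(baseCol_spec v).1]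
  · exact key m (2 * m) (by omega) (by omega) fun v => by simp [(baseCol_spec v).2.1]
  · refine key (2 * m + 1) (3 * m + 1) (by omega) (by omega) fun v => ?_
    have := v.2
    simp only [Fin.reduceFinMk, (baseCol_spec v).2.2.2]
    omega

lemma IsColorful.exists_missing {q : ℕ} [NeZero q] {V : Type*} [Fintype V] [DecidableEq V]
    {col : V → Option (Fin 3)} {P : ZMod q → Finset V} (h : IsColorful col P) {c : Fin 3}
    (hc : (Finset.univ.filter fun v => col v = some c).card + 1 = q) :
    ∃ i, ∀ j, (∃ v ∈ P j, col v = some c) ↔ j ≠ i := by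
  choose g hg using h.cover
  have hg' : ∀ v j, v ∈ P j → g v = j := fun v j hv => by
    by_contra hne
    exact Finset.disjoint_left.mp (h.disjoint _ _ hne) (hg v) hv
  set s := (Finset.univ.filter fun v => col v = some c).image g with hs
  have hcard : s.card + 1 = q := by
    rw [hs, Finset.card_image_of_injOn, hc]
    intro u hu v hv huv
    by_contra hne
    simp only [Finset.coe_filter, Finset.mem_univ, true_and, Set.mem_ofPred_eq] at hu hv
    refine h.rainbow (g u) u (hg u) v ?_ hne (hu.trans hv.symm)
    have := hg v
    rwa [← huv] at this
  have hcompl : sᶜ.card = 1 := by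
    rw [Finset.card_compl, ZMod.card]
    omega
  obtain ⟨i, hi⟩ := Finset.card_eq_one.mp hcompl
  refine ⟨i, fun j => ?_⟩
  rw [ne_eq, ← Finset.mem_singleton, ← hi, Finset.mem_compl, not_not, hs, Finset.mem_image]
  constructor
  · rintro ⟨v, hv, hcv⟩
    exact ⟨v, by simpa using hcv, hg' v j hv⟩
  · rintro ⟨v, hv, rfl⟩
    exact ⟨v, hg v, by simpa using hv⟩

/-- The terms contributing to the degree of the standard drawing. -/
def IsMainTerm {q : ℕ} (i : ZMod q) (T : GridTerm (Fin (3 * m + 1))) : Prop :=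
  if i = 0 then T = Sum.inl (baseSpecial m) else
    ∃ u v w, T = Sum.inr (Sum.inr (u, v, w)) ∧ baseCol m u = some 0 ∧ baseCol m v = some 1 ∧
      baseCol m w = some 2

lemma isMainTerm_of_isColorful {q : ℕ} [NeZero q] (hq : m + 1 = q) {hR : 12 * (m : ℤ) + 4 ≤ R}
    {p : ℤ × ℤ} {S : ZMod q → GridTerm (Fin (3 * m + 1))}
    (hS : IsColorful (baseCol m) fun i => (S i).verts)
    (hne : ∀ i, (baseDrawing m hR).coef p (S i) ≠ 0) :
    p = basePt m (baseSpecial m) ∧ ∀ i, IsMainTerm i (S i) := by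
  have hcol := baseCol_spec (m := m)
  have hmiss : ∀ c, ∃ i, ∀ j, (∃ v ∈ (S j).verts, baseCol m v = some c) ↔ j ≠ i := fun c => by
    refine hS.exists_missing ?_
    have := card_baseClass m c
    rw [baseClass] at this
    rw [this, hq]
  obtain ⟨a, ha⟩ := hmiss 0
  obtain ⟨b, hb⟩ := hmiss 1
  obtain ⟨c, hc⟩ := hmiss 2
  simp only [hcol] at ha hb hc
  have ho : baseSpecial m ∈ (S 0).verts := by
    obtain ⟨i, hi⟩ := hS.cover (baseSpecial m)
    have := hS.special i _ hi ((hcol _).2.2.1.mpr rfl)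
    rwa [this] at hi
  have hspec : ∀ i, ∀ v ∈ (S i).verts, v.val = 2 * m → i = 0 := fun i v hv h =>
    hS.special i v hv ((hcol _).2.2.1.mpr h)
  have hA : ∀ v ∈ (S a).verts, m ≤ v.val := fun v hv => by
    by_contra hlt
    exact (ha a).mp ⟨v, hv, by omega⟩ rfl
  have hB : ∀ v ∈ (S b).verts, v.val < m ∨ 2 * m ≤ v.val := fun v hv => by
    by_contra hlt
    exact (hb b).mp ⟨v, hv, by omega⟩ rfl
  have hC : ∀ v ∈ (S c).verts, v.val ≤ 2 * m := fun v hv => by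
    by_contra hlt
    exact (hc c).mp ⟨v, hv, by omega⟩ rfl
  have reg := fun i => coef_baseDrawing_region (hne i)
  have hc0 : c = 0 := by
    by_contra h0
    have h1 := (reg c).1 fun v hv => by
      have := hC v hv
      have := mt (hspec c v hv) h0
      omega
    have h2 := (reg 0).2.1 ⟨_, ho, rfl⟩ ((hc 0).mpr fun h => h0 h.symm)
    omega
  subst hc0
  have hA' : a ≠ 0 → 2 * (3 * (m : ℤ) + 1) ≤ p.2 := fun h => (reg a).2.2.2.1 fun v hv =>
    ⟨hA v hv, mt (hspec a v hv) h⟩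
  have hB' : b ≠ 0 → 2 * (m : ℤ) < p.1 ∨ p.2 < m := fun h => (reg b).2.2.2.2.2.1 fun v hv => by
    have := hB v hv
    have := mt (hspec b v hv) h
    omega
  obtain ⟨ha0, hb0⟩ : a = 0 ∧ b = 0 := by
    by_cases ha0 : a = 0
    · refine ⟨ha0, by_contra fun hb0 => ?_⟩
      have h1 := (reg 0).2.2.2.2.1 fun v hv => ⟨by rw [ha0] at hA; exact hA v hv, hC v hv⟩
      have := hB' hb0
      omega
    · exfalso
      have h1 := hA' ha0
      by_cases hb0 : b = 0
      · have h2 := (reg 0).2.2.1 fun v hv => by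
          have := hC v hv
          rw [hb0] at hB
          have := hB v hv
          omega
        omega
      · have h2 := (reg 0).2.2.2.2.2.2 ((ha 0).mpr (Ne.symm ha0)) ((hb 0).mpr (Ne.symm hb0)) hC
        have := hB' hb0
        omega
  subst ha0 hb0
  have hverts : ∀ v ∈ (S 0).verts, v = baseSpecial m := fun v hv => Fin.ext (by
    have := hA v hv
    have := hB v hv
    have := hC v hv
    change v.val = 2 * m
    omega)
  have hS0 : S 0 = Sum.inl (baseSpecial m) := by
    have h0 := hne 0
    revert h0 hverts
    rcases S 0 with v | ⟨b, u, v⟩ | ⟨u, v, w⟩ <;> intro hverts h0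
    · simp [hverts v (by simp [GridTerm.verts])]
    · have := (coef_baseDrawing_edge h0).1
      rw [hverts u (by simp [GridTerm.verts]), hverts v (by simp [GridTerm.verts])] at this
      omega
    · have := (coef_baseDrawing_triangle h0).1
      rw [hverts u (by simp [GridTerm.verts]), hverts v (by simp [GridTerm.verts])] at this
      omega
  refine ⟨?_, fun i => ?_⟩
  · by_contra hp
    refine hne 0 ?_
    rw [hS0]
    simp [GridDrawing.coef, baseDrawing, lDrawing, gridDelta, hp]
  · unfold IsMainTerm
    split_ifs with hi
    · rw [hi, hS0]
    · have h1 := (ha i).mpr hi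
      have h2 := (hb i).mpr hi
      have h3 := (hc i).mpr hi
      have h0 := hne i
      revert h0 h1 h2 h3
      rcases S i with v | ⟨b, u, v⟩ | ⟨u, v, w⟩ <;> intro h1 h2 h3 h0
      · simp only [GridTerm.verts, Finset.mem_singleton, exists_eq_left] at h1 h2 h3
        omega
      · simp only [GridTerm.verts, Finset.mem_singleton, Finset.mem_insert, exists_eq_or_imp,
          exists_eq_left] at h1 h2 h3
        omega
      · have := coef_baseDrawing_triangle h0
        simp only [GridTerm.verts, Finset.mem_singleton, Finset.mem_insert, exists_eq_or_imp,
          exists_eq_left] at h1 h2 h3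
        refine ⟨u, v, w, rfl, (hcol u).1.mpr ?_, (hcol v).2.1.mpr ?_, (hcol w).2.2.2.mpr ?_⟩ <;>
          omega

end BaseDegree

section BaseDegreeValue

variable {m : ℕ} {R : ℤ} {k : Type} [CommRing k]

local notation "ε" => ExteriorAlgebra.ι k

lemma list_prod_map_smul {A I : Type*} [Ring A] [Algebra k A] (r : k) (l : List I) (g : I → A) :
    (l.map fun i => r • g i).prod = r ^ l.length • (l.map g).prod := by
  induction l with
  | nil => simp
  | cons i l ih =>
    simp only [List.map_cons, List.prod_cons, ih, smul_mul_smul_comm, List.length_cons, pow_succ']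

lemma coef_baseDrawing_main {hR : 12 * (m : ℤ) + 4 ≤ R} {u v w : Fin (3 * m + 1)}
    (hu : baseCol m u = some 0) (hv : baseCol m v = some 1) (hw : baseCol m w = some 2) :
    (baseDrawing m hR).coef (basePt m (baseSpecial m)) (Sum.inr (Sum.inr (u, v, w))) = -1 := by
  have hu := (baseCol_spec u).1.mp hu
  have hv := (baseCol_spec v).2.1.mp hv
  have hw := (baseCol_spec w).2.2.2.mp hw
  have h1 := baseHeight_spec u
  have h2 := baseHeight_spec v
  have h3 := (baseHeight_spec (baseSpecial m)).2.2.1 rfl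
  have h4 : (baseSpecial m).val = 2 * m := rfl
  rw [GridDrawing.coef, if_pos ⟨Fin.lt_def.mpr (by omega), Fin.lt_def.mpr (by omega)⟩, baseDrawing,
    triWind_lDrawing]
  rw [if_pos, if_neg, if_neg, if_pos]
  · norm_num
  all_goals dsimp only [basePt]; omega

open Classical in
lemma sum_main_zero {hR : 12 * (m : ℤ) + 4 ≤ R} {q : ℕ} (t : Fin (3 * m + 1) → k) :
    ∑ T : GridTerm (Fin (3 * m + 1)), (if IsMainTerm (0 : ZMod q) T then
      (baseDrawing m hR).coef (basePt m (baseSpecial m)) T • T.mono (baseCol m) t (0 : ZMod q)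
        else 0) = t (baseSpecial m) • (ε (gen k (Sum.inl 2)) *
          (ε (gen k (Sum.inl 0)) * ε (gen k (Sum.inl 1)))) := by
  rw [Finset.sum_eq_single (Sum.inl (baseSpecial m))]
  · have : baseCol m (baseSpecial m) = none := (baseCol_spec _).2.2.1.mpr rfl
    simp [IsMainTerm, GridDrawing.coef, baseDrawing, lDrawing, gridDelta, GridTerm.mono,
      GridTerm.vecs, colorVec, this]
  · intro T _ hT
    simp [IsMainTerm, hT]
  · simp

open Classical in
lemma sum_main_of_ne_zero {hR : 12 * (m : ℤ) + 4 ≤ R} {q : ℕ} (t : Fin (3 * m + 1) → k)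
    {i : ZMod q} (hi : i ≠ 0) :
    ∑ T : GridTerm (Fin (3 * m + 1)), (if IsMainTerm i T then
      (baseDrawing m hR).coef (basePt m (baseSpecial m)) T • T.mono (baseCol m) t i else 0) =
      (-((∑ v ∈ baseClass m 0, t v) * (∑ v ∈ baseClass m 1, t v) * ∑ v ∈ baseClass m 2, t v)) •
        partProd k i := by
  simp only [Fintype.sum_sum_type, Fintype.sum_prod_type]
  have h1 : ∀ v, ¬ IsMainTerm i (Sum.inl v : GridTerm (Fin (3 * m + 1))) := by
    simp [IsMainTerm, hi]
  have h2 : ∀ b u v, ¬ IsMainTerm i (Sum.inr (Sum.inl (b, u, v)) : GridTerm (Fin (3 * m + 1))) := by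
    simp [IsMainTerm, hi]
  simp only [h1, h2, if_false, Finset.sum_const_zero, zero_add]
  have h3 : ∀ u v w, (if IsMainTerm i (Sum.inr (Sum.inr (u, v, w)) : GridTerm (Fin (3 * m + 1)))
      then (baseDrawing m hR).coef (basePt m (baseSpecial m)) (Sum.inr (Sum.inr (u, v, w))) •
        GridTerm.mono (baseCol m) t i (Sum.inr (Sum.inr (u, v, w))) else 0) =
      (-(((if baseCol m u = some 0 then t u else 0) * (if baseCol m v = some 1 then t v else 0)) *
        (if baseCol m w = some 2 then t w else 0))) • partProd k i := by
    intro u v w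
    by_cases h : baseCol m u = some 0 ∧ baseCol m v = some 1 ∧ baseCol m w = some 2
    · obtain ⟨hu, hv, hw⟩ := h
      rw [if_pos, coef_baseDrawing_main hu hv hw]
      · simp [GridTerm.mono, GridTerm.vecs, colorVec, hu, hv, hw, partProd, smul_smul, mul_comm,
          mul_left_comm]
      · simp [IsMainTerm, hi, hu, hv, hw]
    · rw [if_neg (by simpa [IsMainTerm, hi] using h)]
      split_ifs <;> simp_all
  simp only [h3, ← Finset.sum_smul, Finset.sum_neg_distrib, ← Finset.mul_sum, ← Finset.sum_mul,
    baseClass, Finset.sum_filter]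

lemma prod_baseClass (t : Fin (3 * m + 1) → k) :
    t (baseSpecial m) * ((∏ v ∈ baseClass m 0, t v) * (∏ v ∈ baseClass m 1, t v) *
      ∏ v ∈ baseClass m 2, t v) = ∏ v, t v := by
  simp only [baseClass, Finset.prod_filter]
  have h0 : t (baseSpecial m) = ∏ v, if baseCol m v = none then t v else 1 := by
    rw [Finset.prod_eq_single (baseSpecial m), if_pos ((baseCol_spec _).2.2.1.mpr rfl)]
    · intro v _ hv
      exact if_neg fun h => hv (Fin.ext ((baseCol_spec v).2.2.1.mp h))
    · simp
  rw [h0]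
  simp only [← Finset.prod_mul_distrib]
  refine Finset.prod_congr rfl fun v _ => ?_
  unfold baseCol
  split_ifs <;> simp_all

lemma gridSum_eq_single {A : Type*} [AddCommGroup A] {F : ℤ × ℤ → A} {a : ℤ × ℤ}
    (ha : InBox R a) (h : ∀ p, p ≠ a → F p = 0) : gridSum R F = F a := by
  obtain ⟨h1, h2, h3, h4⟩ := ha
  rw [gridSum, Finset.sum_eq_single a.2, Finset.sum_eq_single a.1]
  · exact fun x _ hx => h _ fun h => hx (congrArg Prod.fst h)
  · exact fun hn => absurd (Finset.mem_Ico.mpr ⟨h1, by omega⟩) hn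
  · exact fun y _ hy => Finset.sum_eq_zero fun x _ => h _ fun h => hy (congrArg Prod.snd h)
  · exact fun hn => absurd (Finset.mem_Ico.mpr ⟨h3, by omega⟩) hn

lemma degree_baseDrawing {q : ℕ} (hq : q.Prime) [NeZero q] (hm : m + 1 = q)
    (hR : 12 * (m : ℤ) + 4 ≤ R) {t : Fin (3 * m + 1) → k} (ht : ∀ v, t v * t v = 0)
    {c : k →+ ZMod q} (hc : c (∏ v, t v) = 1) :
    (baseDrawing m hR).degree q (baseCol m) t c ≠ 0 := by
  classical
  have : Fact q.Prime := ⟨hq⟩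
  set D := baseDrawing m hR
  set o := basePt m (baseSpecial m)
  obtain ⟨l, hl, hres, -⟩ := residues_rotate q
  have hcard : Fintype.card (Fin (3 * m + 1)) + 2 = 3 * q := by
    rw [Fintype.card_fin]; omega
  have hzero : ∀ p, p ≠ o → prodField (D.colorForm (q := q) (baseCol m) t) (residues q) p = 0 := by
    intro p hp
    rw [GridDrawing.prodField_colorForm]
    refine map_list_prod_sum_eq (nodup_residues q) _ (fun _ _ => 0) (AddMonoidHom.id _) 0
      fun S => ?_
    simp only [AddMonoidHom.id_apply, AddMonoidHom.zero_apply]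
    rw [prod_map_zsmul]
    by_contra hne
    refine hp (isMainTerm_of_isColorful hm (hR := hR) (isColorful_of_prod_ne_zero ht hcard
      (right_ne_zero_of_smul hne)) fun i hi => hne ?_).1
    rw [List.prod_eq_zero (List.mem_map.mpr ⟨i, mem_residues i, hi⟩), zero_smul]
  have hval : prodField (D.colorForm (q := q) (baseCol m) t) (residues q) o =
      ((residues q).map fun i => ∑ T : GridTerm (Fin (3 * m + 1)),
        if IsMainTerm i T then D.coef o T • T.mono (baseCol m) t i else 0).prod := by
    rw [GridDrawing.prodField_colorForm]
    refine map_list_prod_sum_eq (nodup_residues q) _ _ (AddMonoidHom.id _) (AddMonoidHom.id _)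
      fun S => ?_
    simp only [AddMonoidHom.id_apply]
    by_cases hS : ∀ i, IsMainTerm i (S i)
    · simp only [hS, if_true]
    · obtain ⟨i, hi⟩ := not_forall.mp hS
      rw [List.prod_eq_zero (l := (residues q).map fun i => if IsMainTerm i (S i) then _ else _)
        (List.mem_map.mpr ⟨i, mem_residues i, if_neg hi⟩), prod_map_zsmul]
      by_contra hne
      refine hS (isMainTerm_of_isColorful hm (hR := hR) (p := o) (isColorful_of_prod_ne_zero ht hcard
        (right_ne_zero_of_smul hne)) fun i hi => hne ?_).2
      rw [List.prod_eq_zero (List.mem_map.mpr ⟨i, mem_residues i, hi⟩), zero_smul]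
  have hl0 : ∀ i ∈ l, i ≠ 0 := by
    have := nodup_residues q
    rw [hres, List.nodup_cons] at this
    rintro i hi rfl
    exact this.1 hi
  have hlm : l.length = m := by omega
  rw [hres, List.map_cons, List.prod_cons, sum_main_zero,
    List.map_congr_left fun i hi => sum_main_of_ne_zero t (hl0 i hi), list_prod_map_smul,
    smul_mul_smul_comm, hlm, ← hres] at hval
  obtain ⟨s, hs⟩ := topForm_colorProd_mul (k := k) hres
  rw [GridDrawing.degree, gridSum_eq_single (inBox_basePt hR _) hzero, hval, mul_smul_comm, map_smul,
    hs, smul_eq_mul, neg_pow, mul_pow, mul_pow]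
  have hpow : ∀ a : Fin 3, (∑ v ∈ baseClass m a, t v) ^ m =
      (m.factorial : k) * ∏ v ∈ baseClass m a, t v := fun a => by
    have := sum_pow_card_of_mul_self_eq_zero ht (baseClass m a)
    rwa [card_baseClass] at this
  have e : t (baseSpecial m) * ((-1) ^ m * ((∑ v ∈ baseClass m 0, t v) ^ m *
      (∑ v ∈ baseClass m 1, t v) ^ m * (∑ v ∈ baseClass m 2, t v) ^ m)) * ((s : ℤ) : k) =
      ((-1) ^ m * (m.factorial : ℤ) ^ 3 * (s : ℤ) : ℤ) • ∏ v, t v := by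
    rw [hpow, hpow, hpow, zsmul_eq_mul, ← prod_baseClass]
    push_cast
    ring
  rw [e, map_zsmul, hc, zsmul_eq_mul, mul_one]
  push_cast
  have hfac : (m.factorial : ZMod q) ≠ 0 := by
    rw [Ne, ZMod.natCast_eq_zero_iff, hq.dvd_factorial]
    omega
  have hs1 : (((s : ℤ) : ℤ) : ZMod q) ≠ 0 := by
    rcases Int.units_eq_one_or s with rfl | rfl <;> simp
  exact mul_ne_zero (mul_ne_zero (pow_ne_zero _ (neg_ne_zero.mpr one_ne_zero))
    (pow_ne_zero _ hfac)) hs1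

/-- Every drawing has a colourful family of terms through a common grid point. -/
theorem GridDrawing.exists_isColorful_baseCol {q : ℕ} (hq : q.Prime) (hm : m + 1 = q)
    (hR : 12 * (m : ℤ) + 4 ≤ R) (D : GridDrawing (Fin (3 * m + 1)) (baseLabel (3 * m)) R) :
    ∃ (p : ℤ × ℤ) (S : ZMod q → GridTerm (Fin (3 * m + 1))),
      IsColorful (baseCol m) (fun i => (S i).verts) ∧ ∀ i, D.coef p (S i) ≠ 0 := by
  have : NeZero q := ⟨hq.ne_zero⟩
  obtain ⟨k, _, t, c, ht, hc⟩ := exists_squareZero_ring q (Fin (3 * m + 1))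
  refine D.exists_isColorful ht (by rw [Fintype.card_fin]; omega) (c := c) ?_
  rw [GridDrawing.degree_eq_degree hq D (baseDrawing m hR) (baseCol m) ht c]
  exact degree_baseDrawing hq hm hR ht hc

end BaseDegreeValue

/-! ### Sampled drawings -/

section Sample

variable {n : ℕ} {K : ℕ} {R : ℤ}

/-- A grid point with label `v` close to a scaled point of the plane. -/
def roundPt (K : ℕ) (v : Fin (n + 1)) (x : ℝ × ℝ) : ℤ × ℤ :=
  ((v : ℤ) + ((n : ℤ) + 1) * ⌊K * x.1⌋, (v : ℤ) + ((n : ℤ) + 1) * ⌊K * x.2⌋)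

/-- The point of the plane represented by a grid point. -/
def scalePt (n K : ℕ) (p : ℤ × ℤ) : ℝ × ℝ := (p.1 / ((n + 1) * K), p.2 / ((n + 1) * K))

lemma abs_scale_sub_le (hK : 0 < K) (v : Fin (n + 1)) (x : ℝ) :
    |(((v : ℤ) + ((n : ℤ) + 1) * ⌊K * x⌋ : ℤ) : ℝ) / ((n + 1) * K) - x| ≤ 1 / K := by
  have hK' : (0 : ℝ) < K := by exact_mod_cast hK
  have hn : (0 : ℝ) < (n : ℝ) + 1 := by positivity
  have hv : ((v : ℕ) : ℝ) ≤ n := by exact_mod_cast Nat.lt_succ_iff.mp v.2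
  have hv0 : (0 : ℝ) ≤ ((v : ℕ) : ℝ) := Nat.cast_nonneg _
  have h1 := Int.floor_le (K * x)
  have h2 := Int.lt_floor_add_one (K * x)
  have e : (((v : ℤ) + ((n : ℤ) + 1) * ⌊K * x⌋ : ℤ) : ℝ) / ((n + 1) * K) - x =
      (((v : ℕ) : ℝ) / (n + 1) + (⌊K * x⌋ - K * x)) * (1 / K) := by
    push_cast
    field_simp
    ring
  rw [e, abs_mul, abs_of_pos (show (0 : ℝ) < 1 / K by positivity)]
  refine mul_le_of_le_one_left (by positivity) ?_
  have h3 : ((v : ℕ) : ℝ) / (n + 1) ≤ 1 := by rw [div_le_one hn]; linarith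
  have h4 : 0 ≤ ((v : ℕ) : ℝ) / (n + 1) := by positivity
  rw [abs_le]
  constructor <;> linarith

lemma dist_scalePt_roundPt (hK : 0 < K) (v : Fin (n + 1)) (x : ℝ × ℝ) :
    dist (scalePt n K (roundPt K v x)) x ≤ 1 / K := by
  rw [Prod.dist_eq, max_le_iff, Real.dist_eq, Real.dist_eq]
  exact ⟨abs_scale_sub_le hK v _, abs_scale_sub_le hK v _⟩

lemma baseLabel_roundPt (v : Fin (n + 1)) (x : ℝ × ℝ) :
    baseLabel n (roundPt K v x).1 = v ∧ baseLabel n (roundPt K v x).2 = v :=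
  ⟨baseLabel_add_mul _ _, baseLabel_add_mul _ _⟩

/-- The grid points sampling the edges of a drawing. -/
def samplePt (K : ℕ) (γ : Fin (n + 1) → Fin (n + 1) → ℝ → ℝ × ℝ) (u v : Fin (n + 1)) (j : ℕ) :
    ℤ × ℤ :=
  roundPt K (if j < K then u else v) (γ u v (j / K))

lemma baseLabel_samplePt (γ : Fin (n + 1) → Fin (n + 1) → ℝ → ℝ × ℝ) (u v : Fin (n + 1)) (j : ℕ) :
    (baseLabel n (samplePt K γ u v j).1 = u ∨ baseLabel n (samplePt K γ u v j).1 = v) ∧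
    (baseLabel n (samplePt K γ u v j).2 = u ∨ baseLabel n (samplePt K γ u v j).2 = v) := by
  simp only [samplePt, (baseLabel_roundPt _ _).1, (baseLabel_roundPt _ _).2]
  split_ifs <;> simp

lemma gridDY_sum {I : Type*} (s : Finset I) (F : I → ℤ × ℤ → ℤ) (p : ℤ × ℤ) :
    gridDY (fun p => ∑ j ∈ s, F j p) p = ∑ j ∈ s, gridDY (F j) p := by
  simp only [gridDY, Finset.sum_sub_distrib]

lemma gridDX_sum {I : Type*} (s : Finset I) (F : I → ℤ × ℤ → ℤ) (p : ℤ × ℤ) :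
    gridDX (fun p => ∑ j ∈ s, F j p) p = ∑ j ∈ s, gridDX (F j) p := by
  simp only [gridDX, Finset.sum_sub_distrib]

/-- The drawing obtained by sampling the edges at `K + 1` points. -/
def sampleDrawing (hK : 0 < K) {pos : Fin (n + 1) → ℝ × ℝ}
    {γ : Fin (n + 1) → Fin (n + 1) → ℝ → ℝ × ℝ} (h0 : ∀ u v, γ u v 0 = pos u)
    (h1 : ∀ u v, γ u v 1 = pos v) (hbox : ∀ u v, ∀ j ≤ K, InBox R (samplePt K γ u v j)) :
    GridDrawing (Fin (n + 1)) (baseLabel n) R where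
  pt v := roundPt K v (pos v)
  α u v p := ∑ j ∈ Finset.range K, lpathα (samplePt K γ u v j) (samplePt K γ u v (j + 1)) p
  β u v p := ∑ j ∈ Finset.range K, lpathβ (samplePt K γ u v j) (samplePt K γ u v (j + 1)) p
  closed u v p := by
    have hK' : (K : ℝ) ≠ 0 := by exact_mod_cast hK.ne'
    rw [gridDX_sum, gridDY_sum, ← Finset.sum_sub_distrib]
    simp only [lpath_closed]
    rw [Finset.sum_range_sub (fun j => gridDelta (samplePt K γ u v j) p)]
    simp [samplePt, hK, h0, div_self hK', h1]
  label_pt v := baseLabel_roundPt _ _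
  label_α u v p h := by
    obtain ⟨j, -, hj⟩ := Finset.exists_ne_zero_of_sum_ne_zero h
    rw [lpathα_label hj]
    exact (baseLabel_samplePt γ u v _).1
  label_dα u v p h := by
    rw [gridDY_sum] at h
    obtain ⟨j, -, hj⟩ := Finset.exists_ne_zero_of_sum_ne_zero h
    rcases gridDY_lpathα_label hj with h | h <;> rw [h] <;> exact (baseLabel_samplePt γ u v _).2
  label_β u v p h := by
    obtain ⟨j, -, hj⟩ := Finset.exists_ne_zero_of_sum_ne_zero h
    rw [lpathβ_label hj]
    exact (baseLabel_samplePt γ u v _).2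
  label_dβ u v p h := by
    rw [gridDX_sum] at h
    obtain ⟨j, -, hj⟩ := Finset.exists_ne_zero_of_sum_ne_zero h
    rcases gridDX_lpathβ_label hj with h | h <;> rw [h] <;> exact (baseLabel_samplePt γ u v _).1
  supp_pt v := boxSupp_gridDelta.mpr (by
    have := hbox v v 0 (Nat.zero_le _)
    simpa [samplePt, hK, h0] using this)
  supp_α u v p hp := Finset.sum_eq_zero fun j hj => by
    rw [Finset.mem_range] at hj
    exact boxSupp_lpathα (hbox u v j hj.le) (hbox u v (j + 1) hj) p hp
  supp_β u v p hp := Finset.sum_eq_zero fun j hj => by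
    rw [Finset.mem_range] at hj
    exact boxSupp_lpathβ (hbox u v j hj.le) (hbox u v (j + 1) hj) p hp

lemma exists_inBox {I : Type*} [Fintype I] (a : I → ℤ × ℤ) (R₀ : ℤ) :
    ∃ R, R₀ ≤ R ∧ ∀ i, InBox R (a i) := by
  refine ⟨|R₀| + ∑ i, (|(a i).1| + |(a i).2| + 1), ?_, fun i => ?_⟩
  · have : 0 ≤ ∑ i, (|(a i).1| + |(a i).2| + 1) := Finset.sum_nonneg fun i _ => by positivity
    have := le_abs_self R₀
    linarith
  · have := Finset.single_le_sum (f := fun i => |(a i).1| + |(a i).2| + 1)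
      (fun i _ => by positivity) (Finset.mem_univ i)
    have h1 := abs_nonneg R₀
    have h2 := abs_nonneg (a i).1
    have h3 := abs_nonneg (a i).2
    have h4 := neg_abs_le (a i).1
    have h5 := neg_abs_le (a i).2
    have h6 := le_abs_self (a i).1
    have h7 := le_abs_self (a i).2
    refine ⟨?_, ?_, ?_, ?_⟩ <;> linarith

end Sample

section Crossing

/-- The signed number of crossings of a segment with a horizontal ray starting at `p`. -/
def crossing (p a b : ℝ × ℝ) : ℤ :=
  if b.1 ≤ p.1 then (if a.2 ≤ p.2 then 1 else 0) - (if b.2 ≤ p.2 then 1 else 0) else 0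

@[simp] lemma crossing_self (p a : ℝ × ℝ) : crossing p a a = 0 := by simp [crossing]

lemma crossing_add {p a b c : ℝ × ℝ} {δ : ℝ} (ha : δ < dist a p) (hb : dist a b ≤ δ)
    (hc : dist a c ≤ δ) : crossing p a b + crossing p b c = crossing p a c := by
  rw [Prod.dist_eq, max_le_iff, Real.dist_eq, Real.dist_eq, abs_le, abs_le] at hb hc
  rw [Prod.dist_eq, lt_max_iff, Real.dist_eq, Real.dist_eq, lt_abs, lt_abs] at ha
  obtain ⟨⟨hb1, hb2⟩, hb3, hb4⟩ := hb
  obtain ⟨⟨hc1, hc2⟩, hc3, hc4⟩ := hc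
  unfold crossing
  rcases ha with (ha | ha) | (ha | ha)
  · rw [if_neg (show ¬ b.1 ≤ p.1 by linarith), if_neg (show ¬ c.1 ≤ p.1 by linarith),
      if_neg (show ¬ c.1 ≤ p.1 by linarith), add_zero]
  · rw [if_pos (show b.1 ≤ p.1 by linarith), if_pos (show c.1 ≤ p.1 by linarith),
      if_pos (show c.1 ≤ p.1 by linarith)]
    ring
  · rw [if_neg (show ¬ a.2 ≤ p.2 by linarith), if_neg (show ¬ b.2 ≤ p.2 by linarith),
      if_neg (show ¬ c.2 ≤ p.2 by linarith)]
    simp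
  · rw [if_pos (show a.2 ≤ p.2 by linarith), if_pos (show b.2 ≤ p.2 by linarith),
      if_pos (show c.2 ≤ p.2 by linarith)]
    simp

/-- Comparison of the crossings of two nearby polygonal paths. -/
lemma sum_crossing_sub {p : ℝ × ℝ} {δ : ℝ} {N : ℕ} {a b : ℕ → ℝ × ℝ}
    (hfar : ∀ j < N, δ < dist (a j) p) (haa : ∀ j < N, dist (a j) (a (j + 1)) ≤ δ)
    (hab : ∀ j < N, dist (a j) (b j) ≤ δ) (hab' : ∀ j < N, dist (a j) (b (j + 1)) ≤ δ) :
    ∑ j ∈ Finset.range N, crossing p (a j) (a (j + 1)) -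
      ∑ j ∈ Finset.range N, crossing p (b j) (b (j + 1)) =
      crossing p (a 0) (b 0) - crossing p (a N) (b N) := by
  rw [← Finset.sum_sub_distrib, ← Finset.sum_range_sub' fun j => crossing p (a j) (b j)]
  refine Finset.sum_congr rfl fun j hj => ?_
  rw [Finset.mem_range] at hj
  have h1 := crossing_add (hfar j hj) (haa j hj) (hab' j hj)
  have h2 := crossing_add (hfar j hj) (hab j hj) (hab' j hj)
  linarith

end Crossing

section SampleCoef

variable {n : ℕ} {K : ℕ} {R : ℤ}

lemma scalePt_le_iff (hK : 0 < K) {x y : ℤ} :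
    (x : ℝ) / ((n + 1) * K) ≤ (y : ℝ) / ((n + 1) * K) ↔ x ≤ y := by
  have hK' : (0 : ℝ) < K := by exact_mod_cast hK
  rw [div_le_div_iff_of_pos_right (by positivity)]
  exact Int.cast_le

lemma sum_lpathα (hK : 0 < K) (p a b : ℤ × ℤ) (hb : InBox R b) :
    ∑ i ∈ Finset.Ico (-R) (p.1 + 1), lpathα a b (i, p.2) =
      crossing (scalePt n K p) (scalePt n K a) (scalePt n K b) := by
  refine (sum_Ico_ite_eq hb.1 ((if a.2 ≤ p.2 then 1 else 0) - (if b.2 ≤ p.2 then 1 else 0))).trans ?_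
  simp only [crossing, scalePt, scalePt_le_iff hK, Int.lt_add_one_iff]

lemma dist_scalePt_le (hK : 0 < K) {p a b : ℤ × ℤ} (h1 : |p.1 - a.1| ≤ |a.1 - b.1|)
    (h2 : |p.2 - a.2| ≤ |a.2 - b.2|) :
    dist (scalePt n K p) (scalePt n K a) ≤ dist (scalePt n K a) (scalePt n K b) := by
  have hK' : (0 : ℝ) < K := by exact_mod_cast hK
  have h : ∀ x y z : ℤ, |x - y| ≤ |y - z| → |(x : ℝ) / ((n + 1) * K) - y / ((n + 1) * K)| ≤
      |(y : ℝ) / ((n + 1) * K) - z / ((n + 1) * K)| := fun x y z hxy => by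
    rw [← sub_div, ← sub_div, abs_div, abs_div]
    refine div_le_div_of_nonneg_right ?_ (abs_nonneg _)
    exact_mod_cast hxy
  exact max_le_max (h _ _ _ h1) (h _ _ _ h2)

lemma dist_scalePt_le_of_lpathα (hK : 0 < K) {p a b : ℤ × ℤ} (h : lpathα a b p ≠ 0) :
    dist (scalePt n K p) (scalePt n K a) ≤ dist (scalePt n K a) (scalePt n K b) := by
  have h1 := lpathα_label h
  refine dist_scalePt_le hK (by rw [h1, abs_sub_comm]) ?_
  simp only [lpathα, h1, if_true] at h
  split_ifs at h <;> grind

lemma dist_scalePt_le_of_lpathβ (hK : 0 < K) {p a b : ℤ × ℤ} (h : lpathβ a b p ≠ 0) :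
    dist (scalePt n K p) (scalePt n K a) ≤ dist (scalePt n K a) (scalePt n K b) := by
  have h1 := lpathβ_label h
  refine dist_scalePt_le hK ?_ (by simp [h1])
  simp only [lpathβ, h1, if_true] at h
  split_ifs at h <;> grind

variable {pos : Fin (n + 1) → ℝ × ℝ} {γ : Fin (n + 1) → Fin (n + 1) → ℝ → ℝ × ℝ}
  {h0 : ∀ u v, γ u v 0 = pos u} {h1 : ∀ u v, γ u v 1 = pos v}
  {hbox : ∀ u v, ∀ j ≤ K, InBox R (samplePt K γ u v j)}

/-- The crossing number of the sampled edge. -/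
def edgeCrossing (K : ℕ) (γ : Fin (n + 1) → Fin (n + 1) → ℝ → ℝ × ℝ) (p : ℝ × ℝ)
    (u v : Fin (n + 1)) : ℤ :=
  ∑ j ∈ Finset.range K,
    crossing p (scalePt n K (samplePt K γ u v j)) (scalePt n K (samplePt K γ u v (j + 1)))

lemma triWind_sampleDrawing (hK : 0 < K) (u v w : Fin (n + 1)) (p : ℤ × ℤ) :
    (sampleDrawing hK h0 h1 hbox).triWind u v w p =
      -(edgeCrossing K γ (scalePt n K p) v w - edgeCrossing K γ (scalePt n K p) u w +
        edgeCrossing K γ (scalePt n K p) u v) := by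
  have key : ∀ u v, edgeCrossing K γ (scalePt n K p) u v =
      ∑ i ∈ Finset.Ico (-R) (p.1 + 1), (sampleDrawing hK h0 h1 hbox).α u v (i, p.2) := by
    intro u v
    simp only [sampleDrawing]
    rw [Finset.sum_comm]
    refine Finset.sum_congr rfl fun j hj => ?_
    rw [Finset.mem_range] at hj
    rw [sum_lpathα hK _ _ _ (hbox u v (j + 1) hj)]
  rw [key, key, key, ← Finset.sum_sub_distrib, ← Finset.sum_add_distrib, ← Finset.sum_neg_distrib]
  rfl

lemma coef_sampleDrawing_vertex (hK : 0 < K) {v : Fin (n + 1)} {p : ℤ × ℤ}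
    (h : (sampleDrawing hK h0 h1 hbox).coef p (Sum.inl v) ≠ 0) :
    dist (scalePt n K p) (pos v) ≤ 1 / K := by
  have : p = roundPt K v (pos v) := by
    by_contra hp
    exact h (by simp [GridDrawing.coef, sampleDrawing, gridDelta, hp])
  rw [this]
  exact dist_scalePt_roundPt hK v _

lemma coef_sampleDrawing_edge (hK : 0 < K) {b : Bool} {u v : Fin (n + 1)} {p : ℤ × ℤ}
    (h : (sampleDrawing hK h0 h1 hbox).coef p (Sum.inr (Sum.inl (b, u, v))) ≠ 0) :
    u < v ∧ ∃ j < K, dist (scalePt n K p) (scalePt n K (samplePt K γ u v j)) ≤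
      dist (scalePt n K (samplePt K γ u v j)) (scalePt n K (samplePt K γ u v (j + 1))) := by
  simp only [GridDrawing.coef] at h
  split_ifs at h with huv hb
  · simp only [sampleDrawing] at h
    obtain ⟨j, hj, hne⟩ := Finset.exists_ne_zero_of_sum_ne_zero h
    exact ⟨huv, j, Finset.mem_range.mp hj, dist_scalePt_le_of_lpathβ hK hne⟩
  · simp only [sampleDrawing] at h
    obtain ⟨j, hj, hne⟩ := Finset.exists_ne_zero_of_sum_ne_zero h
    exact ⟨huv, j, Finset.mem_range.mp hj, dist_scalePt_le_of_lpathα hK hne⟩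
  · exact absurd rfl h

lemma coef_sampleDrawing_triangle (hK : 0 < K) {u v w : Fin (n + 1)} {p : ℤ × ℤ}
    (h : (sampleDrawing hK h0 h1 hbox).coef p (Sum.inr (Sum.inr (u, v, w))) ≠ 0) :
    (u < v ∧ v < w) ∧
      edgeCrossing K γ (scalePt n K p) v w - edgeCrossing K γ (scalePt n K p) u w +
        edgeCrossing K γ (scalePt n K p) u v ≠ 0 := by
  simp only [GridDrawing.coef, triWind_sampleDrawing] at h
  split_ifs at h with huv
  · exact ⟨huv, fun h' => h (by rw [h', neg_zero])⟩
  · exact absurd rfl h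

lemma dist_scalePt_samplePt (hK : 0 < K) (u v : Fin (n + 1)) (j : ℕ) :
    dist (scalePt n K (samplePt K γ u v j)) (γ u v (j / K)) ≤ 1 / K :=
  dist_scalePt_roundPt hK _ _

end SampleCoef

section Contraction

/-- The total crossing number of the vertical line over `t` of a homotopy `h`, corrected so as to
start at `x`. -/
def sideCrossing (K : ℕ) (p : ℝ × ℝ) (h : ℝ × ℝ → ℝ × ℝ) (t : ℝ) (x : ℝ × ℝ) : ℤ :=
  ∑ l ∈ Finset.range K, crossing p (h (l / K, t)) (h ((l + 1 : ℕ) / K, t)) - crossing p (h (0, t)) x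

lemma div_mem_unitInterval {K j : ℕ} (hj : j ≤ K) : (j : ℝ) / K ∈ Set.Icc (0 : ℝ) 1 :=
  ⟨by positivity, div_le_one_of_le₀ (by exact_mod_cast hj) (Nat.cast_nonneg _)⟩

lemma sum_crossing_eq_sideCrossing {K : ℕ} (hK : 0 < K) {p y : ℝ × ℝ} {δ : ℝ}
    {h : ℝ × ℝ → ℝ × ℝ} {Q : ℕ → ℝ × ℝ} (htop : ∀ t ∈ Set.Icc (0 : ℝ) 1, h (1, t) = y)
    (hfar : ∀ s ∈ Set.Icc (0 : ℝ) 1, ∀ t ∈ Set.Icc (0 : ℝ) 1, δ < dist (h (s, t)) p)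
    (hnear : ∀ s ∈ Set.Icc (0 : ℝ) 1, ∀ t ∈ Set.Icc (0 : ℝ) 1, ∀ s' ∈ Set.Icc (0 : ℝ) 1,
      ∀ t' ∈ Set.Icc (0 : ℝ) 1, |s - s'| ≤ 1 / K → |t - t'| ≤ 1 / K →
      dist (h (s, t)) (h (s', t')) ≤ δ)
    (hQ : ∀ j < K, dist (h (0, j / K)) (Q j) ≤ δ)
    (hQ' : ∀ j < K, dist (h (0, j / K)) (Q (j + 1)) ≤ δ) :
    ∑ j ∈ Finset.range K, crossing p (Q j) (Q (j + 1)) =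
      sideCrossing K p h 0 (Q 0) - sideCrossing K p h 1 (Q K) := by
  have hK' : (K : ℝ) ≠ 0 := by exact_mod_cast hK.ne'
  have hstep : ∀ j : ℕ, |(j : ℝ) / K - (j + 1 : ℕ) / K| ≤ 1 / K := fun j => by
    rw [← sub_div, abs_div]
    simp
  have hzero : |(0 : ℝ)| ≤ 1 / K := by rw [abs_zero]; positivity
  set A : ℕ → ℤ := fun l =>
    ∑ j ∈ Finset.range K, crossing p (h (l / K, j / K)) (h (l / K, (j + 1 : ℕ) / K)) with hA
  have hlevel : ∀ l ∈ Finset.range K, A l - A (l + 1) =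
      crossing p (h (l / K, 0)) (h ((l + 1 : ℕ) / K, 0)) -
        crossing p (h (l / K, 1)) (h ((l + 1 : ℕ) / K, 1)) := fun l hl => by
    rw [Finset.mem_range] at hl
    have I := div_mem_unitInterval hl.le
    have I' := div_mem_unitInterval (Nat.succ_le_of_lt hl)
    have := sum_crossing_sub (p := p) (δ := δ) (N := K) (a := fun j => h (l / K, j / K))
      (b := fun j => h ((l + 1 : ℕ) / K, j / K))
      (fun j hj => hfar _ I _ (div_mem_unitInterval hj.le))
      (fun j hj => hnear _ I _ (div_mem_unitInterval hj.le) _ I _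
        (div_mem_unitInterval (Nat.succ_le_of_lt hj)) (by rwa [sub_self]) (hstep j))
      (fun j hj => hnear _ I _ (div_mem_unitInterval hj.le) _ I' _
        (div_mem_unitInterval hj.le) (hstep l) (by rwa [sub_self]))
      (fun j hj => hnear _ I _ (div_mem_unitInterval hj.le) _ I' _
        (div_mem_unitInterval (Nat.succ_le_of_lt hj)) (hstep l) (hstep j))
    simpa [hA, div_self hK'] using this
  have htopA : A K = 0 := Finset.sum_eq_zero fun j hj => by
    rw [Finset.mem_range] at hj
    rw [div_self hK', htop _ (div_mem_unitInterval hj.le),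
      htop _ (div_mem_unitInterval (Nat.succ_le_of_lt hj)), crossing_self]
  have hbot := sum_crossing_sub (p := p) (δ := δ) (N := K) (a := fun j => h (0, j / K)) (b := Q)
    (fun j hj => hfar _ (by simp) _ (div_mem_unitInterval hj.le))
    (fun j hj => hnear _ (by simp) _ (div_mem_unitInterval hj.le) _ (by simp) _
      (div_mem_unitInterval (Nat.succ_le_of_lt hj)) (by rwa [sub_self]) (hstep j)) hQ hQ'
  have hsum := Finset.sum_range_sub' A K
  rw [Finset.sum_congr rfl hlevel, Finset.sum_sub_distrib, htopA] at hsum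
  have hA0 : A 0 = ∑ j ∈ Finset.range K, crossing p (h (0, j / K)) (h (0, (j + 1 : ℕ) / K)) := by
    simp [hA]
  simp only [Nat.cast_zero, zero_div, div_self hK'] at hbot
  unfold sideCrossing
  rw [hA0] at hsum
  linarith

/-- `h` contracts the path `γ` to the point `y` in the complement of `p`. -/
structure IsPathContraction (γ : ℝ → ℝ × ℝ) (p y : ℝ × ℝ) (h : ℝ × ℝ → ℝ × ℝ) : Prop where
  continuousOn : ContinuousOn h (Set.Icc 0 1 ×ˢ Set.Icc 0 1)
  ne : ∀ x ∈ Set.Icc (0 : ℝ) 1 ×ˢ Set.Icc (0 : ℝ) 1, h x ≠ p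
  bot : ∀ t ∈ Set.Icc (0 : ℝ) 1, h (0, t) = γ t
  top : ∀ t ∈ Set.Icc (0 : ℝ) 1, h (1, t) = y

lemma IsPathContraction.eventually_sum_crossing {γ : ℝ → ℝ × ℝ} {p₀ y : ℝ × ℝ}
    {h : ℝ × ℝ → ℝ × ℝ} (H : IsPathContraction γ p₀ y h) :
    ∃ ε > 0, ∀ᶠ K : ℕ in Filter.atTop, ∀ p : ℝ × ℝ, dist p p₀ < ε → ∀ Q : ℕ → ℝ × ℝ,
      (∀ j ≤ K, dist (Q j) (γ (j / K)) ≤ 1 / K) →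
      ∑ j ∈ Finset.range K, crossing p (Q j) (Q (j + 1)) =
        sideCrossing K p h 0 (Q 0) - sideCrossing K p h 1 (Q K) := by
  have hcpt : IsCompact (Set.Icc (0 : ℝ) 1 ×ˢ Set.Icc (0 : ℝ) 1) := isCompact_Icc.prod isCompact_Icc
  have himg := hcpt.image_of_continuousOn H.continuousOn
  have hp₀ : p₀ ∈ (h '' (Set.Icc (0 : ℝ) 1 ×ˢ Set.Icc (0 : ℝ) 1))ᶜ := by
    rintro ⟨x, hx, hxp⟩
    exact H.ne x hx hxp
  obtain ⟨ε, hε, hball⟩ := Metric.isOpen_iff.mp himg.isClosed.isOpen_compl p₀ hp₀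
  have hfar : ∀ x ∈ Set.Icc (0 : ℝ) 1 ×ˢ Set.Icc (0 : ℝ) 1, ε ≤ dist (h x) p₀ := fun x hx => by
    by_contra! hlt
    exact hball (Metric.mem_ball.mpr hlt) ⟨x, hx, rfl⟩
  obtain ⟨η, hη, huc⟩ := Metric.uniformContinuousOn_iff_le.mp
    (hcpt.uniformContinuousOn_of_continuous H.continuousOn) (ε / 6) (by linarith)
  refine ⟨ε / 2, by linarith, ?_⟩
  have hlim := tendsto_one_div_atTop_nhds_zero_nat (𝕜 := ℝ)
  filter_upwards [hlim.eventually (gt_mem_nhds hη),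
    hlim.eventually (gt_mem_nhds (show (0 : ℝ) < ε / 6 by linarith)),
    Filter.eventually_gt_atTop 0] with K hKη hKε hK p hp Q hQ
  have hnear : ∀ s ∈ Set.Icc (0 : ℝ) 1, ∀ t ∈ Set.Icc (0 : ℝ) 1, ∀ s' ∈ Set.Icc (0 : ℝ) 1,
      ∀ t' ∈ Set.Icc (0 : ℝ) 1, |s - s'| ≤ 1 / K → |t - t'| ≤ 1 / K →
      dist (h (s, t)) (h (s', t')) ≤ ε / 6 := fun s hs t ht s' hs' t' ht' h1 h2 =>
    huc (s, t) ⟨hs, ht⟩ (s', t') ⟨hs', ht'⟩ (max_le (h1.trans hKη.le) (h2.trans hKη.le))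
  have I0 : (0 : ℝ) ∈ Set.Icc (0 : ℝ) 1 := by simp
  refine sum_crossing_eq_sideCrossing (δ := ε / 3) hK H.top (fun s hs t ht => ?_)
    (fun s hs t ht s' hs' t' ht' h1 h2 => (hnear s hs t ht s' hs' t' ht' h1 h2).trans (by linarith))
    (fun j hj => ?_) (fun j hj => ?_)
  · have h1 := hfar (s, t) ⟨hs, ht⟩
    have h2 := dist_triangle (h (s, t)) p p₀
    linarith
  · rw [H.bot _ (div_mem_unitInterval hj.le), dist_comm]
    linarith [hQ j hj.le]
  · have h1 := hnear 0 I0 _ (div_mem_unitInterval hj.le) 0 I0 _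
      (div_mem_unitInterval (Nat.succ_le_of_lt hj)) (by rw [sub_self, abs_zero]; positivity)
      (show |(j : ℝ) / K - (j + 1 : ℕ) / K| ≤ 1 / K by rw [← sub_div, abs_div]; simp)
    rw [H.bot _ (div_mem_unitInterval (Nat.succ_le_of_lt hj))] at h1
    have h2 := hQ (j + 1) hj
    have h3 := dist_triangle_right (h (0, j / K)) (Q (j + 1)) (γ ((j + 1 : ℕ) / K))
    linarith

end Contraction

section Limit

variable {n : ℕ}

/-- The triangle `u v w` of a drawing is contractible in the complement of `p`. -/
def IsTriContractible (γ : Fin (n + 1) → Fin (n + 1) → ℝ → ℝ × ℝ) (p : ℝ × ℝ)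
    (u v w : Fin (n + 1)) : Prop :=
  ∃ (y : ℝ × ℝ) (huv hvw huw : ℝ × ℝ → ℝ × ℝ), IsPathContraction (γ u v) p y huv ∧
    IsPathContraction (γ v w) p y hvw ∧ IsPathContraction (γ u w) p y huw ∧
    ∀ s ∈ Set.Icc (0 : ℝ) 1, huv (s, 0) = huw (s, 0) ∧ huv (s, 1) = hvw (s, 0) ∧
      hvw (s, 1) = huw (s, 1)

/-- The point `p` lies on a vertex or edge, or the boundary of a triangle winds around it. -/
def WindsAround (pos : Fin (n + 1) → ℝ × ℝ) (γ : Fin (n + 1) → Fin (n + 1) → ℝ → ℝ × ℝ)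
    (p : ℝ × ℝ) : GridTerm (Fin (n + 1)) → Prop
  | Sum.inl v => p = pos v
  | Sum.inr (Sum.inl (_, u, v)) => u < v ∧ p ∈ γ u v '' Set.Icc 0 1
  | Sum.inr (Sum.inr (u, v, w)) => (u < v ∧ v < w) ∧ ¬ IsTriContractible γ p u v w

/-- The version of `WindsAround` for a drawing sampled at `K + 1` points of every edge. -/
def WindsAroundSampled (K : ℕ) (pos : Fin (n + 1) → ℝ × ℝ)
    (γ : Fin (n + 1) → Fin (n + 1) → ℝ → ℝ × ℝ) (p : ℝ × ℝ) : GridTerm (Fin (n + 1)) → Prop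
  | Sum.inl v => dist p (pos v) ≤ 1 / K
  | Sum.inr (Sum.inl (_, u, v)) => u < v ∧
      ∃ j < K, dist p (γ u v (j / K)) ≤ dist (γ u v (j / K)) (γ u v ((j + 1 : ℕ) / K)) + 3 * (1 / K)
  | Sum.inr (Sum.inr (u, v, w)) => (u < v ∧ v < w) ∧
      edgeCrossing K γ p v w - edgeCrossing K γ p u w + edgeCrossing K γ p u v ≠ 0

lemma exists_windsAroundSampled {m q K : ℕ} (hq : q.Prime) (hm : m + 1 = q) (hK : 0 < K)
    {pos : Fin (3 * m + 1) → ℝ × ℝ} {γ : Fin (3 * m + 1) → Fin (3 * m + 1) → ℝ → ℝ × ℝ}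
    (h0 : ∀ u v, γ u v 0 = pos u) (h1 : ∀ u v, γ u v 1 = pos v) :
    ∃ (p : ℝ × ℝ) (S : ZMod q → GridTerm (Fin (3 * m + 1))),
      IsColorful (baseCol m) (fun i => (S i).verts) ∧ ∀ i, WindsAroundSampled K pos γ p (S i) := by
  obtain ⟨R, hR, hbox⟩ := exists_inBox
    (fun x : Fin (3 * m + 1) × Fin (3 * m + 1) × Fin (K + 1) => samplePt K γ x.1 x.2.1 x.2.2)
    (12 * (m : ℤ) + 4)
  obtain ⟨p, S, hS, hcoef⟩ := (sampleDrawing hK h0 h1 (R := R)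
    fun u v j hj => hbox (u, v, ⟨j, Nat.lt_succ_of_le hj⟩)).exists_isColorful_baseCol hq hm hR
  refine ⟨scalePt (3 * m) K p, S, hS, fun i => ?_⟩
  have hi := hcoef i
  generalize S i = t at hi ⊢
  rcases t with v | ⟨b, u, v⟩ | ⟨u, v, w⟩
  · exact coef_sampleDrawing_vertex hK hi
  · obtain ⟨huv, j, hj, hd⟩ := coef_sampleDrawing_edge hK hi
    refine ⟨huv, j, hj, ?_⟩
    have d1 := dist_scalePt_samplePt (γ := γ) hK u v j
    have d2 := dist_scalePt_samplePt (γ := γ) hK u v (j + 1)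
    have t1 := dist_triangle (scalePt (3 * m) K p) (scalePt (3 * m) K (samplePt K γ u v j))
      (γ u v (j / K))
    have t2 := dist_triangle4 (scalePt (3 * m) K (samplePt K γ u v j)) (γ u v (j / K))
      (γ u v ((j + 1 : ℕ) / K)) (scalePt (3 * m) K (samplePt K γ u v (j + 1)))
    rw [dist_comm (γ u v ((j + 1 : ℕ) / K))] at t2
    linarith
  · exact coef_sampleDrawing_triangle hK hi

/-- The points of a vertex or an edge of a drawing. -/
def termImage (pos : Fin (n + 1) → ℝ × ℝ) (γ : Fin (n + 1) → Fin (n + 1) → ℝ → ℝ × ℝ) :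
    GridTerm (Fin (n + 1)) → Set (ℝ × ℝ)
  | Sum.inl v => {pos v}
  | Sum.inr (Sum.inl (_, u, v)) => γ u v '' Set.Icc 0 1
  | Sum.inr (Sum.inr _) => ∅

variable {pos : Fin (n + 1) → ℝ × ℝ} {γ : Fin (n + 1) → Fin (n + 1) → ℝ → ℝ × ℝ}

lemma isCompact_termImage (hγ : ∀ u v, ContinuousOn (γ u v) (Set.Icc 0 1))
    (T : GridTerm (Fin (n + 1))) : IsCompact (termImage pos γ T) := by
  rcases T with v | ⟨b, u, v⟩ | ⟨u, v, w⟩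
  · exact isCompact_singleton
  · exact isCompact_Icc.image_of_continuousOn (hγ u v)
  · exact isCompact_empty

lemma eventually_dist_termImage (hγ : ∀ u v, ContinuousOn (γ u v) (Set.Icc 0 1))
    {T : GridTerm (Fin (n + 1))} (hT : ∀ x, T ≠ Sum.inr (Sum.inr x)) {ε : ℝ} (hε : 0 < ε) :
    ∀ᶠ K : ℕ in Filter.atTop, ∀ p, WindsAroundSampled K pos γ p T →
      ∃ x ∈ termImage pos γ T, dist p x ≤ ε := by
  have hlim := tendsto_one_div_atTop_nhds_zero_nat (𝕜 := ℝ)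
  rcases T with v | ⟨b, u, v⟩ | x
  · filter_upwards [hlim.eventually (gt_mem_nhds hε)] with K hK p hp
    exact ⟨pos v, rfl, hp.trans hK.le⟩
  · obtain ⟨η, hη, huc⟩ := Metric.uniformContinuousOn_iff_le.mp
      (isCompact_Icc.uniformContinuousOn_of_continuous (hγ u v)) (ε / 4) (by linarith)
    filter_upwards [hlim.eventually (gt_mem_nhds hη),
      hlim.eventually (gt_mem_nhds (show (0 : ℝ) < ε / 4 by linarith))] with K hKη hKε p hp
    obtain ⟨-, j, hj, hd⟩ := hp
    have := huc _ (div_mem_unitInterval hj.le) _ (div_mem_unitInterval (Nat.succ_le_of_lt hj))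
      (show dist ((j : ℝ) / K) ((j + 1 : ℕ) / K) ≤ η by
        refine le_trans ?_ hKη.le
        rw [Real.dist_eq, ← sub_div, abs_div]
        simp)
    exact ⟨_, ⟨_, div_mem_unitInterval hj.le, rfl⟩, by linarith⟩
  · exact absurd rfl (hT x)

lemma samplePt_zero {K : ℕ} (hK : 0 < K) (h0 : ∀ u v, γ u v 0 = pos u) (u v : Fin (n + 1)) :
    samplePt K γ u v 0 = roundPt K u (pos u) := by
  simp [samplePt, hK, h0]

lemma samplePt_last {K : ℕ} (hK : 0 < K) (h1 : ∀ u v, γ u v 1 = pos v) (u v : Fin (n + 1)) :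
    samplePt K γ u v K = roundPt K v (pos v) := by
  have hK' : (K : ℝ) ≠ 0 := by exact_mod_cast hK.ne'
  simp [samplePt, div_self hK', h1]

lemma IsTriContractible.eventually_edgeCrossing (h0 : ∀ u v, γ u v 0 = pos u)
    (h1 : ∀ u v, γ u v 1 = pos v) {p₀ : ℝ × ℝ} {u v w : Fin (n + 1)}
    (h : IsTriContractible γ p₀ u v w) :
    ∃ ε > 0, ∀ᶠ K : ℕ in Filter.atTop, ∀ p, dist p p₀ < ε →
      edgeCrossing K γ p v w - edgeCrossing K γ p u w + edgeCrossing K γ p u v = 0 := by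
  obtain ⟨y, huv, hvw, huw, Huv, Hvw, Huw, hside⟩ := h
  obtain ⟨ε₁, hε₁, H₁⟩ := Huv.eventually_sum_crossing
  obtain ⟨ε₂, hε₂, H₂⟩ := Hvw.eventually_sum_crossing
  obtain ⟨ε₃, hε₃, H₃⟩ := Huw.eventually_sum_crossing
  refine ⟨min ε₁ (min ε₂ ε₃), by positivity, ?_⟩
  filter_upwards [H₁, H₂, H₃, Filter.eventually_gt_atTop 0] with K H₁ H₂ H₃ hK p hp
  rw [lt_min_iff, lt_min_iff] at hp
  have hQ : ∀ (u v : Fin (n + 1)), ∀ j ≤ K,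
      dist (scalePt n K (samplePt K γ u v j)) (γ u v (j / K)) ≤ 1 / K := fun u v j _ =>
    dist_scalePt_samplePt hK u v j
  unfold edgeCrossing
  rw [H₁ p hp.1 (fun j => scalePt n K (samplePt K γ u v j)) (hQ u v),
    H₂ p hp.2.1 (fun j => scalePt n K (samplePt K γ v w j)) (hQ v w),
    H₃ p hp.2.2 (fun j => scalePt n K (samplePt K γ u w j)) (hQ u w)]
  simp only [samplePt_zero hK h0, samplePt_last hK h1]
  have I0 : (0 : ℝ) ∈ Set.Icc (0 : ℝ) 1 := by simp
  have e : ∀ {h h' : ℝ × ℝ → ℝ × ℝ} {t t' : ℝ}, (∀ s ∈ Set.Icc (0 : ℝ) 1, h (s, t) = h' (s, t')) →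
      ∀ x, sideCrossing K p h t x = sideCrossing K p h' t' x := fun {h h' t t'} hh x => by
    unfold sideCrossing
    rw [hh 0 I0]
    congr 1
    refine Finset.sum_congr rfl fun l hl => ?_
    rw [Finset.mem_range] at hl
    rw [hh _ (div_mem_unitInterval hl.le), hh _ (div_mem_unitInterval (Nat.succ_le_of_lt hl))]
  rw [e fun s hs => (hside s hs).1, e fun s hs => (hside s hs).2.1, e fun s hs => (hside s hs).2.2]
  ring

lemma exists_ne_triangle {m q : ℕ} (hm : m + 1 = q) {S : ZMod q → GridTerm (Fin (3 * m + 1))}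
    (hS : ∀ i j, i ≠ j → Disjoint (S i).verts (S j).verts)
    (hlt : ∀ i u v w, S i = Sum.inr (Sum.inr (u, v, w)) → u < v ∧ v < w) :
    ∃ i, ∀ x, S i ≠ Sum.inr (Sum.inr x) := by
  by_contra! h
  have : NeZero q := ⟨by omega⟩
  have hcard : ∀ i, (S i).verts.card = 3 := fun i => by
    obtain ⟨⟨u, v, w⟩, hi⟩ := h i
    obtain ⟨huv, hvw⟩ := hlt i u v w hi
    rw [hi]
    exact Finset.card_eq_three.mpr ⟨u, v, w, huv.ne, (huv.trans hvw).ne, hvw.ne, rfl⟩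
  have h1 := Finset.card_biUnion (s := Finset.univ) (t := fun i => (S i).verts)
    fun i _ j _ hij => hS i j hij
  have h2 := Finset.card_le_univ (Finset.univ.biUnion fun i => (S i).verts)
  simp only [hcard, Finset.sum_const, Finset.card_univ, ZMod.card, Fintype.card_fin,
    smul_eq_mul] at h1 h2
  omega

/-- Every continuous drawing of the complete graph on `3 * m + 1` vertices with `m + 1` prime has a
colorful winding partition. -/
theorem exists_windsAround {m q : ℕ} (hq : q.Prime) (hm : m + 1 = q)
    {pos : Fin (3 * m + 1) → ℝ × ℝ} {γ : Fin (3 * m + 1) → Fin (3 * m + 1) → ℝ → ℝ × ℝ}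
    (hγ : ∀ u v, ContinuousOn (γ u v) (Set.Icc 0 1))
    (h0 : ∀ u v, γ u v 0 = pos u) (h1 : ∀ u v, γ u v 1 = pos v) :
    ∃ (p : ℝ × ℝ) (S : ZMod q → GridTerm (Fin (3 * m + 1))),
      IsColorful (baseCol m) (fun i => (S i).verts) ∧ ∀ i, WindsAround pos γ p (S i) := by
  have : NeZero q := ⟨hq.ne_zero⟩
  have hex : ∀ K : ℕ, ∃ (p : ℝ × ℝ) (S : ZMod q → GridTerm (Fin (3 * m + 1))), 0 < K →
      IsColorful (baseCol m) (fun i => (S i).verts) ∧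
        ∀ i, WindsAroundSampled K pos γ p (S i) := fun K => by
    rcases Nat.eq_zero_or_pos K with rfl | hK
    · exact ⟨0, fun _ => Sum.inl 0, fun h => absurd h (lt_irrefl _)⟩
    · obtain ⟨p, S, h⟩ := exists_windsAroundSampled hq hm hK h0 h1
      exact ⟨p, S, fun _ => h⟩
  choose p S hpS using hex
  set U : Ultrafilter ℕ := Ultrafilter.of Filter.atTop with hU
  have hUle : (U : Filter ℕ) ≤ Filter.atTop := Ultrafilter.of_le _
  obtain ⟨T, hT⟩ := (Ultrafilter.eventually_exists_iff (f := U)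
    (P := fun (T : ZMod q → GridTerm (Fin (3 * m + 1))) K => S K = T)).mp
    (Filter.Eventually.of_forall fun K => ⟨S K, rfl⟩)
  have hgood : ∀ᶠ K in (U : Filter ℕ), IsColorful (baseCol m) (fun i => (T i).verts) ∧
      ∀ i, WindsAroundSampled K pos γ (p K) (T i) := by
    filter_upwards [hT, hUle (Filter.eventually_gt_atTop 0)] with K hK hK0
    rw [← hK]
    exact hpS K hK0
  obtain ⟨K₀, hcol, hK₀⟩ := hgood.exists
  have htri : ∀ i u v w, T i = Sum.inr (Sum.inr (u, v, w)) → u < v ∧ v < w := fun i u v w h => by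
    have := hK₀ i
    rw [h] at this
    exact this.1
  obtain ⟨i₀, hi₀⟩ := exists_ne_triangle hm hcol.disjoint htri
  have hbdd : ∀ᶠ K in (U : Filter ℕ), p K ∈ Metric.cthickening 1 (termImage pos γ (T i₀)) := by
    filter_upwards [hgood, hUle (eventually_dist_termImage (pos := pos) hγ hi₀ one_pos)]
      with K hK hd
    obtain ⟨x, hx, hxd⟩ := hd _ (hK.2 i₀)
    exact Metric.mem_cthickening_of_dist_le _ x _ _ hx hxd
  obtain ⟨p₀, -, hp₀⟩ := (isCompact_termImage hγ (T i₀)).cthickening.ultrafilter_le_nhds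
    (U.map p) (Filter.le_principal_iff.mpr hbdd)
  have hlim : Filter.Tendsto p U (nhds p₀) := hp₀
  have hmem : ∀ i, (∀ x, T i ≠ Sum.inr (Sum.inr x)) → p₀ ∈ termImage pos γ (T i) := fun i hi => by
    rw [← (isCompact_termImage hγ (T i)).isClosed.closure_eq, Metric.mem_closure_iff]
    intro ε hε
    obtain ⟨K, hK, hd, hlK⟩ := (hgood.and (((eventually_dist_termImage (pos := pos) hγ hi
      (half_pos hε)).filter_mono hUle).and (hlim.eventually (Metric.ball_mem_nhds p₀ (half_pos hε))))).exists
    obtain ⟨x, hx, hxd⟩ := hd _ (hK.2 i)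
    refine ⟨x, hx, ?_⟩
    have := dist_triangle_left p₀ x (p K)
    linarith
  refine ⟨p₀, T, hcol, fun i => ?_⟩
  have hwi := hK₀ i
  have hmi := hmem i
  have hgi : ∀ᶠ K in (U : Filter ℕ), WindsAroundSampled K pos γ (p K) (T i) :=
    hgood.mono fun K hK => hK.2 i
  generalize T i = t at hwi hmi hgi ⊢
  rcases t with v | ⟨b, u, v⟩ | ⟨u, v, w⟩
  · exact hmi (by simp)
  · exact ⟨hwi.1, hmi (by simp)⟩
  · refine ⟨hwi.1, fun hcon => ?_⟩
    obtain ⟨ε, hε, hev⟩ := hcon.eventually_edgeCrossing h0 h1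
    obtain ⟨K, hK, hd, hlK⟩ := (hgi.and ((hev.filter_mono hUle).and
      (hlim.eventually (Metric.ball_mem_nhds p₀ hε)))).exists
    exact hK.2 (hd _ hlK)

end Limit

/-! ### Winding partitions of continuous maps -/

section Winding

variable {N : ℕ}

/-- The point at time `t` of the edge from the vertex `a` to the vertex `b`. -/
def edgePt (a b : Fin (N + 1)) (t : ℝ) : Fin (N + 1) → ℝ :=
  (1 - t) • Pi.single a 1 + t • Pi.single b 1

lemma continuous_edgePt (a b : Fin (N + 1)) : Continuous (edgePt a b) := by
  unfold edgePt
  fun_prop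

@[simp] lemma edgePt_zero (a b : Fin (N + 1)) : edgePt a b 0 = Pi.single a 1 := by simp [edgePt]

@[simp] lemma edgePt_one (a b : Fin (N + 1)) : edgePt a b 1 = Pi.single b 1 := by simp [edgePt]

lemma edgePt_apply_of_ne {a b i : Fin (N + 1)} (ha : i ≠ a) (hb : i ≠ b) (t : ℝ) :
    edgePt a b t i = 0 := by
  simp [edgePt, ha, hb]

lemma edgePt_mem_stdSimp (a b : Fin (N + 1)) {t : ℝ} (ht : t ∈ Set.Icc (0 : ℝ) 1) :
    edgePt a b t ∈ stdSimp N := by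
  refine ⟨fun i => ?_, ?_⟩
  · have h : ∀ c : Fin (N + 1), (0 : ℝ) ≤ (Pi.single c 1 : Fin (N + 1) → ℝ) i := fun c => by
      rw [Pi.single_apply]
      split_ifs <;> norm_num
    exact add_nonneg (mul_nonneg (sub_nonneg.mpr ht.2) (h a)) (mul_nonneg ht.1 (h b))
  · simp [edgePt, Finset.sum_add_distrib, ← Finset.mul_sum]

lemma edgePt_mem_simpFace {S : Finset (Fin (N + 1))} {a b : Fin (N + 1)} (ha : a ∈ S) (hb : b ∈ S)
    {t : ℝ} (ht : t ∈ Set.Icc (0 : ℝ) 1) : edgePt a b t ∈ simpFace S :=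
  ⟨edgePt_mem_stdSimp a b ht, fun i hi =>
    edgePt_apply_of_ne (ne_of_mem_of_not_mem ha hi).symm (ne_of_mem_of_not_mem hb hi).symm t⟩

lemma edgePt_mem_simpFaceBoundary {S : Finset (Fin (N + 1))} (hS : 2 < S.card) {a b : Fin (N + 1)}
    (ha : a ∈ S) (hb : b ∈ S) {t : ℝ} (ht : t ∈ Set.Icc (0 : ℝ) 1) :
    edgePt a b t ∈ simpFaceBoundary S := by
  refine ⟨edgePt_mem_simpFace ha hb ht, ?_⟩
  obtain ⟨c, hc, hc'⟩ := Finset.exists_mem_notMem_of_card_lt_card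
    ((Finset.card_le_two (a := a) (b := b)).trans_lt hS)
  simp only [Finset.mem_insert, Finset.mem_singleton, not_or] at hc'
  exact ⟨c, hc, edgePt_apply_of_ne hc'.1 hc'.2 t⟩

lemma edgePt_mem_skel (a b : Fin (N + 1)) {t : ℝ} (ht : t ∈ Set.Icc (0 : ℝ) 1) :
    edgePt a b t ∈ skel N 1 := by
  refine ⟨edgePt_mem_stdSimp a b ht, ?_⟩
  refine (Set.ncard_le_ncard (t := ({a, b} : Set (Fin (N + 1)))) (fun i hi => ?_)).trans
    ((Set.ncard_insert_le a {b}).trans (by simp))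
  by_contra h
  simp only [Set.mem_insert_iff, Set.mem_singleton_iff, not_or] at h
  exact hi (edgePt_apply_of_ne h.1 h.2 t)

/-- The Euclidean plane as a product. -/
def planeHomeo : Euc 2 ≃ₜ ℝ × ℝ :=
  (EuclideanSpace.equiv (Fin 2) ℝ).toHomeomorph.trans Homeomorph.finTwoArrow

/-- The images of the edges of the simplex under `f`, with vertices renamed by `π`. -/
def edgeDrawing (f : (Fin (N + 1) → ℝ) → Euc 2) (π : Equiv.Perm (Fin (N + 1)))
    (u v : Fin (N + 1)) (t : ℝ) : ℝ × ℝ :=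
  planeHomeo (f (edgePt (π u) (π v) t))

lemma continuousOn_edgeDrawing {f : (Fin (N + 1) → ℝ) → Euc 2} (hf : ContinuousOn f (skel N 1))
    (π : Equiv.Perm (Fin (N + 1))) (u v : Fin (N + 1)) :
    ContinuousOn (edgeDrawing f π u v) (Set.Icc 0 1) :=
  planeHomeo.continuous.comp_continuousOn (hf.comp (continuous_edgePt _ _).continuousOn
    fun _ ht => edgePt_mem_skel _ _ ht)

lemma inWne_of_not_isTriContractible {f : (Fin (N + 1) → ℝ) → Euc 2}
    {π : Equiv.Perm (Fin (N + 1))} {u v w : Fin (N + 1)} (huv : u < v) (hvw : v < w) {p : ℝ × ℝ}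
    (h : ¬ IsTriContractible (edgeDrawing f π) p u v w) {S : Finset (Fin (N + 1))}
    (hS : S = {π u, π v, π w}) : InWne 2 f S (planeHomeo.symm p) := by
  right
  rintro ⟨g, y, hg, ⟨H⟩⟩
  apply h
  have hcard : 2 < S.card := by
    rw [hS, Finset.card_eq_three.mpr ⟨π u, π v, π w, π.injective.ne huv.ne,
      π.injective.ne (huv.trans hvw).ne, π.injective.ne hvw.ne, rfl⟩]
    norm_num
  let proj : ℝ → unitInterval := Set.projIcc 0 1 zero_le_one
  have hproj : ∀ t (ht : t ∈ Set.Icc (0 : ℝ) 1), proj t = ⟨t, ht⟩ := fun t ht =>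
    Set.projIcc_of_mem zero_le_one ht
  have hcproj : Continuous proj := continuous_projIcc
  let e : ∀ {a b : Fin (N + 1)}, a ∈ S → b ∈ S → ℝ → simpFaceBoundary S := fun {a b} ha hb t =>
    ⟨edgePt a b (proj t), edgePt_mem_simpFaceBoundary hcard ha hb (proj t).2⟩
  have hce : ∀ {a b : Fin (N + 1)} (ha : a ∈ S) (hb : b ∈ S), Continuous (e ha hb) :=
    fun {a b} ha hb => ((continuous_edgePt a b).comp
      (continuous_subtype_val.comp hcproj)).subtype_mk _
  let k : ∀ {a b : Fin (N + 1)}, a ∈ S → b ∈ S → ℝ × ℝ → ℝ × ℝ := fun {a b} ha hb x =>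
    planeHomeo (H (proj x.1, e ha hb x.2))
  have hk : ∀ {a b : Fin (N + 1)} (ha : π a ∈ S) (hb : π b ∈ S),
      IsPathContraction (edgeDrawing f π a b) p (planeHomeo y) (k ha hb) := fun {a b} ha hb =>
    { continuousOn := (planeHomeo.continuous.comp (continuous_subtype_val.comp
        (H.continuous.comp ((hcproj.comp continuous_fst).prodMk
          ((hce ha hb).comp continuous_snd))))).continuousOn
      ne := fun x _ hx => (H (proj x.1, e ha hb x.2)).2 
        (planeHomeo.eq_symm_apply.mpr hx)
      bot := fun t ht => by
        have h0 : proj 0 = 0 := hproj 0 ⟨le_rfl, zero_le_one⟩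
        simp only [k, h0, H.apply_zero, hg, e, hproj t ht, edgeDrawing]
      top := fun t ht => by
        have h1 : proj 1 = 1 := hproj 1 ⟨zero_le_one, le_rfl⟩
        simp only [k, h1, H.apply_one, ContinuousMap.const_apply] }
  have hu : π u ∈ S := by simp [hS]
  have hv : π v ∈ S := by simp [hS]
  have hw : π w ∈ S := by simp [hS]
  have he0 : ∀ {a b : Fin (N + 1)} (ha : a ∈ S) (hb : b ∈ S), (e ha hb 0 : Fin (N + 1) → ℝ) =
      Pi.single a 1 := fun {a b} ha hb => by
    simp [e, hproj 0 ⟨le_rfl, zero_le_one⟩]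
  have he1 : ∀ {a b : Fin (N + 1)} (ha : a ∈ S) (hb : b ∈ S), (e ha hb 1 : Fin (N + 1) → ℝ) =
      Pi.single b 1 := fun {a b} ha hb => by
    simp [e, hproj 1 ⟨zero_le_one, le_rfl⟩]
  refine ⟨planeHomeo y, k hu hv, k hv hw, k hu hw, hk hu hv, hk hv hw, hk hu hw, fun s _ => ?_⟩
  have hk' : ∀ {x x' : simpFaceBoundary S}, (x : Fin (N + 1) → ℝ) = x' →
      planeHomeo (H (proj s, x)) = planeHomeo (H (proj s, x')) := fun hx => by rw [Subtype.ext hx]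
  exact ⟨hk' ((he0 hu hv).trans (he0 hu hw).symm), hk' ((he1 hu hv).trans (he0 hv hw).symm),
    hk' ((he1 hv hw).trans (he1 hu hw).symm)⟩

/-- `P` covers all vertices and its members contain at most one vertex of every color. -/
def IsRainbowCover {V C : Type*} (χ : V → C) (P : Finset (Finset V)) : Prop :=
  (∀ v, ∃ S ∈ P, v ∈ S) ∧ ∀ S ∈ P, Set.InjOn χ S

lemma GridTerm.verts_nonempty {V : Type*} [LinearOrder V] (T : GridTerm V) : T.verts.Nonempty := by
  rcases T with v | ⟨b, u, v⟩ | ⟨u, v, w⟩ <;> simp [GridTerm.verts]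

/-- For every coloring obtained from the base coloring by a permutation there is a winding
partition all of whose members are rainbow. -/
theorem exists_isWindingPartition_isRainbowCover {m q : ℕ} (hq : q.Prime) (hm : m + 1 = q)
    {f : (Fin (3 * m + 1) → ℝ) → Euc 2} (hf : ContinuousOn f (skel (3 * m) 1))
    (π : Equiv.Perm (Fin (3 * m + 1))) :
    ∃ P, IsWindingPartition 2 q f P ∧ IsRainbowCover (baseCol m ∘ π.symm) P := by
  classical
  have : NeZero q := ⟨hq.ne_zero⟩
  obtain ⟨p, S, hcol, hS⟩ := exists_windsAround hq hm
    (pos := fun v => planeHomeo (f (Pi.single (π v) 1))) (continuousOn_edgeDrawing hf π)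
    (fun u v => by simp [edgeDrawing]) (fun u v => by simp [edgeDrawing])
  set F : ZMod q → Finset (Fin (3 * m + 1)) := fun i => (S i).verts.map π.toEmbedding with hF
  have hne : ∀ i, (F i).Nonempty := fun i => (GridTerm.verts_nonempty _).map
  have hdis : ∀ i j, i ≠ j → Disjoint (F i) (F j) := fun i j hij =>
    (Finset.disjoint_map _).mpr (hcol.disjoint i j hij)
  have hinj : Function.Injective F := fun i j hij => by
    by_contra h
    have := hdis i j h
    rw [hij, disjoint_self] at this
    exact (hne j).ne_empty this
  refine ⟨Finset.univ.image F, ⟨?_, ?_, ?_, ?_, planeHomeo.symm p, ?_⟩, fun v => ?_, ?_⟩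
  · rw [Finset.card_image_of_injective _ hinj, Finset.card_univ, ZMod.card]
  · simpa using hne
  · simp only [Finset.mem_image, Finset.mem_univ, true_and, forall_exists_index,
      forall_apply_eq_imp_iff, hF, Finset.card_map]
    intro i
    generalize S i = t
    rcases t with v | ⟨b, u, v⟩ | ⟨u, v, w⟩
    · simp [GridTerm.verts]
    · exact Finset.card_le_two.trans (by norm_num)
    · exact Finset.card_le_three
  · simp only [Finset.mem_image, Finset.mem_univ, true_and, forall_exists_index,
      forall_apply_eq_imp_iff]
    exact fun i j hij => hdis i j fun h => hij (by rw [h])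
  · simp only [Finset.mem_image, Finset.mem_univ, true_and, forall_exists_index,
      forall_apply_eq_imp_iff, hF]
    intro i
    have hi := hS i
    generalize S i = t at hi ⊢
    rcases t with v | ⟨b, u, v⟩ | ⟨u, v, w⟩
    · refine ⟨fun _ => ⟨edgePt (π v) (π v) 0, edgePt_mem_simpFace ?_ ?_ (by simp), ?_⟩, fun h => ?_⟩
      · simp [GridTerm.verts]
      · simp [GridTerm.verts]
      · rw [show p = _ from hi, edgePt_zero, Homeomorph.symm_apply_apply]
      · simp [GridTerm.verts] at h
    · obtain ⟨huv, t, ht, hpt⟩ := hi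
      refine ⟨fun _ => ⟨edgePt (π u) (π v) t, edgePt_mem_simpFace ?_ ?_ ht, ?_⟩, fun h => ?_⟩
      · simp [GridTerm.verts]
      · simp [GridTerm.verts]
      · rw [← hpt, edgeDrawing, Homeomorph.symm_apply_apply]
      · rw [Finset.card_map] at h
        have : ({u, v} : Finset (Fin (3 * m + 1))).card ≤ 2 := Finset.card_le_two
        simp only [GridTerm.verts] at h
        omega
    · obtain ⟨⟨huv, hvw⟩, hcon⟩ := hi
      refine ⟨fun h => ?_, fun _ => inWne_of_not_isTriContractible huv hvw hcon ?_⟩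
      · rw [Finset.card_map, GridTerm.verts, Finset.card_eq_three.mpr
          ⟨u, v, w, huv.ne, (huv.trans hvw).ne, hvw.ne, rfl⟩] at h
        omega
      · simp [GridTerm.verts, Finset.map_insert]
  · obtain ⟨i, hi⟩ := hcol.cover (π.symm v)
    exact ⟨F i, Finset.mem_image_of_mem _ (Finset.mem_univ i), by simpa [hF] using hi⟩
  · simp only [Finset.mem_image, Finset.mem_univ, true_and, forall_exists_index,
      forall_apply_eq_imp_iff]
    intro i u hu v hv huv
    by_contra hne'
    simp only [hF, Finset.coe_map, Equiv.coe_toEmbedding, Equiv.image_eq_preimage_symm,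
      Set.mem_preimage, Finset.mem_coe] at hu hv
    exact hcol.rainbow i _ hu _ hv (fun h => hne' (π.symm.injective h)) huv

end Winding

/-! ### Counting -/

section Counting

open Nat in
lemma card_perm_baseCol_comp (m : ℕ) :
    Fintype.card {g : Equiv.Perm (Fin (3 * m + 1)) // baseCol m ∘ g = baseCol m} = m ! ^ 3 := by
  classical
  rw [DomMulAct.stabilizer_card, Fintype.prod_option]
  have h1 : Fintype.card {a // baseCol m a = none} = 1 := by
    rw [Fintype.card_eq_one_iff]
    exact ⟨⟨baseSpecial m, (baseCol_spec _).2.2.1.mpr rfl⟩, fun v =>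
      Subtype.ext (Fin.ext ((baseCol_spec v.1).2.2.1.mp v.2))⟩
  have h2 : ∀ c, Fintype.card {a // baseCol m a = some c} = m := fun c => by
    rw [Fintype.card_subtype]
    exact card_baseClass m c
  simp [h1, h2]

open Nat in
lemma card_perm_baseCol_comp_symm_le (m : ℕ) (χ : Fin (3 * m + 1) → Option (Fin 3)) :
    (Finset.univ.filter fun π : Equiv.Perm (Fin (3 * m + 1)) => baseCol m ∘ π.symm = χ).card ≤
      m ! ^ 3 := by
  classical
  rcases Finset.eq_empty_or_nonempty
    (Finset.univ.filter fun π : Equiv.Perm (Fin (3 * m + 1)) => baseCol m ∘ π.symm = χ) with h | h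
  · rw [h]
    exact Nat.zero_le _
  · obtain ⟨π₀, hπ₀⟩ := h
    rw [Finset.mem_filter] at hπ₀
    rw [← card_perm_baseCol_comp m, Fintype.card_subtype]
    refine Finset.card_le_card_of_injOn (fun π => π₀.trans π.symm) (fun π hπ => ?_)
      fun π _ π' _ h => ?_
    · simp only [Finset.coe_filter, Finset.mem_univ, true_and, Set.mem_ofPred_eq] at hπ ⊢
      rw [Equiv.coe_trans, ← Function.comp_assoc, hπ, ← hπ₀.2]
      ext v
      simp
    · have : π.symm = π'.symm := by
        ext v
        simpa using congrArg Fin.val (Equiv.congr_fun h (π₀.symm v))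
      exact Equiv.symm_bijective.injective this

lemma descFactorial_three_le (k : ℕ) : Nat.descFactorial 3 k ≤ 6 := by
  rcases le_or_gt k 3 with h | h
  · interval_cases k <;> decide
  · rw [Nat.descFactorial_of_lt h]
    norm_num

lemma card_rainbow_le {V : Type*} [Fintype V] [DecidableEq V] {P : Finset (Finset V)}
    (hP : ∀ v, ∃ S ∈ P, v ∈ S) (s : V) :
    Nat.card {χ : V → Option (Fin 3) // (∀ v, χ v = none ↔ v = s) ∧ ∀ S ∈ P, Set.InjOn χ S} ≤
      6 ^ P.card := by
  let F : {χ : V → Option (Fin 3) // (∀ v, χ v = none ↔ v = s) ∧ ∀ S ∈ P, Set.InjOn χ S} →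
      ∀ S : P, {v // v ∈ S.1 ∧ v ≠ s} ↪ Fin 3 := fun χ S =>
    { toFun := fun v => (χ.1 v.1).get
        (Option.isSome_iff_ne_none.mpr fun h => v.2.2 ((χ.2.1 v.1).mp h))
      inj' := fun v w h => Subtype.ext (χ.2.2 S.1 S.2 v.2.1 w.2.1 (Option.get_inj.mp h)) }
  have hF : Function.Injective F := fun χ χ' h => Subtype.ext (funext fun v => by
    by_cases hv : v = s
    · rw [(χ.2.1 v).mpr hv, (χ'.2.1 v).mpr hv]
    · obtain ⟨S, hS, hvS⟩ := hP v
      exact Option.get_inj.mp (DFunLike.congr_fun (congrFun h ⟨S, hS⟩) ⟨v, hvS, hv⟩))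
  refine (Nat.card_le_card_of_injective F hF).trans ?_
  rw [Nat.card_pi]
  calc ∏ S : P, Nat.card ({v // v ∈ S.1 ∧ v ≠ s} ↪ Fin 3) ≤ ∏ _S : P, 6 := by
        refine Finset.prod_le_prod' fun S _ => ?_
        rw [Nat.card_eq_fintype_card, Fintype.card_embedding_eq, Fintype.card_fin]
        exact descFactorial_three_le _
    _ = 6 ^ P.card := by simp

open Nat in
lemma card_perm_isRainbowCover_le {m : ℕ} (P : Finset (Finset (Fin (3 * m + 1))))
    [DecidablePred fun π : Equiv.Perm (Fin (3 * m + 1)) =>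
      IsRainbowCover (baseCol m ∘ π.symm) P] :
    (Finset.univ.filter fun π : Equiv.Perm (Fin (3 * m + 1)) =>
      IsRainbowCover (baseCol m ∘ π.symm) P).card ≤ m ! ^ 3 * ((3 * m + 1) * 6 ^ P.card) := by
  classical
  set A := Finset.univ.filter fun π : Equiv.Perm (Fin (3 * m + 1)) =>
      IsRainbowCover (baseCol m ∘ π.symm) P with hA
  rcases A.eq_empty_or_nonempty with h | ⟨π₁, hπ₁⟩
  · simp [h]
  have hP : ∀ v, ∃ S ∈ P, v ∈ S := (Finset.mem_filter.mp hπ₁).2.1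
  refine (Finset.card_le_mul_card_image (f := fun π : Equiv.Perm (Fin (3 * m + 1)) =>
    baseCol m ∘ π.symm) A (m ! ^ 3) fun χ _ => ?_).trans (Nat.mul_le_mul_left _ ?_)
  · exact (Finset.card_le_card (Finset.filter_subset_filter _ (Finset.subset_univ _))).trans
      (card_perm_baseCol_comp_symm_le m χ)
  · have hsub : A.image (fun π : Equiv.Perm (Fin (3 * m + 1)) => baseCol m ∘ π.symm) ⊆
        Finset.univ.biUnion fun s => Finset.univ.filter fun χ : Fin (3 * m + 1) → Option (Fin 3) =>
          (∀ v, χ v = none ↔ v = s) ∧ ∀ S ∈ P, Set.InjOn χ S := by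
      intro χ hχ
      obtain ⟨π, hπ, rfl⟩ := Finset.mem_image.mp hχ
      simp only [Finset.mem_biUnion, Finset.mem_univ, true_and, Finset.mem_filter]
      refine ⟨π (baseSpecial m), fun v => ?_, (Finset.mem_filter.mp hπ).2.2⟩
      rw [Function.comp_apply, (baseCol_spec _).2.2.1, ← Equiv.symm_apply_eq, Fin.ext_iff]
      rfl
    refine (Finset.card_le_card hsub).trans (Finset.card_biUnion_le.trans ?_)
    calc _ ≤ ∑ _s : Fin (3 * m + 1), 6 ^ P.card := Finset.sum_le_sum fun s _ => by
          rw [← Fintype.card_subtype, ← Nat.card_eq_fintype_card]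
          exact card_rainbow_le hP s
      _ = (3 * m + 1) * 6 ^ P.card := by simp

open Nat in
lemma factorial_mul_pow_le {m i : ℕ} (hi : i ≤ m) :
    m ! * (3 * m * (m + 1)) ^ i * (3 * m - i)! ≤ (m + i)! * (3 * m)! := by
  induction i with
  | zero => simp
  | succ i ih =>
    obtain ⟨k, hk⟩ := Nat.exists_eq_add_of_le hi
    have e : 3 * m - i = (3 * m - (i + 1)) + 1 := by omega
    have h : 3 * m * (m + 1) ≤ (m + i + 1) * (3 * m - i) := by
      have : 3 * m - i = 2 * m + k + 1 := by omega
      rw [this]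
      subst hk
      nlinarith [Nat.zero_le (i * k), Nat.zero_le (i * i)]
    have ih := ih (by omega)
    rw [e, Nat.factorial_succ, ← e] at ih
    rw [← Nat.add_assoc, Nat.factorial_succ]
    calc m ! * (3 * m * (m + 1)) ^ (i + 1) * (3 * m - (i + 1))!
        = (3 * m * (m + 1)) * (m ! * (3 * m * (m + 1)) ^ i * (3 * m - (i + 1))!) := by ring
      _ ≤ ((m + i + 1) * (3 * m - i)) * (m ! * (3 * m * (m + 1)) ^ i * (3 * m - (i + 1))!) :=
          Nat.mul_le_mul_right _ h
      _ = (m + i + 1) * (m ! * (3 * m * (m + 1)) ^ i * ((3 * m - i) * (3 * m - (i + 1))!)) := by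
          ring
      _ ≤ (m + i + 1) * ((m + i)! * (3 * m)!) := Nat.mul_le_mul_left _ ih
      _ = _ := by ring

lemma six_mul_pow_le {m : ℕ} (hm : 4 ≤ m) : 6 * ((m : ℝ) + 1) ^ m ≤ (2 * m) ^ m := by
  have hm' : (4 : ℝ) ≤ m := by exact_mod_cast hm
  have h1 : (6 : ℝ) ≤ (8 / 5) ^ m :=
    le_trans (by norm_num) (pow_le_pow_right₀ (by norm_num : (1 : ℝ) ≤ 8 / 5) hm)
  calc 6 * ((m : ℝ) + 1) ^ m ≤ (8 / 5) ^ m * ((m : ℝ) + 1) ^ m := by gcongr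
    _ = (8 / 5 * ((m : ℝ) + 1)) ^ m := (mul_pow _ _ _).symm
    _ ≤ (2 * m) ^ m := by
      refine pow_le_pow_left₀ (by positivity) ?_ m
      linarith

open Nat in
lemma bound_of_factorial_le {m T : ℕ} (hm : 4 ≤ m)
    (h : (3 * m + 1)! ≤ T * (m ! ^ 3 * ((3 * m + 1) * 6 ^ (m + 1)))) :
    1 / (m ! : ℝ) ^ 2 * (((m + 1 : ℕ) : ℝ) / 2) ^ (2 * m) ≤ T := by
  have h1 : m ! * (3 * m * (m + 1)) ^ m ≤ (3 * m)! := by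
    have := factorial_mul_pow_le (le_refl m)
    rw [show 3 * m - m = m + m by omega, mul_comm (m + m)!] at this
    exact Nat.le_of_mul_le_mul_right this (Nat.factorial_pos _)
  have h2 : (3 * m)! ≤ T * (m ! ^ 3 * 6 ^ (m + 1)) := by
    refine Nat.le_of_mul_le_mul_left (c := 3 * m + 1) ?_ (by omega)
    rw [Nat.factorial_succ] at h
    linarith
  have h3 : (3 * m * (m + 1)) ^ m ≤ T * (m ! ^ 2 * 6 ^ (m + 1)) := by
    refine Nat.le_of_mul_le_mul_left (c := m !) ((h1.trans h2).trans (le_of_eq ?_))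
      (Nat.factorial_pos _)
    ring
  have h4 : ((3 : ℝ) * m * (m + 1)) ^ m ≤ T * ((m ! : ℝ) ^ 2 * 6 ^ (m + 1)) := by exact_mod_cast h3
  have hf : (0 : ℝ) < (m ! : ℝ) ^ 2 := by positivity
  rw [one_div_mul_eq_div, div_le_iff₀ hf]
  have h5 := mul_le_mul_of_nonneg_left (six_mul_pow_le hm)
    (show (0 : ℝ) ≤ ((m : ℝ) + 1) ^ m * (6 / 4) ^ m by positivity)
  have e1 : ((m : ℝ) + 1) ^ m * (6 / 4) ^ m * (2 * m) ^ m = (3 * m * (m + 1)) ^ m := by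
    rw [← mul_pow, ← mul_pow]
    ring
  have e2 : ((m : ℝ) + 1) ^ m * (6 / 4) ^ m * (6 * ((m : ℝ) + 1) ^ m) =
      (((m + 1 : ℕ) : ℝ) / 2) ^ (2 * m) * 6 ^ (m + 1) := by
    push_cast
    have h : (((m : ℝ) + 1) / 2) ^ 2 * 6 = ((m : ℝ) + 1) * (6 / 4) * (m + 1) := by ring
    rw [pow_mul, pow_succ (6 : ℝ) m, ← mul_assoc _ _ (6 : ℝ), ← mul_pow _ (6 : ℝ), h, mul_pow,
      mul_pow]
    ring
  rw [e1, e2] at h5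
  have h6 : (0 : ℝ) < 6 ^ (m + 1) := by positivity
  refine le_of_mul_le_mul_right (h5.trans (h4.trans (le_of_eq ?_))) h6
  ring

lemma exists_perm_apply_eq {V : Type*} [DecidableEq V] {a b u v : V} (hab : a ≠ b) (huv : u ≠ v) :
    ∃ π : Equiv.Perm V, π a = u ∧ π b = v := by
  refine ⟨Equiv.swap (Equiv.swap a u b) v * Equiv.swap a u, ?_, ?_⟩
  · rw [Equiv.Perm.mul_apply, Equiv.swap_apply_left]
    refine Equiv.swap_apply_of_ne_of_ne (fun h => hab ?_) huv
    apply (Equiv.swap a u).injective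
    rw [← h, Equiv.swap_apply_left]
  · rw [Equiv.Perm.mul_apply, Equiv.swap_apply_left]

lemma two_le_ncard_isWindingPartition {m q : ℕ} (hq : q.Prime) (hm : m + 1 = q) (h2 : 2 ≤ m)
    {f : (Fin (3 * m + 1) → ℝ) → Euc 2} (hf : ContinuousOn f (skel (3 * m) 1)) :
    2 ≤ {P | IsWindingPartition 2 q f P}.ncard := by
  obtain ⟨P, hP, hcov, -⟩ := exists_isWindingPartition_isRainbowCover hq hm hf 1
  obtain ⟨S, hS, hcard⟩ : ∃ S ∈ P, 1 < S.card := by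
    by_contra! h
    have h1 : (Finset.univ : Finset (Fin (3 * m + 1))) ⊆ P.biUnion id := fun v _ => by
      obtain ⟨S, hS, hv⟩ := hcov v
      exact Finset.mem_biUnion.mpr ⟨S, hS, hv⟩
    have h2 := (Finset.card_le_card h1).trans (Finset.card_biUnion_le_card_mul _ _ 1 h)
    rw [Finset.card_univ, Fintype.card_fin, hP.1] at h2
    omega
  obtain ⟨u, hu, v, hv, huv⟩ := Finset.one_lt_card.mp hcard
  obtain ⟨π, hπu, hπv⟩ := exists_perm_apply_eq
    (show (⟨0, by omega⟩ : Fin (3 * m + 1)) ≠ ⟨1, by omega⟩ by simp) huv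
  obtain ⟨P', hP', -, hinj⟩ := exists_isWindingPartition_isRainbowCover hq hm hf π
  have hne : P ≠ P' := by
    rintro rfl
    refine huv (hinj S hS hu hv ?_)
    rw [Function.comp_apply, Function.comp_apply, ← hπu, ← hπv, Equiv.symm_apply_apply,
      Equiv.symm_apply_apply, (baseCol_spec _).1.mpr (by simp; omega),
      (baseCol_spec _).1.mpr (by simp; omega)]
  refine (Set.ncard_pair hne).symm.le.trans (Set.ncard_le_ncard ?_ (Set.toFinite _))
  rintro x (rfl | rfl)
  exacts [hP, hP']

open Nat in
lemma factorial_le_ncard_isWindingPartition_mul {m q : ℕ} (hq : q.Prime) (hm : m + 1 = q)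
    {f : (Fin (3 * m + 1) → ℝ) → Euc 2} (hf : ContinuousOn f (skel (3 * m) 1)) :
    (3 * m + 1)! ≤ {P | IsWindingPartition 2 q f P}.ncard *
      (m ! ^ 3 * ((3 * m + 1) * 6 ^ (m + 1))) := by
  classical
  rw [Set.ncard_eq_toFinset_card' {P | IsWindingPartition 2 q f P}]
  have hsub : (Finset.univ : Finset (Equiv.Perm (Fin (3 * m + 1)))) ⊆
      {P | IsWindingPartition 2 q f P}.toFinset.biUnion fun P =>
        Finset.univ.filter fun π => IsRainbowCover (baseCol m ∘ π.symm) P := fun π _ => by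
    obtain ⟨P, hP, hcov⟩ := exists_isWindingPartition_isRainbowCover hq hm hf π
    simp only [Finset.mem_biUnion, Set.mem_toFinset, Set.mem_ofPred_eq, Finset.mem_filter,
      Finset.mem_univ, true_and]
    exact ⟨P, hP, hcov⟩
  have h := (Finset.card_le_card hsub).trans (Finset.card_biUnion_le_card_mul _ _
    (m ! ^ 3 * ((3 * m + 1) * 6 ^ (m + 1))) fun P hP => by
      have := card_perm_isRainbowCover_le P
      rwa [(Set.mem_toFinset.mp hP).1, ← hm] at this)
  rwa [Finset.card_univ, Fintype.card_perm, Fintype.card_fin] at h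

end Counting

/-- For prime `q`, every continuous map `Δ_1^{3(q-1)} → ℝ²` has at least
`(1/((q-1)!)²) · (q/2)^{2(q-1)}` winding partitions. -/
theorem winding_count_dim_two (q : ℕ) (hq : q.Prime)
    (f : (Fin (3*(q-1)+1) → ℝ) → Euc 2)
    (hf : ContinuousOn f (skel (3*(q-1)) 1)) :
    (1 / ((Nat.factorial (q-1) : ℝ))^2) * ((q : ℝ)/2)^(2*(q-1)) ≤
      (({P : Finset (Finset (Fin (3*(q-1)+1))) |
          IsWindingPartition 2 q f P}.ncard : ℕ) : ℝ) := by
  have hq1 : q - 1 + 1 = q := Nat.sub_add_cancel hq.one_le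
  rcases Nat.lt_or_ge q 5 with hlt | hge
  · rcases Nat.lt_or_ge q 3 with h3 | h3
    · have h2 : q = 2 := le_antisymm (by omega) hq.two_le
      obtain ⟨P, hP, -⟩ := exists_isWindingPartition_isRainbowCover hq hq1 hf 1
      have h1 : 1 ≤ {P | IsWindingPartition 2 q f P}.ncard :=
        Nat.one_le_iff_ne_zero.mpr (Set.ncard_ne_zero_of_mem hP (Set.toFinite _))
      refine le_trans (le_of_eq ?_) (Nat.one_le_cast.mpr h1)
      rw [show q - 1 = 1 by omega, h2]
      norm_num
    · have h4 : q ≠ 4 := by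
        rintro rfl
        exact absurd hq (by decide)
      have h2 : 2 ≤ {P | IsWindingPartition 2 q f P}.ncard :=
        two_le_ncard_isWindingPartition hq hq1 (by omega) hf
      refine le_trans ?_ (Nat.ofNat_le_cast.mpr h2)
      rw [show q - 1 = 2 by omega, show q = 3 by omega]
      norm_num [Nat.factorial]
  · have := bound_of_factorial_le (by omega) (factorial_le_ncard_isWindingPartition_mul hq hq1 hf)
    rwa [hq1] at this
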